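/- Fix an integer n ≥ 2 and a real number s > 2/(n−1). Then ζ_0^{GL_n(q)}(s) := Σ_{χ ∈ Irr(GL_n(q)), χ(1) > 1} χ(1)^{−s} tends to 0 as q → ∞ through prime powers; that is, for every ε > 0 there exists B such that for every prime power q > B, the sum over all irreducible complex characters χ of GL_n(q) of degree greater than 1 of χ(1)^{−s} is less than ε. -/

import Mathlib

/-!
The number of irreducible characters of `GL_n(q)` of a given kind is played against their
degrees, in the spirit of Harish-Chandra and Zelevinsky.

A class function on the groups `GL(V)` is treated as an isomorphism-invariant function on pairs
`(V, x)` of a finite vector space and an endomorphism (`Obj`). Parabolic induction then becomes the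
Hall product `mul`, a sum over invariant subspaces, and its adjoint `adj` is the functor of
Jacquet type (`ip_mul` is Frobenius reciprocity). For a cuspidal irreducible `φ`, the adjoint `D`
of multiplication by `φ` satisfies the Leibniz rule `D (φ g) = g + φ D g` (`leibniz`, from
`heisenberg`). Hence if `D ρ = 0` and `ρ` is irreducible, then `φ ^ m ρ` has norm `m !` (`ip_seq`),
so it has at most `m !` constituents, and each of them is a product `τ ρ` with `τ` a constituent of
`φ ^ m` (`constituent`). Every irreducible character of `GL_n`, `n ≥ 1`, arises in this way for some
cuspidal `φ` and some `m ≥ 1` (`cusp_support`, `ladder`).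

Degrees are bounded below by following a vector through Whittaker-type eigenspaces `Mlev` for
transvections: each level costs a factor `q ^ (n - i) - 1` of dimension (`dim_bound`). This bounds
the degree of every character with a cuspidal character of `GL_d` in its support (`dg_ge_of_adj`),
and shows that nonlinear characters have degree at least `q ^ (n - 1) - 1` (`nonlinear_ge`).
Comparing with `∑ χ(1)² = |GL_d(q)|`, there are at most `4 ^ d q ^ d` cuspidal characters of
`GL_d(q)` (`card_cuspF`).

By induction along the products `χ = τ ρ`, the irreducible characters of `GL_n(q)` are covered by
strata indexed by `1 ≤ j ≤ n`, where `j` is the sum of the sizes of the distinct cuspidal characters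
in the support: the `j`-th stratum has `O(q ^ j)` elements, and for `j ≥ 2` their degrees satisfy
`χ(1)² ≥ q ^ (j (n - 1)) / C` (`exists_good`). For `j = 1` the bound for nonlinear characters
is of the same shape. Therefore the sum over the `j`-th stratum is `O(q ^ (-j δ))` with
`δ = s (n - 1) / 2 - 1`, which is positive exactly when `s > 2 / (n - 1)` (`zeta_bound`).
-/

open CategoryTheory in
/-- The set of irreducible complex characters of a group `G`. -/
def irrChars (G : Type) [Group G] : Set (G → ℂ) :=
  {f | ∃ V : FDRep ℂ G, Simple V ∧ f = V.character}

open Module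

set_option linter.unusedSectionVars false

namespace ZetaGL

noncomputable section

/-! ### Characters of finite groups -/

section FiniteGroup

variable {G : Type} [Group G]

/-- Below every nonzero subrepresentation there is a minimal one, by induction on the dimension. -/
theorem exists_irr_sub_aux {X : Type} [AddCommGroup X] [Module ℂ X] [FiniteDimensional ℂ X]
    (ρ : Representation ℂ G X) : ∀ (N : ℕ) (σ : Subrepresentation ρ), finrank ℂ σ.toSubmodule = N →
    σ ≠ ⊥ → ∃ τ : Subrepresentation ρ, τ ≤ σ ∧ IsAtom τ := by
  intro N
  induction N using Nat.strong_induction_on with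
  | _ N ih =>
    intro σ hσ hne
    by_cases h : IsAtom σ
    · exact ⟨σ, le_rfl, h⟩
    · unfold IsAtom at h
      push Not at h
      obtain ⟨τ, hτ, hτ0⟩ := h hne
      have hlt : τ.toSubmodule < σ.toSubmodule := by
        rw [lt_iff_le_and_ne]
        refine ⟨fun x hx => hτ.le hx, fun h => hτ.ne (Subrepresentation.toSubmodule_injective h)⟩
      obtain ⟨υ, h1, h2⟩ := ih _ (hσ ▸ Submodule.finrank_lt_finrank_of_lt hlt) τ rfl hτ0
      exact ⟨υ, h1.trans hτ.le, h2⟩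

theorem isIrreducible_of_isAtom {X : Type} [AddCommGroup X] [Module ℂ X]
    (ρ : Representation ℂ G X) (τ : Subrepresentation ρ) (h : IsAtom τ) :
    τ.toRepresentation.IsIrreducible := by
  have key : ∀ υ : Subrepresentation τ.toRepresentation, υ = ⊥ ∨ υ = ⊤ := by
    intro υ
    let υ' : Subrepresentation ρ :=
      ⟨υ.toSubmodule.map τ.toSubmodule.subtype, by
        rintro g _ ⟨w, hw, rfl⟩
        exact ⟨τ.toRepresentation g w, υ.apply_mem_toSubmodule g hw, rfl⟩⟩
    have hle : υ' ≤ τ := by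
      rintro _ ⟨w, hw, rfl⟩
      exact w.2
    rcases h.le_iff.1 hle with h0 | h1
    · left
      apply Subrepresentation.toSubmodule_injective
      have : υ.toSubmodule.map τ.toSubmodule.subtype = ⊥ := congrArg (·.toSubmodule) h0
      exact Submodule.map_injective_of_injective (Submodule.injective_subtype τ.toSubmodule)
        (this.trans (Submodule.map_bot _).symm)
    · right
      apply Subrepresentation.toSubmodule_injective
      have h2 : υ.toSubmodule.map τ.toSubmodule.subtype = τ.toSubmodule :=
        congrArg (·.toSubmodule) h1
      refine Submodule.map_injective_of_injective (Submodule.injective_subtype τ.toSubmodule) ?_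
      rw [h2]
      simp [show (⊤ : Subrepresentation τ.toRepresentation).toSubmodule = ⊤ from rfl]
  refine { exists_pair_ne := ⟨⊥, ⊤, ?_⟩, eq_bot_or_eq_top := key }
  intro h0
  apply h.1
  apply Subrepresentation.toSubmodule_injective
  have : (⊥ : Submodule ℂ τ.toSubmodule) = ⊤ := congrArg (·.toSubmodule) h0
  rw [eq_comm, Submodule.eq_bot_iff] at this
  refine (Submodule.eq_bot_iff _).2 fun x hx => ?_
  simpa using this ⟨x, hx⟩ trivial

theorem exists_irr_sub {X : Type} [AddCommGroup X] [Module ℂ X] [FiniteDimensional ℂ X]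
    [Nontrivial X] (ρ : Representation ℂ G X) :
    ∃ τ : Subrepresentation ρ, τ.toRepresentation.IsIrreducible := by
  obtain ⟨τ, -, h⟩ := exists_irr_sub_aux ρ _ ⊤ rfl (by
    intro h
    have : (⊤ : Submodule ℂ X) = ⊥ := congrArg (·.toSubmodule) h
    exact top_ne_bot this)
  exact ⟨τ, isIrreducible_of_isAtom ρ τ h⟩

/-- Inclusion of a subrepresentation. -/
def subIncl {X : Type} [AddCommGroup X] [Module ℂ X] (ρ : Representation ℂ G X)
    (τ : Subrepresentation ρ) : Representation.IntertwiningMap τ.toRepresentation ρ :=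
  ⟨τ.toSubmodule.subtype, fun g => by ext; rfl⟩

theorem irreducible_nontrivial {X : Type} [AddCommGroup X] [Module ℂ X]
    (ρ : Representation ℂ G X) [h : ρ.IsIrreducible] : Nontrivial X := by
  by_contra hX
  rw [not_nontrivial_iff_subsingleton] at hX
  obtain ⟨a, b, hab⟩ := h.exists_pair_ne
  apply hab
  apply Subrepresentation.toSubmodule_injective
  exact Subsingleton.elim _ _

variable [Fintype G]

/-- The bilinear pairing `|G|⁻¹ ∑ f(g) h(g⁻¹)`. -/
def ipG (f h : G → ℂ) : ℂ := (Nat.card G : ℂ)⁻¹ * ∑ g, f g * h g⁻¹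

theorem card_ne : (Nat.card G : ℂ) ≠ 0 := Nat.cast_ne_zero.2 Nat.card_pos.ne'

/-- The pairing of two characters is the dimension of a space of intertwining maps. -/
theorem ipG_char {X Y : Type} [AddCommGroup X] [Module ℂ X] [FiniteDimensional ℂ X]
    [AddCommGroup Y] [Module ℂ Y] [FiniteDimensional ℂ Y]
    (ρ : Representation ℂ G X) (σ : Representation ℂ G Y) :
    ipG σ.character ρ.character = finrank ℂ (ρ.IntertwiningMap σ) := by
  have : Invertible (Nat.card G : ℂ) := invertibleOfNonzero card_ne
  exact Representation.card_inv_mul_sum_char_mul_char_eq_finrank ρ σ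

theorem ipG_comm (f h : G → ℂ) : ipG f h = ipG h f := by
  unfold ipG
  congr 1
  refine Fintype.sum_equiv (Equiv.inv G) _ _ fun g => ?_
  simp [mul_comm]

theorem mem_irrChars_of_irreducible {X : Type} [AddCommGroup X] [Module ℂ X]
    [FiniteDimensional ℂ X] (ρ : Representation ℂ G X) [ρ.IsIrreducible] :
    ρ.character ∈ irrChars G := by
  have : Invertible (Nat.card G : ℂ) := invertibleOfNonzero card_ne
  refine ⟨FDRep.of ρ, ?_, rfl⟩
  rw [FDRep.simple_iff_char_is_norm_one]
  have h := ipG_char ρ ρ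
  rw [Representation.IsIrreducible.finrank_intertwiningMap_self] at h
  unfold ipG at h
  rw [inv_mul_eq_iff_eq_mul₀ card_ne] at h
  rw [Nat.cast_one, mul_one] at h
  exact h

theorem exists_rep_of_mem {f : G → ℂ} (hf : f ∈ irrChars G) :
    ∃ (X : Type) (_ : AddCommGroup X) (_ : Module ℂ X) (_ : FiniteDimensional ℂ X)
      (ρ : Representation ℂ G X), ρ.IsIrreducible ∧ f = ρ.character := by
  obtain ⟨V, hV, rfl⟩ := hf
  have : Invertible (Nat.card G : ℂ) := invertibleOfNonzero card_ne
  have hnt : Nontrivial V := by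
    by_contra hX
    rw [not_nontrivial_iff_subsingleton] at hX
    have h := FDRep.simple_iff_char_is_norm_one V |>.1 hV
    have h0 : ∀ g, V.character g = 0 := fun g => by
      unfold FDRep.character
      have : V.ρ g = 0 := LinearMap.ext fun x => hX.elim _ _
      rw [this, map_zero]
    simp only [h0, mul_zero, Finset.sum_const_zero] at h
    exact card_ne h.symm
  obtain ⟨τ, hτ⟩ := exists_irr_sub V.ρ
  have hnt' := irreducible_nontrivial τ.toRepresentation
  refine ⟨τ.toSubmodule, inferInstance, inferInstance, inferInstance, τ.toRepresentation, hτ, ?_⟩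
  obtain ⟨W, hW, hWc⟩ := mem_irrChars_of_irreducible τ.toRepresentation
  have h1 := ipG_char τ.toRepresentation V.ρ
  have h2 : finrank ℂ (τ.toRepresentation.IntertwiningMap V.ρ) ≠ 0 := by
    intro h0
    have : Module.Finite ℂ (τ.toRepresentation.IntertwiningMap V.ρ) := inferInstance
    have := finrank_zero_iff.1 h0
    obtain ⟨x, hx⟩ := exists_ne (0 : τ.toSubmodule)
    have := congrArg (fun f => f x) (this.elim (subIncl V.ρ τ) 0)
    exact hx (Subtype.ext this)
  have h3 := FDRep.char_orthonormal V W
  rw [← hWc] at h3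
  by_cases hi : Nonempty (V ≅ W)
  · rw [hWc]; exact FDRep.char_iso hi.some
  · rw [if_neg hi] at h3
    change ipG V.character _ = 0 at h3
    exact absurd (h1.symm.trans h3) (Nat.cast_ne_zero.2 h2)

open Classical in
theorem ipG_irr {f h : G → ℂ} (hf : f ∈ irrChars G) (hh : h ∈ irrChars G) :
    ipG f h = if f = h then 1 else 0 := by
  have : Invertible (Nat.card G : ℂ) := invertibleOfNonzero card_ne
  have hf' := hf
  obtain ⟨V, hV, rfl⟩ := hf
  obtain ⟨W, hW, rfl⟩ := hh
  have h3 := FDRep.char_orthonormal V W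
  change ipG _ _ = _ at h3
  by_cases hi : Nonempty (V ≅ W)
  · rw [h3, if_pos hi, if_pos (FDRep.char_iso hi.some)]
  · rw [if_neg hi] at h3
    rw [h3, if_neg]
    intro h
    rw [← h] at h3
    have := FDRep.simple_iff_char_is_norm_one V |>.1 hV
    unfold ipG at h3
    rw [this, inv_mul_cancel₀ card_ne] at h3
    exact one_ne_zero h3

/-- Class functions. -/
def IsClass (f : G → ℂ) : Prop := ∀ g h, f (h * g * h⁻¹) = f g

theorem isClass_of_mem {f : G → ℂ} (hf : f ∈ irrChars G) : IsClass f := by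
  obtain ⟨V, hV, rfl⟩ := hf
  exact fun g h => FDRep.char_conj V g h

/-- The operator `∑ f(g) ρ(g⁻¹)`. -/
def opOf (f : G → ℂ) {X : Type} [AddCommGroup X] [Module ℂ X] (ρ : Representation ℂ G X) :
    X →ₗ[ℂ] X := ∑ g, f g • ρ g⁻¹

theorem opOf_comm {f : G → ℂ} (hf : IsClass f) {X : Type} [AddCommGroup X] [Module ℂ X]
    (ρ : Representation ℂ G X) (h : G) : opOf f ρ ∘ₗ ρ h = ρ h ∘ₗ opOf f ρ := by
  change opOf f ρ * ρ h = ρ h * opOf f ρ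
  unfold opOf
  rw [Finset.sum_mul, Finset.mul_sum]
  refine Fintype.sum_equiv (MulAut.conj h⁻¹).toEquiv _ _ fun g => ?_
  rw [smul_mul_assoc, mul_smul_comm, ← map_mul, ← map_mul]
  simp only [MulEquiv.toEquiv_eq_coe, EquivLike.coe_coe, MulAut.conj_apply]
  rw [hf]
  congr 2
  group

/-- A class function orthogonal to all irreducible characters acts by zero on every representation:
by Schur's lemma on irreducible ones, and in general by splitting off an irreducible
subrepresentation (Maschke). -/
theorem opOf_eq_zero {f : G → ℂ} (hf : IsClass f) (h0 : ∀ χ ∈ irrChars G, ipG f χ = 0) (N : ℕ) :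
    ∀ {X : Type} [AddCommGroup X] [Module ℂ X] [FiniteDimensional ℂ X]
    (ρ : Representation ℂ G X), finrank ℂ X = N → opOf f ρ = 0 := by
  induction N using Nat.strong_induction_on with
  | _ N ih =>
    intro X _ _ _ ρ hN
    have irrcase : ∀ {Y : Type} [AddCommGroup Y] [Module ℂ Y] [FiniteDimensional ℂ Y]
        (σ : Representation ℂ G Y), σ.IsIrreducible → opOf f σ = 0 := by
      intro Y _ _ _ σ hσ
      let T : σ.IntertwiningMap σ := ⟨opOf f σ, fun g => opOf_comm hf σ g⟩
      obtain ⟨c, hc⟩ :=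
        Representation.IsIrreducible.algebraMap_intertwiningMap_bijective_of_isAlgClosed.2 T
      have hT : opOf f σ = c • LinearMap.id := by
        have := congrArg Representation.IntertwiningMap.toLinearMap hc
        change _ = opOf f σ at this
        rw [← this]
        ext x
        rfl
      have hnt := irreducible_nontrivial σ
      have htr : LinearMap.trace ℂ Y (opOf f σ) = 0 := by
        have := h0 _ (mem_irrChars_of_irreducible σ)
        unfold ipG at this
        replace this := (mul_eq_zero.1 this).resolve_left (inv_ne_zero card_ne)
        rw [← this]
        unfold opOf
        rw [map_sum]
        refine Finset.sum_congr rfl fun g _ => ?_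
        rw [map_smul]
        rfl
      rw [hT, map_smul, LinearMap.trace_id, smul_eq_mul, mul_eq_zero] at htr
      rcases htr with h | h
      · rw [hT, h, zero_smul]
      · exact absurd h (Nat.cast_ne_zero.2 finrank_pos.ne')
    rcases subsingleton_or_nontrivial X with hX | hX
    · exact LinearMap.ext fun x => hX.elim _ _
    · obtain ⟨τ, hτ⟩ := exists_irr_sub ρ
      have : NeZero (Nat.card G : ℂ) := ⟨card_ne⟩
      obtain ⟨τ', hc⟩ := exists_isCompl τ
      have hsub : ∀ (υ : Subrepresentation ρ) (x : X) (hx : x ∈ υ.toSubmodule),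
          opOf f ρ x = (opOf f υ.toRepresentation ⟨x, hx⟩ : υ.toSubmodule) := by
        intro υ x hx
        unfold opOf
        simp only [LinearMap.sum_apply, LinearMap.smul_apply, AddSubmonoidClass.coe_finsetSum,
          Submodule.coe_smul]
        rfl
      have hsup : τ.toSubmodule ⊔ τ'.toSubmodule = ⊤ := by
        rw [← Subrepresentation.toSubmodule_sup, hc.sup_eq_top]; rfl
      have hinf : τ.toSubmodule ⊓ τ'.toSubmodule = ⊥ := by
        rw [← Subrepresentation.toSubmodule_inf, hc.inf_eq_bot]; rfl
      have hnt := irreducible_nontrivial τ.toRepresentation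
      have hdim : finrank ℂ τ'.toSubmodule < N := by
        have h1 := Submodule.finrank_sup_add_finrank_inf_eq τ.toSubmodule τ'.toSubmodule
        rw [hsup, hinf, finrank_top, finrank_bot, hN] at h1
        have : 0 < finrank ℂ τ.toSubmodule := finrank_pos
        omega
      ext x
      have hx : x ∈ τ.toSubmodule ⊔ τ'.toSubmodule := hsup ▸ trivial
      obtain ⟨a, ha, b, hb, rfl⟩ := Submodule.mem_sup.1 hx
      rw [map_add, hsub τ a ha, hsub τ' b hb, irrcase τ.toRepresentation hτ,
        ih _ hdim τ'.toRepresentation rfl]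
      simp

/-- The right regular representation, on functions. -/
def regRep (G : Type) [Group G] : Representation ℂ G (G → ℂ) where
  toFun g :=
    { toFun := fun v x => v (x * g)
      map_add' := fun _ _ => rfl
      map_smul' := fun _ _ => rfl }
  map_one' := by ext; simp
  map_mul' a b := by
    refine LinearMap.ext fun v => funext fun x => ?_
    simp [mul_assoc]

/-- Irreducible characters span the class functions: evaluate the operator of `f` on the right
regular representation. -/
theorem eq_zero_of_ipG {f : G → ℂ} (hf : IsClass f) (h0 : ∀ χ ∈ irrChars G, ipG f χ = 0) :
    f = 0 := by
  classical
  have h := opOf_eq_zero hf h0 _ (regRep G) rfl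
  ext g
  have h1 := congrArg (fun T => T (Pi.single g⁻¹ 1) 1) h
  simpa [opOf, regRep, Pi.single_apply] using h1

theorem ipG_sum_left {ι : Type*} (s : Finset ι) (c : ι → ℂ) (f : ι → G → ℂ) (h : G → ℂ) :
    ipG (∑ i ∈ s, c i • f i) h = ∑ i ∈ s, c i * ipG (f i) h := by
  unfold ipG
  simp only [Finset.sum_apply, Pi.smul_apply, smul_eq_mul, Finset.sum_mul]
  rw [Finset.sum_comm, Finset.mul_sum]
  refine Finset.sum_congr rfl fun i _ => ?_
  rw [Finset.mul_sum, Finset.mul_sum, Finset.mul_sum]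
  exact Finset.sum_congr rfl fun g _ => by ring

theorem irrChars_finite (G : Type) [Group G] [Finite G] : (irrChars G).Finite := by
  classical
  have := Fintype.ofFinite G
  have h : LinearIndependent ℂ (fun χ : irrChars G => (χ : G → ℂ)) := by
    rw [linearIndependent_iff']
    intro s c hc i hi
    have h1 := ipG_sum_left s c (fun χ : irrChars G => (χ : G → ℂ)) i
    rw [hc] at h1
    have h2 : ∑ j ∈ s, c j * ipG (j : G → ℂ) i = c i := by
      rw [Finset.sum_eq_single i]
      · rw [ipG_irr i.2 i.2, if_pos rfl, mul_one]
      · intro j _ hj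
        rw [ipG_irr j.2 i.2, if_neg (fun h => hj (Subtype.ext h)), mul_zero]
      · exact fun h => absurd hi h
    rw [h2] at h1
    rw [← h1]
    simp [ipG]
  exact h.setFinite

/-- The finite set of irreducible characters. -/
def irrF (G : Type) [Group G] [Finite G] : Finset (G → ℂ) := (irrChars_finite G).toFinset

theorem mem_irrF {f : G → ℂ} : f ∈ irrF G ↔ f ∈ irrChars G :=
  Set.Finite.mem_toFinset _

theorem class_expand {f : G → ℂ} (hf : IsClass f) : f = ∑ χ ∈ irrF G, ipG f χ • χ := by
  classical
  rw [← sub_eq_zero]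
  apply eq_zero_of_ipG
  · intro g h
    simp only [Pi.sub_apply, Finset.sum_apply, Pi.smul_apply]
    rw [hf]
    congr 1
    refine Finset.sum_congr rfl fun χ hχ => ?_
    rw [isClass_of_mem (mem_irrF.1 hχ)]
  · intro ψ hψ
    have h1 := ipG_sum_left (irrF G) (fun χ => ipG f χ) (fun χ => χ) ψ
    have h2 : ∑ j ∈ irrF G, ipG f j * ipG j ψ = ipG f ψ := by
      rw [Finset.sum_eq_single ψ]
      · rw [ipG_irr hψ hψ, if_pos rfl, mul_one]
      · intro j hj hne
        rw [ipG_irr (mem_irrF.1 hj) hψ, if_neg hne, mul_zero]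
      · exact fun h => absurd (mem_irrF.2 hψ) h
    rw [h2] at h1
    have h3 : ipG (f - ∑ χ ∈ irrF G, ipG f χ • χ) ψ
        = ipG f ψ - ipG (∑ χ ∈ irrF G, ipG f χ • χ) ψ := by
      simp [ipG, sub_mul, mul_sub, Finset.sum_sub_distrib]
    rw [h3, h1, sub_self]

theorem irr_deg {χ : G → ℂ} (hχ : χ ∈ irrChars G) : ∃ d : ℕ, 0 < d ∧ χ 1 = d := by
  obtain ⟨X, _, _, _, ρ, h, rfl⟩ := exists_rep_of_mem hχ
  have := irreducible_nontrivial ρ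
  exact ⟨finrank ℂ X, finrank_pos, ρ.char_one⟩

theorem sum_sq_deg : ∑ χ ∈ irrF G, χ 1 * χ 1 = (Nat.card G : ℂ) := by
  classical
  let f : G → ℂ := fun g => if g = 1 then 1 else 0
  have hf : IsClass f := by
    intro g h
    simp only [f]
    congr 1
    rw [eq_iff_iff]
    constructor
    · intro H
      have : g = h⁻¹ * (h * g * h⁻¹) * h := by group
      rw [this, H]; group
    · rintro rfl; group
  have h := congrArg (fun f => f 1) (class_expand hf)
  have hip : ∀ χ, ipG f χ = (Nat.card G : ℂ)⁻¹ * χ 1 := by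
    intro χ
    simp [ipG, f]
  simp only [hip, Finset.sum_apply, Pi.smul_apply, smul_eq_mul, f, if_true] at h
  simp only [mul_assoc] at h
  rw [← Finset.mul_sum, eq_comm, inv_mul_eq_iff_eq_mul₀ card_ne, mul_one] at h
  exact h

end FiniteGroup

section Hall

attribute [local instance] Fintype.ofFinite

/-! ### Functions on endomorphisms and the Hall product -/

instance finiteLin {F V W : Type} [Field F] [AddCommGroup V] [Module F V] [Finite V]
    [AddCommGroup W] [Module F W] [Finite W] : Finite (V →ₗ[F] W) := DFunLike.finite _

instance finiteLinUnits {F V : Type} [Field F] [AddCommGroup V] [Module F V] [Finite V] :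
    Finite (V →ₗ[F] V)ˣ := Finite.of_injective _ Units.val_injective

instance finiteLinEquiv {F V W : Type} [Field F] [AddCommGroup V] [Module F V] [Finite V]
    [AddCommGroup W] [Module F W] [Finite W] : Finite (V ≃ₗ[F] W) := DFunLike.finite _

instance (priority := 5000) fintypeLin {F V W : Type} [Field F] [AddCommGroup V] [Module F V]
    [Finite V] [AddCommGroup W] [Module F W] [Finite W] : Fintype (V →ₗ[F] W) := Fintype.ofFinite _

instance (priority := 5000) fintypeLinUnits {F V : Type} [Field F] [AddCommGroup V] [Module F V]
    [Finite V] : Fintype (V →ₗ[F] V)ˣ := Fintype.ofFinite _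

instance (priority := 5000) fintypeLinEquiv {F V W : Type} [Field F] [AddCommGroup V] [Module F V]
    [Finite V] [AddCommGroup W] [Module F W] [Finite W] : Fintype (V ≃ₗ[F] W) := Fintype.ofFinite _

instance (priority := 5000) fintypeSub {F V : Type} [Field F] [AddCommGroup V] [Module F V]
    [Finite V] : Fintype (Submodule F V) := Fintype.ofFinite _

/-- A finite vector space with an endomorphism. -/
structure Obj (F : Type) [Field F] where
  /-- the space -/
  V : Type
  [acg : AddCommGroup V]
  [mod : Module F V]
  [fin : Finite V]
  /-- the endomorphism -/
  x : V →ₗ[F] V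

attribute [instance] Obj.acg Obj.mod Obj.fin

variable {F : Type} [Field F]
variable {V W A Q : Type} [AddCommGroup V] [Module F V] [Finite V]
  [AddCommGroup W] [Module F W] [Finite W]
  [AddCommGroup A] [Module F A] [Finite A] [AddCommGroup Q] [Module F Q] [Finite Q]

/-- The object given by an endomorphism. -/
abbrev ob (x : V →ₗ[F] V) : Obj F := ⟨V, x⟩

/-- Invariance under isomorphism of pairs `(V, x)`. -/
def IsInv (f : Obj F → ℂ) : Prop :=
  ∀ ⦃V W : Type⦄ [AddCommGroup V] [Module F V] [Finite V] [AddCommGroup W] [Module F W] [Finite W]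
    (e : V ≃ₗ[F] W) (x : V →ₗ[F] V) (y : W →ₗ[F] W), (∀ v, e (x v) = y (e v)) →
    f (ob x) = f (ob y)

open Classical in
/-- Contribution of the subspace `B` to the Hall product: `f (x on B) * g (x on V/B)` if `B` is
`x`-stable, and zero otherwise. -/
def term (f g : Obj F → ℂ) (x : V →ₗ[F] V) (B : Submodule F V) : ℂ :=
  if h : B ≤ B.comap x then f (ob (x.restrict h)) * g (ob (B.mapQ B x h)) else 0

/-- The Hall product `∑ f (x on B) * g (x on V/B)`, over the `x`-stable subspaces `B`. On class
functions of general linear groups this is parabolic induction. -/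
def mul (f g : Obj F → ℂ) : Obj F → ℂ := fun o => ∑ B : Submodule F o.V, term f g o.x B

theorem mul_ob (f g : Obj F → ℂ) (x : V →ₗ[F] V) :
    mul f g (ob x) = ∑ B : Submodule F V, term f g x B := rfl

/-- The contribution of `B` can be computed on any exact sequence `A → V → Q` with image `B`. -/
theorem term_exact {f g : Obj F → ℂ} (hf : IsInv f) (hg : IsInv g) (i : A →ₗ[F] V)
    (p : V →ₗ[F] Q) (hi : Function.Injective i) (hp : Function.Surjective p)
    (hip : LinearMap.range i = LinearMap.ker p)
    (x : V →ₗ[F] V) (x' : A →ₗ[F] A) (y : Q →ₗ[F] Q)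
    (hx : ∀ a, i (x' a) = x (i a)) (hy : ∀ v, p (x v) = y (p v)) (B : Submodule F V)
    (hB : B = LinearMap.range i) :
    term f g x B = f (ob x') * g (ob y) := by
  have h : B ≤ B.comap x := by
    subst hB
    rintro _ ⟨a, rfl⟩
    exact ⟨x' a, hx a⟩
  rw [term, dif_pos h]
  congr 1
  · refine (hf ((LinearEquiv.ofInjective i hi).trans (LinearEquiv.ofEq _ _ hB.symm)) x' _ ?_).symm
    intro a
    apply Subtype.ext
    exact hx a
  · refine hg ((Submodule.quotEquivOfEq _ _ (hB.trans hip)).trans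
      (p.quotKerEquivOfSurjective hp)) _ y ?_
    intro v
    obtain ⟨v, rfl⟩ := Submodule.mkQ_surjective _ v
    exact hy v

theorem term_conj {f g : Obj F → ℂ} (hf : IsInv f) (hg : IsInv g) (e : V ≃ₗ[F] W)
    (x : V →ₗ[F] V) (y : W →ₗ[F] W) (h : ∀ v, e (x v) = y (e v)) (B : Submodule F V) :
    term f g x B = term f g y (B.map (e : V →ₗ[F] W)) := by
  by_cases hB : B ≤ B.comap x
  · symm
    conv_rhs => rw [term, dif_pos hB]
    refine term_exact hf hg ((e : V →ₗ[F] W) ∘ₗ B.subtype) (B.mkQ ∘ₗ (e.symm : W →ₗ[F] V))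
      (e.injective.comp B.injective_subtype) (B.mkQ_surjective.comp e.symm.surjective) ?_ y _ _
      ?_ ?_ _ ?_
    · ext w
      constructor
      · rintro ⟨b, rfl⟩
        simp
      · intro hw
        have : e.symm w ∈ B := by simpa using hw
        exact ⟨⟨_, this⟩, by simp⟩
    · intro a
      exact h _
    · intro w
      have : e.symm (y w) = x (e.symm w) := by
        rw [LinearEquiv.symm_apply_eq, h, e.apply_symm_apply]
      simp [this]
    · rw [LinearMap.range_comp, Submodule.range_subtype]
  · have hB' : ¬ (B.map (e : V →ₗ[F] W) ≤ (B.map (e : V →ₗ[F] W)).comap y) := by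
      intro h'
      apply hB
      intro b hb
      have := h' (Submodule.mem_map_of_mem hb)
      rw [Submodule.mem_comap] at this
      obtain ⟨c, hc, hce⟩ := this
      have : e c = e (x b) := hce.trans (h b).symm
      rw [Submodule.mem_comap, ← e.injective this]
      exact hc
    rw [term, dif_neg hB, term, dif_neg hB']

theorem IsInv.mul {f g : Obj F → ℂ} (hf : IsInv f) (hg : IsInv g) : IsInv (mul f g) := by
  intro V W _ _ _ _ _ _ e x y h
  exact Fintype.sum_equiv (Submodule.orderIsoMapComap e).toEquiv _ _
    fun B => term_conj hf hg e x y h B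

/-- `f` is supported on automorphisms of spaces of dimension `n`. -/
def Deg (f : Obj F → ℂ) (n : ℕ) : Prop := ∀ o : Obj F, f o ≠ 0 → finrank F o.V = n ∧ IsUnit o.x

theorem isUnit_iff_inj (x : V →ₗ[F] V) : IsUnit x ↔ Function.Injective x := by
  rw [Module.End.isUnit_iff]
  exact Finite.injective_iff_bijective.symm

theorem Deg.mul [Finite F] {f g : Obj F → ℂ} {m n : ℕ} (hf : Deg f m) (hg : Deg g n) :
    Deg (mul f g) (m + n) := by
  intro o h
  obtain ⟨B, -, hB⟩ := Finset.exists_ne_zero_of_sum_ne_zero h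
  unfold term at hB
  split_ifs at hB with hle
  · obtain ⟨h1, h2⟩ := hf _ (left_ne_zero_of_mul hB)
    obtain ⟨h3, h4⟩ := hg _ (right_ne_zero_of_mul hB)
    refine ⟨?_, ?_⟩
    · have := B.finrank_quotient_add_finrank
      simp only at h1 h3
      omega
    · rw [isUnit_iff_inj] at h2 h4 ⊢
      rw [injective_iff_map_eq_zero] at h2 h4 ⊢
      intro v hv
      have hvB : v ∈ B := by
        have := h4 (B.mkQ v) (by simp [hv])
        simpa using this
      have := h2 ⟨v, hvB⟩ (Subtype.ext hv)
      exact congrArg Subtype.val this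
  · exact absurd rfl hB

/-- The block endomorphism `(b, a) ↦ (y b, u b + x a)` of `Q × A`. -/
def bm (x : A →ₗ[F] A) (u : Q →ₗ[F] A) (y : Q →ₗ[F] Q) : Q × A →ₗ[F] Q × A :=
  (y ∘ₗ LinearMap.fst F Q A).prod (u ∘ₗ LinearMap.fst F Q A + x ∘ₗ LinearMap.snd F Q A)

@[simp] theorem bm_apply (x : A →ₗ[F] A) (u : Q →ₗ[F] A) (y : Q →ₗ[F] Q) (b : Q) (a : A) :
    bm x u y (b, a) = (y b, u b + x a) := rfl

/-- Order of the general linear group of `V`, as a complex number. -/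
def gcard (F V : Type) [Field F] [AddCommGroup V] [Module F V] : ℂ := Nat.card (V →ₗ[F] V)ˣ

theorem gcard_ne : gcard F V ≠ 0 := Nat.cast_ne_zero.2 Nat.card_pos.ne'

/-- The adjoint of `mul ψ` for `pair`: the value at an endomorphism `y` of `Q` is the average of
`ψ x * h (block matrix (x, u; 0, y))` over all `u : Q → A` and, normalised by `|GL(A)|`, all `x`. -/
def adj (A : Type) [AddCommGroup A] [Module F A] [Finite A] (ψ h : Obj F → ℂ) : Obj F → ℂ :=
  fun o => (gcard F A * Nat.card (o.V →ₗ[F] A))⁻¹ *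
    ∑ x : A →ₗ[F] A, ∑ u : o.V →ₗ[F] A, ψ (ob x) * h (ob (bm x u o.x))

theorem adj_ob (ψ h : Obj F → ℂ) (y : Q →ₗ[F] Q) :
    adj A ψ h (ob y) = (gcard F A * Nat.card (Q →ₗ[F] A))⁻¹ *
      ∑ x : A →ₗ[F] A, ∑ u : Q →ₗ[F] A, ψ (ob x) * h (ob (bm x u y)) := rfl

theorem IsInv.adj {h : Obj F → ℂ} (ψ : Obj F → ℂ) (hh : IsInv h) :
    IsInv (adj A ψ h) := by
  intro V W _ _ _ _ _ _ e x y hxy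
  have hE : (V →ₗ[F] A) ≃ (W →ₗ[F] A) := (e.arrowCongr (LinearEquiv.refl F A)).toEquiv
  simp only [ZetaGL.adj]
  rw [Nat.card_congr hE]
  congr 1
  refine Finset.sum_congr rfl fun z _ => ?_
  refine Fintype.sum_equiv (e.arrowCongr (LinearEquiv.refl F A)).toEquiv _ _ fun u => ?_
  congr 1
  refine hh (e.prodCongr (LinearEquiv.refl F A)) _ _ ?_
  rintro ⟨b, a⟩
  simp [hxy]

theorem bm_injective_iff (x : A →ₗ[F] A) (u : Q →ₗ[F] A) (y : Q →ₗ[F] Q) :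
    Function.Injective (bm x u y) ↔ Function.Injective x ∧ Function.Injective y := by
  constructor
  · intro h
    have hx : Function.Injective x := by
      intro a b hab
      have := @h (0, a) (0, b) (by simp [hab])
      exact congrArg Prod.snd this
    refine ⟨hx, ?_⟩
    have hs := Finite.surjective_of_injective h
    apply Finite.injective_iff_surjective.2
    intro b
    obtain ⟨⟨c, a⟩, hc⟩ := hs (b, 0)
    exact ⟨c, congrArg Prod.fst hc⟩
  · rintro ⟨hx, hy⟩ ⟨b, a⟩ ⟨b', a'⟩ h
    simp only [bm_apply, Prod.mk.injEq] at h
    obtain ⟨h1, h2⟩ := h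
    have := hy h1
    subst this
    rw [add_right_inj] at h2
    rw [hx h2]

theorem Deg.adj [Finite F] {h : Obj F → ℂ} {n : ℕ} (ψ : Obj F → ℂ) (hh : Deg h n) :
    Deg (adj A ψ h) (n - finrank F A) := by
  intro o ho
  have := right_ne_zero_of_mul ho
  obtain ⟨x, -, hx⟩ := Finset.exists_ne_zero_of_sum_ne_zero this
  obtain ⟨u, -, hu⟩ := Finset.exists_ne_zero_of_sum_ne_zero hx
  obtain ⟨h1, h2⟩ := hh _ (right_ne_zero_of_mul hu)
  simp only at h1 h2
  rw [finrank_prod] at h1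
  rw [isUnit_iff_inj, bm_injective_iff, ← isUnit_iff_inj] at h2
  rw [isUnit_iff_inj]
  exact ⟨by omega, h2.2⟩

/-- The bilinear pairing `|GL(V)|⁻¹ ∑ f x * h x`. The sum runs over all endomorphisms, but only
automorphisms contribute when `f` or `h` satisfies `Deg`. -/
def pair (V : Type) [AddCommGroup V] [Module F V] [Finite V] (f h : Obj F → ℂ) : ℂ :=
  (gcard F V)⁻¹ * ∑ x : V →ₗ[F] V, f (ob x) * h (ob x)

/-! ### Adjunction between product and skewing -/

/-- The subspace `0 × A` of `Q × A`. -/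
abbrev sA (F Q A : Type) [Field F] [AddCommGroup A] [Module F A] [AddCommGroup Q] [Module F Q] :
    Submodule F (Q × A) := LinearMap.range (LinearMap.inr F Q A)

theorem mem_sA (v : Q × A) : v ∈ sA F Q A ↔ v.1 = 0 := by
  constructor
  · rintro ⟨a, rfl⟩; rfl
  · intro h; exact ⟨v.2, Prod.ext h.symm rfl⟩

theorem term_bm {f g : Obj F → ℂ} (hf : IsInv f) (hg : IsInv g)
    (x : A →ₗ[F] A) (u : Q →ₗ[F] A) (y : Q →ₗ[F] Q) :
    term f g (bm x u y) (sA F Q A) = f (ob x) * g (ob y) := by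
  refine term_exact hf hg (LinearMap.inr F Q A) (LinearMap.fst F Q A) LinearMap.inr_injective
    LinearMap.fst_surjective ?_ _ _ _ ?_ ?_ _ rfl
  · ext v
    rw [mem_sA]; rfl
  · intro a; simp
  · rintro ⟨b, a⟩; simp

theorem bm_inj : Function.Injective
    (fun t : (A →ₗ[F] A) × (Q →ₗ[F] A) × (Q →ₗ[F] Q) => bm t.1 t.2.1 t.2.2) := by
  rintro ⟨x, u, y⟩ ⟨x', u', y'⟩ h
  simp only at h
  have h1 : x = x' := LinearMap.ext fun a => by
    have := LinearMap.congr_fun h (0, a)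
    simpa using this
  have h2 : y = y' := LinearMap.ext fun b => by
    have := LinearMap.congr_fun h (b, 0)
    simp at this
    exact this.1
  have h3 : u = u' := LinearMap.ext fun b => by
    have := LinearMap.congr_fun h (b, 0)
    simp at this
    exact this.2
  rw [h1, h2, h3]

theorem exists_bm (X : Q × A →ₗ[F] Q × A) (h : sA F Q A ≤ (sA F Q A).comap X) :
    ∃ x u y, X = bm x u y := by
  refine ⟨LinearMap.snd F Q A ∘ₗ X ∘ₗ LinearMap.inr F Q A,
    LinearMap.snd F Q A ∘ₗ X ∘ₗ LinearMap.inl F Q A,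
    LinearMap.fst F Q A ∘ₗ X ∘ₗ LinearMap.inl F Q A, ?_⟩
  refine LinearMap.ext ?_
  rintro ⟨b, a⟩
  have h1 : (X (0, a)).1 = 0 := (mem_sA _).1 (h ((mem_sA (0, a)).2 rfl))
  have h2 : X (b, a) = X (b, 0) + X (0, a) := by rw [← map_add]; simp
  rw [h2]
  ext
  · simp [h1]
  · simp

theorem sum_term_sA {f g h : Obj F → ℂ} (hf : IsInv f) (hg : IsInv g) :
    ∑ X : Q × A →ₗ[F] Q × A, term f g X (sA F Q A) * h (ob X) =
      ∑ x : A →ₗ[F] A, ∑ u : Q →ₗ[F] A, ∑ y : Q →ₗ[F] Q,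
        f (ob x) * g (ob y) * h (ob (bm x u y)) := by
  simp only [← Fintype.sum_prod_type']
  symm
  refine Fintype.sum_of_injective _ bm_inj _ _ ?_ ?_
  · intro X hX
    rw [term, dif_neg, zero_mul]
    intro hle
    obtain ⟨x, u, y, rfl⟩ := exists_bm X hle
    exact hX ⟨(x, u, y), rfl⟩
  · rintro ⟨x, u, y⟩
    simp only
    rw [term_bm hf hg]

theorem gcard_eq : gcard F V = Nat.card (V ≃ₗ[F] V) := by
  unfold gcard
  rw [Nat.card_congr (LinearMap.GeneralLinearGroup.generalLinearEquiv F V).toEquiv]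

theorem exists_split [Finite F] (B : Submodule F V) (hB : finrank F B = finrank F A)
    (hV : finrank F V = finrank F Q + finrank F A) :
    ∃ e : (Q × A) ≃ₗ[F] V, (sA F Q A).map (e : Q × A →ₗ[F] V) = B := by
  obtain ⟨C, hC⟩ := exists_isCompl B
  have h1 := Submodule.finrank_add_eq_of_isCompl hC
  have eC : Q ≃ₗ[F] C := LinearEquiv.ofFinrankEq _ _ (by omega)
  have eB : A ≃ₗ[F] B := LinearEquiv.ofFinrankEq _ _ hB.symm
  refine ⟨(eC.prodCongr eB).trans (Submodule.prodEquivOfIsCompl C B hC.symm), ?_⟩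
  ext v
  constructor
  · rintro ⟨_, ⟨a, rfl⟩, rfl⟩
    simp
  · intro hv
    refine ⟨(0, eB.symm ⟨v, hv⟩), (mem_sA _).2 rfl, ?_⟩
    simp

/-- The order of the stabiliser of `0 × A`, a parabolic subgroup of `GL(Q × A)`. -/
theorem card_stab : Nat.card {e : (Q × A) ≃ₗ[F] (Q × A) //
      (sA F Q A).map (e : Q × A →ₗ[F] Q × A) = sA F Q A} =
    Nat.card ((A ≃ₗ[F] A) × (Q →ₗ[F] A) × (Q ≃ₗ[F] Q)) := by
  symm
  have hinj : ∀ t : (A ≃ₗ[F] A) × (Q →ₗ[F] A) × (Q ≃ₗ[F] Q),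
      Function.Injective (bm (t.1 : A →ₗ[F] A) t.2.1 (t.2.2 : Q →ₗ[F] Q)) := fun t =>
    (bm_injective_iff _ _ _).2 ⟨t.1.injective, t.2.2.injective⟩
  let E : (A ≃ₗ[F] A) × (Q →ₗ[F] A) × (Q ≃ₗ[F] Q) → ((Q × A) ≃ₗ[F] (Q × A)) := fun t =>
    LinearEquiv.ofBijective _ (Finite.injective_iff_bijective.1 (hinj t))
  have hE : ∀ t v, E t v = bm (t.1 : A →ₗ[F] A) t.2.1 (t.2.2 : Q →ₗ[F] Q) v := fun t v => rfl
  have hle : ∀ e : (Q × A) ≃ₗ[F] (Q × A),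
      (sA F Q A).map (e : Q × A →ₗ[F] Q × A) ≤ sA F Q A →
      (sA F Q A).map (e : Q × A →ₗ[F] Q × A) = sA F Q A := by
    intro e he
    apply SetLike.coe_injective
    apply Set.eq_of_subset_of_ncard_le he ?_ (Set.toFinite _)
    rw [Submodule.map_coe]
    exact (Set.ncard_image_of_injective _ e.injective).ge
  refine Nat.card_eq_of_bijective (fun t => ⟨E t, hle _ ?_⟩) ⟨?_, ?_⟩
  · rintro _ ⟨v, hv, rfl⟩
    rw [mem_sA]
    rw [SetLike.mem_coe, mem_sA] at hv
    change (t.2.2 v.1) = 0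
    rw [hv, map_zero]
  · intro t t' h
    have h1 : ∀ v, E t v = E t' v := fun v => by
      have := congrArg Subtype.val h
      exact congrArg (fun e => e v) this
    have h2 := @bm_inj F _ A Q _ _ _ _ _ _ ((t.1 : A →ₗ[F] A), t.2.1, (t.2.2 : Q →ₗ[F] Q))
      ((t'.1 : A →ₗ[F] A), t'.2.1, (t'.2.2 : Q →ₗ[F] Q)) (LinearMap.ext h1)
    simp only [Prod.mk.injEq, LinearEquiv.toLinearMap_inj] at h2
    exact Prod.ext h2.1 (Prod.ext h2.2.1 h2.2.2)
  · rintro ⟨e, he⟩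
    obtain ⟨x, u, y, h⟩ := exists_bm (e : Q × A →ₗ[F] Q × A) (Submodule.map_le_iff_le_comap.1 he.le)
    have h1 : Function.Injective (bm x u y) := h ▸ e.injective
    rw [bm_injective_iff] at h1
    refine ⟨(LinearEquiv.ofBijective x (Finite.injective_iff_bijective.1 h1.1), u,
      LinearEquiv.ofBijective y (Finite.injective_iff_bijective.1 h1.2)), ?_⟩
    apply Subtype.ext
    apply LinearEquiv.ext
    intro v
    have := LinearMap.congr_fun h v
    exact this.symm

theorem card_fib [Finite F] (B : Submodule F (Q × A)) (hB : finrank F B = finrank F A) :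
    Nat.card {e : (Q × A) ≃ₗ[F] (Q × A) // (sA F Q A).map (e : Q × A →ₗ[F] Q × A) = B} =
    Nat.card ((A ≃ₗ[F] A) × (Q →ₗ[F] A) × (Q ≃ₗ[F] Q)) := by
  rw [← card_stab]
  obtain ⟨e0, he0⟩ := exists_split (A := A) (Q := Q) B hB finrank_prod
  refine Nat.card_congr ⟨fun e => ⟨e.1.trans e0.symm, ?_⟩, fun e => ⟨e.1.trans e0, ?_⟩, ?_, ?_⟩
  · have := e.2
    rw [LinearEquiv.coe_trans, Submodule.map_comp, this, ← he0, ← Submodule.map_comp]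
    simp
  · have := e.2
    rw [LinearEquiv.coe_trans, Submodule.map_comp, this, he0]
  · intro e; apply Subtype.ext; ext v <;> simp
  · intro e; apply Subtype.ext; ext v <;> simp

/-- The adjunction between `mul f` and `adj A f`: a subspace of dimension `dim A` of `Q × A` can be
moved to `0 × A` by the same number of automorphisms, so only `0 × A` has to be considered. -/
theorem pair_mul [Finite F] {f g h : Obj F → ℂ} (hf : IsInv f) (hg : IsInv g) (hh : IsInv h)
    (hd : Deg f (finrank F A)) :
    pair (Q × A) (mul f g) h = pair Q g (adj A f h) := by
  classical
  let T : Submodule F (Q × A) → ℂ := fun B => ∑ X : Q × A →ₗ[F] Q × A, term f g X B * h (ob X)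
  have hT : ∀ e : (Q × A) ≃ₗ[F] (Q × A), T ((sA F Q A).map (e : Q × A →ₗ[F] Q × A))
      = T (sA F Q A) := by
    intro e
    refine (Fintype.sum_equiv e.conj.toEquiv _ _ fun X => ?_).symm
    have hx : ∀ v, e (X v) = (e.conj X) (e v) := by intro v; simp [LinearEquiv.conj_apply]
    congr 1
    · exact term_conj hf hg e X _ hx _
    · exact hh e X _ hx
  have hT0 : ∀ B, T B ≠ 0 → finrank F B = finrank F A := by
    intro B hB
    obtain ⟨X, -, hX⟩ := Finset.exists_ne_zero_of_sum_ne_zero hB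
    have := left_ne_zero_of_mul hX
    unfold term at this
    split_ifs at this with hle
    · exact (hd _ (left_ne_zero_of_mul this)).1
    · exact absurd rfl this
  set S : ℂ := ((Nat.card ((A ≃ₗ[F] A) × (Q →ₗ[F] A) × (Q ≃ₗ[F] Q)) : ℕ) : ℂ) with hS
  have key : S * ∑ B, T B = gcard F (Q × A) * T (sA F Q A) := by
    have h1 : ∑ e : (Q × A) ≃ₗ[F] (Q × A), ∑ B : Submodule F (Q × A),
        (if (sA F Q A).map (e : Q × A →ₗ[F] Q × A) = B then T B else 0) =
        gcard F (Q × A) * T (sA F Q A) := by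
      simp only [Finset.sum_ite_eq, Finset.mem_univ, if_true, hT]
      rw [Finset.sum_const, gcard_eq, Finset.card_univ, ← Nat.card_eq_fintype_card, nsmul_eq_mul]
    rw [← h1, Finset.mul_sum]
    refine Eq.trans ?_ Finset.sum_comm
    refine Finset.sum_congr rfl fun B _ => ?_
    by_cases hB : T B = 0
    · simp [hB]
    · rw [← Finset.sum_filter, Finset.sum_const, nsmul_eq_mul]
      congr 1
      rw [hS, ← card_fib B (hT0 B hB), Nat.card_eq_fintype_card, Fintype.card_subtype]

  have hl : ∑ X : Q × A →ₗ[F] Q × A, mul f g (ob X) * h (ob X) = ∑ B, T B := by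
    simp only [mul_ob, Finset.sum_mul, T]
    exact Finset.sum_comm
  have hS2 : S = gcard F A * Nat.card (Q →ₗ[F] A) * gcard F Q := by
    rw [hS, Nat.card_prod, Nat.card_prod, gcard_eq, gcard_eq]
    push_cast; ring
  have hHom : (Nat.card (Q →ₗ[F] A) : ℂ) ≠ 0 := Nat.cast_ne_zero.2 Nat.card_pos.ne'
  have hSne : S ≠ 0 := by
    rw [hS2]
    exact mul_ne_zero (mul_ne_zero gcard_ne hHom) gcard_ne
  have hsum : ∑ B, T B = S⁻¹ * (gcard F (Q × A) * T (sA F Q A)) := by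
    rw [← key, inv_mul_cancel_left₀ hSne]
  rw [pair, hl, hsum]
  simp only [T]
  rw [sum_term_sA hf hg, pair]
  have hr : ∑ y : Q →ₗ[F] Q, g (ob y) * adj A f h (ob y) =
      (gcard F A * Nat.card (Q →ₗ[F] A))⁻¹ * ∑ x : A →ₗ[F] A, ∑ u : Q →ₗ[F] A, ∑ y : Q →ₗ[F] Q,
        f (ob x) * g (ob y) * h (ob (bm x u y)) := by
    simp only [adj_ob, Finset.mul_sum]
    rw [Finset.sum_comm]
    refine Finset.sum_congr rfl fun x _ => ?_
    rw [Finset.sum_comm]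
    refine Finset.sum_congr rfl fun u _ => ?_
    refine Finset.sum_congr rfl fun y _ => ?_
    ring
  rw [hr, hS2]
  have h1 : gcard F (Q × A) ≠ 0 := gcard_ne
  have h2 : gcard F A ≠ 0 := gcard_ne
  have h3 : gcard F Q ≠ 0 := gcard_ne
  field_simp

/-! ### Associativity -/

/-- The contributions of an `x`-stable flag `C ≤ B` to `(f g) h` and to `f (g h)` agree. -/
theorem term_flag {f g h : Obj F → ℂ} (hf : IsInv f) (hg : IsInv g) (hh : IsInv h)
    (x : V →ₗ[F] V) (C B : Submodule F V) (hC : C ≤ C.comap x) (hB : B ≤ B.comap x) (hCB : C ≤ B) :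
    term f g (x.restrict hB) (C.comap B.subtype) * h (ob (B.mapQ B x hB)) =
      f (ob (x.restrict hC)) * term g h (C.mapQ C x hC) (B.map C.mkQ) := by
  have hD : (C.comap B.subtype) ≤ (C.comap B.subtype).comap (x.restrict hB) := by
    intro b hb
    exact hC hb
  have h1 : term f g (x.restrict hB) (C.comap B.subtype) = f (ob (x.restrict hC)) *
      g (ob ((C.comap B.subtype).mapQ _ _ hD)) := by
    refine term_exact hf hg (Submodule.inclusion hCB) (C.comap B.subtype).mkQ
      (Submodule.inclusion_injective _) (Submodule.mkQ_surjective _) ?_ _ _ _ ?_ ?_ _ ?_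
    · rw [Submodule.ker_mkQ, Submodule.range_inclusion]
    · intro a; rfl
    · intro b; rfl
    · rw [Submodule.range_inclusion]
  have h2 : term g h (C.mapQ C x hC) (B.map C.mkQ) =
      g (ob ((C.comap B.subtype).mapQ _ _ hD)) * h (ob (B.mapQ B x hB)) := by
    refine term_exact hg hh ((C.comap B.subtype).mapQ C B.subtype le_rfl) (C.mapQ B LinearMap.id hCB)
      ?_ ?_ ?_ _ _ _ ?_ ?_ _ ?_
    · rw [← LinearMap.ker_eq_bot, Submodule.ker_mapQ]
      exact Submodule.mkQ_map_self _
    · intro b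
      obtain ⟨b, rfl⟩ := Submodule.mkQ_surjective _ b
      exact ⟨C.mkQ b, rfl⟩
    · ext v
      obtain ⟨v, rfl⟩ := Submodule.mkQ_surjective _ v
      constructor
      · rintro ⟨b, hb⟩
        obtain ⟨b, rfl⟩ := Submodule.mkQ_surjective _ b
        rw [← hb]
        simp
      · intro hv
        have : v ∈ B := by simpa using hv
        exact ⟨(C.comap B.subtype).mkQ ⟨v, this⟩, rfl⟩
    · intro a
      obtain ⟨a, rfl⟩ := Submodule.mkQ_surjective _ a
      rfl
    · intro a
      obtain ⟨a, rfl⟩ := Submodule.mkQ_surjective _ a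
      rfl
    · rw [Submodule.range_mapQ, Submodule.range_subtype]
  rw [h1, h2, mul_assoc]

theorem mul_assoc_ob {f g h : Obj F → ℂ} (hf : IsInv f) (hg : IsInv g) (hh : IsInv h)
    (x : V →ₗ[F] V) : mul (mul f g) h (ob x) = mul f (mul g h) (ob x) := by
  classical
  rw [mul_ob, mul_ob]
  let T : Submodule F V → Submodule F V → ℂ := fun C B =>
    if hC : C ≤ C.comap x then if B ≤ B.comap x ∧ C ≤ B then
      f (ob (x.restrict hC)) * term g h (C.mapQ C x hC) (B.map C.mkQ) else 0 else 0
  have hL : ∀ B, term (mul f g) h x B = ∑ C, T C B := by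
    intro B
    by_cases hB : B ≤ B.comap x
    · rw [term, dif_pos hB, mul_ob, Finset.sum_mul]
      refine Fintype.sum_of_injective (fun C : Submodule F B => C.map B.subtype)
        (Submodule.map_injective_of_injective B.injective_subtype) _ _ ?_ ?_
      · intro C hC
        have : ¬ C ≤ B := fun h => hC ⟨C.comap B.subtype, by
          simp [Submodule.map_comap_subtype, h]⟩
        simp only [T, this, and_false, if_false, dite_eq_ite, ite_self]
      · intro C
        have hCB : C.map B.subtype ≤ B := Submodule.map_subtype_le B C
        have hcm : (C.map B.subtype).comap B.subtype = C :=
          Submodule.comap_map_eq_of_injective B.injective_subtype C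
        by_cases hC : C.map B.subtype ≤ (C.map B.subtype).comap x
        · simp only [T, dif_pos hC]
          rw [if_pos ⟨hB, hCB⟩, ← term_flag hf hg hh x _ B hC hB hCB, hcm]
        · simp only [T, dif_neg hC]
          rw [term, dif_neg, zero_mul]
          intro h
          apply hC
          rintro _ ⟨c, hc, rfl⟩
          exact ⟨_, h hc, rfl⟩
    · rw [term, dif_neg hB]
      symm
      apply Finset.sum_eq_zero
      intro C _
      simp [T, hB]
  have hR : ∀ C, term f (mul g h) x C = ∑ B, T C B := by
    intro C
    by_cases hC : C ≤ C.comap x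
    · rw [term, dif_pos hC, mul_ob, Finset.mul_sum]
      refine Fintype.sum_of_injective (fun B : Submodule F (V ⧸ C) => B.comap C.mkQ)
        (Submodule.comap_injective_of_surjective C.mkQ_surjective) _ _ ?_ ?_
      · intro B hB
        have : ¬ C ≤ B := fun h => hB ⟨B.map C.mkQ, by
          simp [Submodule.comap_map_mkQ, h]⟩
        simp only [T, this, and_false, if_false, dite_eq_ite, ite_self]
      · intro B
        have hCB : C ≤ B.comap C.mkQ := Submodule.le_comap_mkQ C B
        have hmc : (B.comap C.mkQ).map C.mkQ = B :=
          Submodule.map_comap_eq_of_surjective C.mkQ_surjective B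
        simp only [T, dif_pos hC]
        by_cases hB : B.comap C.mkQ ≤ (B.comap C.mkQ).comap x
        · rw [if_pos ⟨hB, hCB⟩, hmc]
        · rw [if_neg (fun h => hB h.1), term, dif_neg, mul_zero]
          intro h
          apply hB
          intro v hv
          exact h hv
    · rw [term, dif_neg hC]
      symm
      apply Finset.sum_eq_zero
      intro B _
      simp [T, hC]
  rw [Finset.sum_congr rfl fun B _ => hL B, Finset.sum_congr rfl fun B _ => hR B]
  exact Finset.sum_comm

theorem mul_assoc' {f g h : Obj F → ℂ} (hf : IsInv f) (hg : IsInv g) (hh : IsInv h) :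
    mul (mul f g) h = mul f (mul g h) :=
  funext fun o => mul_assoc_ob hf hg hh o.x

/-! ### The Leibniz rule for cuspidal functions -/

open Classical in
/-- Cuspidality of a function on `GL(A)`: its averages over the cosets of the unipotent radical
`{1 + h : range h ≤ C ≤ ker h}` vanish for every proper nonzero `C`. -/
def Cusp (A : Type) [AddCommGroup A] [Module F A] [Finite A] (ψ : Obj F → ℂ) : Prop :=
  ∀ C : Submodule F A, C ≠ ⊥ → C ≠ ⊤ → ∀ z : A →ₗ[F] A,
    ∑ h : A →ₗ[F] A, (if LinearMap.range h ≤ C ∧ C ≤ LinearMap.ker h then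
      ψ (ob (z ∘ₗ (LinearMap.id + h))) else 0) = 0

theorem term_congr {f g : Obj F → ℂ} (x x' : V →ₗ[F] V) (B : Submodule F V)
    (h1 : ∀ v ∈ B, x v = x' v) (h2 : B ≤ B.comap x → ∀ v, x v - x' v ∈ B) :
    term f g x B = term f g x' B := by
  by_cases hB : B ≤ B.comap x
  · have hB' : B ≤ B.comap x' := by
      intro v hv
      rw [Submodule.mem_comap, ← h1 v hv]
      exact hB hv
    rw [term, dif_pos hB, term, dif_pos hB']
    have e1 : x.restrict hB = x'.restrict hB' := LinearMap.ext fun v => Subtype.ext (h1 v v.2)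
    have e2 : B.mapQ B x hB = B.mapQ B x' hB' := by
      refine LinearMap.ext fun v => ?_
      obtain ⟨v, rfl⟩ := Submodule.mkQ_surjective _ v
      simp only [Submodule.mkQ_apply, Submodule.mapQ_apply]
      exact (Submodule.Quotient.eq B).2 (h2 hB v)
    rw [e1, e2]
  · rw [term, dif_neg hB, term, dif_neg]
    intro h
    apply hB
    intro v hv
    rw [Submodule.mem_comap, h1 v hv]
    exact h hv

/-- Total contribution of the subspace `B` to `adj A ψ (mul φ g)`. -/
def contrib (φ ψ g : Obj F → ℂ) (y : Q →ₗ[F] Q) (B : Submodule F (Q × A)) : ℂ :=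
  ∑ x : A →ₗ[F] A, ∑ u : Q →ₗ[F] A, ψ (ob x) * term φ g (bm x u y) B

/-- A transvection-like `h` on `A` adapted to `C = B ∩ (0 × A)` extends to a map `Q × A → C` that
vanishes on `B`. -/
theorem exists_eta (B : Submodule F (Q × A)) (h : A →ₗ[F] A)
    (hr : LinearMap.range h ≤ B.comap (LinearMap.inr F Q A))
    (hk : B.comap (LinearMap.inr F Q A) ≤ LinearMap.ker h) :
    ∃ k : Q →ₗ[F] A, (∀ v ∈ B, k v.1 + h v.2 = 0) ∧
      ∀ v : Q × A, k v.1 + h v.2 ∈ B.comap (LinearMap.inr F Q A) := by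
  set C := B.comap (LinearMap.inr F Q A) with hC
  let j : A ⧸ C →ₗ[F] (Q × A) ⧸ B := C.mapQ B (LinearMap.inr F Q A) le_rfl
  have hj : LinearMap.ker j = ⊥ := by
    rw [Submodule.ker_mapQ]
    exact Submodule.mkQ_map_self _
  obtain ⟨r, hr'⟩ := j.exists_leftInverse_of_injective hj
  let η : Q × A →ₗ[F] A := C.liftQ h hk ∘ₗ r ∘ₗ B.mkQ
  have hη : ∀ v : Q × A, η v = (η ∘ₗ LinearMap.inl F Q A) v.1 + h v.2 := by
    rintro ⟨b, a⟩
    have h1 : η (0, a) = h a := by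
      have : B.mkQ (0, a) = j (C.mkQ a) := rfl
      simp only [η, LinearMap.comp_apply, this]
      have h2 := LinearMap.congr_fun hr' (C.mkQ a)
      simp only [LinearMap.comp_apply, LinearMap.id_apply] at h2
      rw [h2]
      simp
    have : ((b, a) : Q × A) = (b, 0) + (0, a) := by simp
    rw [this, map_add, h1]
    simp
  refine ⟨η ∘ₗ LinearMap.inl F Q A, ?_, ?_⟩
  · intro v hv
    rw [← hη]
    have : B.mkQ v = 0 := by simpa using hv
    simp only [η, LinearMap.comp_apply, this, map_zero]
  · intro v
    rw [← hη]
    apply hr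
    obtain ⟨a, ha⟩ := Submodule.mkQ_surjective _ (r (B.mkQ v))
    refine ⟨a, ?_⟩
    simp only [η, LinearMap.comp_apply, ← ha]
    simp

/-- A subspace meeting `0 × A` in a proper nonzero `C` does not contribute: translating `x` by the
unipotent radical of `C` leaves the Hall terms unchanged and averages `ψ` to zero. -/
theorem contrib_zero {φ ψ g : Obj F → ℂ} (hψ : Cusp A ψ) (y : Q →ₗ[F] Q)
    (B : Submodule F (Q × A))
    (h1 : B.comap (LinearMap.inr F Q A) ≠ ⊥) (h2 : B.comap (LinearMap.inr F Q A) ≠ ⊤) :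
    contrib φ ψ g y B = 0 := by
  classical
  set C := B.comap (LinearMap.inr F Q A) with hC
  have step : ∀ h : A →ₗ[F] A, LinearMap.range h ≤ C → C ≤ LinearMap.ker h →
      contrib φ ψ g y B = ∑ x : A →ₗ[F] A, ∑ u : Q →ₗ[F] A,
        ψ (ob (x ∘ₗ (LinearMap.id + h))) * term φ g (bm x u y) B := by
    intro h hr hk
    obtain ⟨k, hk1, hk2⟩ := exists_eta B h hr hk
    have hhh : ∀ a, h (h a) = 0 := fun a => hk (hr ⟨a, rfl⟩)
    have hhh' : h ∘ₗ h = 0 := LinearMap.ext hhh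
    let E : (A →ₗ[F] A) ≃ (A →ₗ[F] A) :=
      { toFun := fun x => x ∘ₗ (LinearMap.id + h)
        invFun := fun x => x ∘ₗ (LinearMap.id - h)
        left_inv := fun x => by
          ext a
          simp [hhh]
        right_inv := fun x => by
          ext a
          simp [hhh] }
    refine (Fintype.sum_equiv E _ _ fun x => ?_).symm
    refine Fintype.sum_equiv (Equiv.addRight (x ∘ₗ k)) _ _ fun u => ?_
    change ψ (ob (x ∘ₗ (LinearMap.id + h))) * _ = ψ (ob (x ∘ₗ (LinearMap.id + h))) * _
    congr 1
    apply term_congr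
    · rintro ⟨b, a⟩ hv
      have := hk1 _ hv
      simp only at this
      have h3 : x (k b) + x (h a) = 0 := by rw [← map_add, this, map_zero]
      have : u b + x a = u b + x a + (x (k b) + x (h a)) := by rw [h3, add_zero]
      simp only [bm_apply, E, Equiv.coe_fn_mk, Equiv.coe_addRight, LinearMap.add_apply,
        LinearMap.comp_apply, LinearMap.id_apply, map_add, Prod.mk.injEq, true_and]
      rw [this]; abel
    · rintro hB ⟨b, a⟩
      have h3 := hk2 (b, a)
      have h4 : bm x u y (0, k b + h a) ∈ B := hB h3
      have h5 := B.neg_mem h4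
      convert h5 using 1
      simp only [bm_apply, E, Equiv.coe_fn_mk, Equiv.coe_addRight, LinearMap.add_apply,
        LinearMap.comp_apply, LinearMap.id_apply, map_add]
      ext
      · simp
      · simp; abel
  let H : Finset (A →ₗ[F] A) :=
    Finset.univ.filter fun h => LinearMap.range h ≤ C ∧ C ≤ LinearMap.ker h
  have hsum : (H.card : ℂ) * contrib φ ψ g y B = 0 := by
    rw [← nsmul_eq_mul, ← Finset.sum_const]
    rw [Finset.sum_congr rfl fun h hh => step h (Finset.mem_filter.1 hh).2.1
      (Finset.mem_filter.1 hh).2.2]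
    rw [Finset.sum_comm]
    apply Finset.sum_eq_zero
    intro x _
    rw [Finset.sum_comm]
    apply Finset.sum_eq_zero
    intro u _
    rw [← Finset.sum_mul]
    have := hψ C h1 h2 x
    rw [← Finset.sum_filter] at this
    convert zero_mul _ using 2
  rcases mul_eq_zero.1 hsum with h | h
  · exfalso
    have : (0 : A →ₗ[F] A) ∈ H := by
      simp [H]
    rw [Nat.cast_eq_zero, Finset.card_eq_zero] at h
    rw [h] at this
    simp at this
  · exact h

/-- The subspace `0 × A` contributes the term `g` of the Leibniz rule. -/
theorem contrib_top {φ ψ g : Obj F → ℂ} (hφ : IsInv φ) (hg : IsInv g) (y : Q →ₗ[F] Q) :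
    contrib φ ψ g y (sA F Q A) =
      gcard F A * Nat.card (Q →ₗ[F] A) * (pair A ψ φ * g (ob y)) := by
  unfold contrib pair
  simp only [term_bm hφ hg]
  have : ∀ x : A →ₗ[F] A, ∑ u : Q →ₗ[F] A, ψ (ob x) * (φ (ob x) * g (ob y)) =
      Nat.card (Q →ₗ[F] A) * (ψ (ob x) * φ (ob x) * g (ob y)) := by
    intro x
    rw [Finset.sum_const, nsmul_eq_mul, Finset.card_univ, Nat.card_eq_fintype_card]
    ring
  simp only [this]
  rw [← Finset.mul_sum, ← Finset.sum_mul]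
  have h2 : gcard F A ≠ 0 := gcard_ne
  field_simp

/-- The shear `(b, a) ↦ (b, a + σ b)`. -/
def shear (σ : Q →ₗ[F] A) : (Q × A) ≃ₗ[F] (Q × A) :=
  LinearEquiv.ofLinearMap (bm LinearMap.id σ LinearMap.id) (bm LinearMap.id (-σ) LinearMap.id)
    (by ext <;> simp) (by ext <;> simp)

theorem shear_apply (σ : Q →ₗ[F] A) (b : Q) (a : A) : shear σ (b, a) = (b, σ b + a) := rfl

theorem contrib_shear {φ ψ g : Obj F → ℂ} (hφ : IsInv φ) (hg : IsInv g) (y : Q →ₗ[F] Q)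
    (σ : Q →ₗ[F] A) (B : Submodule F (Q × A)) :
    contrib φ ψ g y B = contrib φ ψ g y (B.map (shear σ : Q × A →ₗ[F] Q × A)) := by
  unfold contrib
  refine Finset.sum_congr rfl fun x _ => ?_
  refine Fintype.sum_equiv (Equiv.addRight (σ ∘ₗ y - x ∘ₗ σ)) _ _ fun u => ?_
  congr 1
  apply term_conj hφ hg
  rintro ⟨b, a⟩
  rw [bm_apply, shear_apply, shear_apply, bm_apply]
  simp only [Equiv.coe_addRight, LinearMap.add_apply, LinearMap.sub_apply, LinearMap.comp_apply,
    map_add, Prod.mk.injEq, true_and]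
  abel

/-- The subspaces `B × 0` contribute the term `mul φ (adj A ψ g)` of the Leibniz rule, up to the
number of graphs over `B`. -/
theorem contrib_bot {φ ψ g : Obj F → ℂ} (hφ : IsInv φ) (hg : IsInv g) (y : Q →ₗ[F] Q)
    (B : Submodule F Q) :
    contrib φ ψ g y (B.map (LinearMap.inl F Q A)) =
      gcard F A * Nat.card (Q ⧸ B →ₗ[F] A) * term φ (adj A ψ g) y B := by
  by_cases hB : B ≤ B.comap y
  · rw [term, dif_pos hB, adj_ob]
    have hHom : (Nat.card (Q ⧸ B →ₗ[F] A) : ℂ) ≠ 0 := Nat.cast_ne_zero.2 Nat.card_pos.ne'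
    have h2 : gcard F A ≠ 0 := gcard_ne
    rw [← mul_assoc, mul_comm (gcard F A * _), mul_assoc, ← mul_assoc (gcard F A * _),
      mul_inv_cancel₀ (mul_ne_zero h2 hHom), one_mul, Finset.mul_sum]
    unfold contrib
    refine Finset.sum_congr rfl fun x _ => ?_
    rw [Finset.mul_sum]
    symm
    refine Fintype.sum_of_injective (fun u : Q ⧸ B →ₗ[F] A => u ∘ₗ B.mkQ) ?_ _ _ ?_ ?_
    · intro u u' h
      exact (LinearMap.cancel_right B.mkQ_surjective).1 h
    · intro u hu
      rw [term, dif_neg, mul_zero]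
      intro hle
      apply hu
      have : B ≤ LinearMap.ker u := by
        intro b hb
        have h3 := hle (Submodule.mem_map_of_mem hb)
        obtain ⟨c, hc, hce⟩ := h3
        have := congrArg Prod.snd hce
        simpa using this.symm
      exact ⟨B.liftQ u this, Submodule.liftQ_mkQ _ _ _⟩
    · intro u
      rw [term_exact hφ hg (LinearMap.inl F Q A ∘ₗ B.subtype)
        (LinearMap.prodMap B.mkQ LinearMap.id) (LinearMap.inl_injective.comp B.injective_subtype)
        (Function.Surjective.prodMap B.mkQ_surjective Function.surjective_id) ?_
        (bm x (u ∘ₗ B.mkQ) y) (y.restrict hB) (bm x u (B.mapQ B y hB)) ?_ ?_ _ ?_]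
      · ring
      · ext ⟨b, a⟩
        constructor
        · rintro ⟨c, hc⟩
          have h3 := congrArg Prod.fst hc
          have h4 := congrArg Prod.snd hc
          simp at h3 h4
          simp [← h3, ← h4]
        · intro h
          simp at h
          exact ⟨⟨b, h.1⟩, Prod.ext rfl h.2.symm⟩
      · intro b
        simp [(Submodule.Quotient.mk_eq_zero B).2 b.2]
      · rintro ⟨b, a⟩
        simp
      · rw [LinearMap.range_comp, Submodule.range_subtype]
  · rw [term, dif_neg hB, mul_zero]
    unfold contrib
    refine Finset.sum_eq_zero fun x _ => Finset.sum_eq_zero fun u _ => ?_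
    rw [term, dif_neg, mul_zero]
    intro hle
    apply hB
    intro b hb
    obtain ⟨c, hc, hce⟩ := hle (Submodule.mem_map_of_mem hb)
    have := congrArg Prod.fst hce
    simp at this
    rw [Submodule.mem_comap, ← this]
    exact hc

/-- Subspaces meeting `0 × A` trivially and projecting onto `B` are graphs of maps `B → A`. -/
theorem card_graph (B : Submodule F Q) :
    Nat.card {D : Submodule F (Q × A) // D.comap (LinearMap.inr F Q A) = ⊥ ∧
      D.map (LinearMap.fst F Q A) = B} = Nat.card (B →ₗ[F] A) := by
  symm
  refine Nat.card_eq_of_bijective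
    (fun s => ⟨LinearMap.range (B.subtype.prod s), ?_, ?_⟩) ⟨?_, ?_⟩
  · rw [Submodule.eq_bot_iff]
    rintro a ⟨b, hb⟩
    have h1 : (b : Q) = 0 := congrArg Prod.fst hb
    have h2 : s b = a := congrArg Prod.snd hb
    have : b = 0 := Subtype.ext h1
    rw [← h2, this, map_zero]
  · rw [← LinearMap.range_comp, LinearMap.fst_prod, Submodule.range_subtype]
  · intro s s' h
    have h' := congrArg Subtype.val h
    simp only at h'
    refine LinearMap.ext fun b => ?_
    have : ((b : Q), s b) ∈ LinearMap.range (B.subtype.prod s') := h' ▸ ⟨b, rfl⟩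
    obtain ⟨c, hc⟩ := this
    have h1 : (c : Q) = b := congrArg Prod.fst hc
    have h2 : s' c = s b := congrArg Prod.snd hc
    rw [← h2, Subtype.ext h1]
  · rintro ⟨D, hD, hDB⟩
    let p : D →ₗ[F] B := ((LinearMap.fst F Q A) ∘ₗ D.subtype).codRestrict B (by
      intro d
      rw [← hDB]
      exact Submodule.mem_map_of_mem d.2)
    have hp : Function.Bijective p := by
      constructor
      · rw [injective_iff_map_eq_zero]
        rintro ⟨⟨b, a⟩, hd⟩ h
        have hb : b = 0 := congrArg Subtype.val h
        subst hb
        have : a ∈ D.comap (LinearMap.inr F Q A) := hd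
        rw [hD] at this
        have ha : a = 0 := by simpa using this
        subst ha
        rfl
      · rintro ⟨b, hb⟩
        rw [← hDB] at hb
        obtain ⟨d, hd, hdb⟩ := hb
        exact ⟨⟨d, hd⟩, Subtype.ext hdb⟩
    let e := LinearEquiv.ofBijective p hp
    have he : ∀ d : D, ((e d : B) : Q) = d.1.1 := fun d => rfl
    refine ⟨LinearMap.snd F Q A ∘ₗ D.subtype ∘ₗ (e.symm : B →ₗ[F] D), ?_⟩
    apply Subtype.ext
    ext v
    simp only
    constructor
    · rintro ⟨b, rfl⟩
      have : (B.subtype.prod (LinearMap.snd F Q A ∘ₗ D.subtype ∘ₗ (e.symm : B →ₗ[F] D))) b =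
          (e.symm b : Q × A) := by
        apply Prod.ext
        · have := he (e.symm b)
          rw [e.apply_symm_apply] at this
          exact this
        · rfl
      rw [this]
      exact (e.symm b).2
    · intro hv
      refine ⟨e ⟨v, hv⟩, ?_⟩
      apply Prod.ext
      · exact he _
      · simp

/-- All graphs of maps `B → A` contribute equally, since they are sheared into each other. -/
theorem contrib_graph {φ ψ g : Obj F → ℂ} (hφ : IsInv φ) (hg : IsInv g) (y : Q →ₗ[F] Q)
    (B : Submodule F Q) (D : Submodule F (Q × A)) (h1 : D.comap (LinearMap.inr F Q A) = ⊥)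
    (h2 : D.map (LinearMap.fst F Q A) = B) :
    contrib φ ψ g y D = contrib φ ψ g y (B.map (LinearMap.inl F Q A)) := by
  -- `fst` is injective on `D`, so it has a one-sided inverse, which gives the shear
  have hinj : LinearMap.ker ((LinearMap.fst F Q A) ∘ₗ D.subtype) = ⊥ := by
    rw [LinearMap.ker_eq_bot']
    rintro ⟨⟨b, a⟩, hd⟩ h
    have hb : b = 0 := h
    subst hb
    have : a ∈ D.comap (LinearMap.inr F Q A) := hd
    rw [h1] at this
    have ha : a = 0 := by simpa using this
    subst ha
    rfl
  obtain ⟨r, hr⟩ := LinearMap.exists_leftInverse_of_injective _ hinj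
  let σ : Q →ₗ[F] A := LinearMap.snd F Q A ∘ₗ D.subtype ∘ₗ r
  have hσ : ∀ d ∈ D, σ d.1 = d.2 := by
    intro d hd
    have := LinearMap.congr_fun hr ⟨d, hd⟩
    simp only [LinearMap.comp_apply, LinearMap.id_apply] at this
    simp only [σ, LinearMap.comp_apply]
    have h3 : r d.1 = ⟨d, hd⟩ := this
    rw [h3]; rfl
  rw [contrib_shear hφ hg y σ (B.map (LinearMap.inl F Q A))]
  congr 1
  ext d
  constructor
  · intro hd
    refine ⟨(d.1, 0), ⟨d.1, ?_, rfl⟩, ?_⟩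
    · rw [← h2]; exact Submodule.mem_map_of_mem hd
    · change shear σ (d.1, 0) = d
      rw [shear_apply, hσ d hd, add_zero]
  · rintro ⟨_, ⟨b, hb, rfl⟩, rfl⟩
    rw [← h2] at hb
    obtain ⟨d, hd, rfl⟩ := hb
    change shear σ (d.1, 0) ∈ D
    rw [shear_apply, hσ d hd, add_zero]
    exact hd

theorem card_hom_mul (B : Submodule F Q) :
    Nat.card (B →ₗ[F] A) * Nat.card (Q ⧸ B →ₗ[F] A) = Nat.card (Q →ₗ[F] A) := by
  obtain ⟨C, hC⟩ := exists_isCompl B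
  have e1 : (Q ⧸ B →ₗ[F] A) ≃ (C →ₗ[F] A) :=
    ((Submodule.quotientEquivOfIsCompl B C hC).arrowCongr (LinearEquiv.refl F A)).toEquiv
  have e2 : (Q →ₗ[F] A) ≃ ((B × C) →ₗ[F] A) :=
    ((Submodule.prodEquivOfIsCompl B C hC).symm.arrowCongr (LinearEquiv.refl F A)).toEquiv
  have e3 : ((B →ₗ[F] A) × (C →ₗ[F] A)) ≃ ((B × C) →ₗ[F] A) :=
    (LinearMap.coprodEquiv (M₂ := C) F).toEquiv
  rw [Nat.card_congr e1, Nat.card_congr e2, ← Nat.card_congr e3, Nat.card_prod]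

theorem heisenberg_ob [Finite F] [Nontrivial A] {φ ψ g : Obj F → ℂ} (hφ : IsInv φ) (hg : IsInv g)
    (hd : Deg φ (finrank F A)) (hψ : Cusp A ψ) (hp : pair A ψ φ = 1) (y : Q →ₗ[F] Q) :
    adj A ψ (mul φ g) (ob y) = g (ob y) + mul φ (adj A ψ g) (ob y) := by
  classical
  have hHom : ∀ (Q : Type) [AddCommGroup Q] [Module F Q] [Finite Q],
    (Nat.card (Q →ₗ[F] A) : ℂ) ≠ 0 := fun Q _ _ _ => Nat.cast_ne_zero.2 Nat.card_pos.ne'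
  have hA : gcard F A ≠ 0 := gcard_ne
  have h1 : adj A ψ (mul φ g) (ob y) = (gcard F A * Nat.card (Q →ₗ[F] A))⁻¹ *
      ∑ B : Submodule F (Q × A), contrib φ ψ g y B := by
    rw [adj_ob]
    congr 1
    unfold contrib
    simp only [mul_ob, Finset.mul_sum]
    rw [Finset.sum_comm]
    conv_rhs => rw [Finset.sum_comm]
    rw [Finset.sum_comm]
    refine Finset.sum_congr rfl fun x _ => ?_
    rw [Finset.sum_comm]
  have hne : (sA F Q A).comap (LinearMap.inr F Q A) ≠ ⊥ := by
    intro h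
    obtain ⟨a, ha⟩ := exists_ne (0 : A)
    have : a ∈ (sA F Q A).comap (LinearMap.inr F Q A) := ⟨a, rfl⟩
    rw [h] at this
    exact ha (by simpa using this)
  have h2 : ∑ B : Submodule F (Q × A), contrib φ ψ g y B = contrib φ ψ g y (sA F Q A) +
      ∑ B ∈ Finset.univ.filter (fun B : Submodule F (Q × A) =>
        B.comap (LinearMap.inr F Q A) = ⊥), contrib φ ψ g y B := by
    rw [← Finset.sum_filter_not_add_sum_filter Finset.univ (fun B : Submodule F (Q × A) =>
        B.comap (LinearMap.inr F Q A) = ⊥)]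
    congr 1
    apply Finset.sum_eq_single_of_mem
    · simp only [Finset.mem_filter, Finset.mem_univ, true_and]
      exact hne
    · intro B hB hBne
      simp only [Finset.mem_filter, Finset.mem_univ, true_and] at hB
      by_cases htop : B.comap (LinearMap.inr F Q A) = ⊤
      · have hle : sA F Q A ≤ B := by
          rintro _ ⟨a, rfl⟩
          have : a ∈ B.comap (LinearMap.inr F Q A) := htop ▸ trivial
          exact this
        unfold contrib
        refine Finset.sum_eq_zero fun x _ => Finset.sum_eq_zero fun u _ => ?_
        by_contra hc
        have := right_ne_zero_of_mul hc
        unfold term at this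
        split_ifs at this with hBB
        · have h3 := (hd _ (left_ne_zero_of_mul this)).1
          simp only at h3
          apply hBne
          symm
          apply Submodule.eq_of_le_of_finrank_eq hle
          rw [h3]
          exact LinearMap.finrank_range_of_inj LinearMap.inr_injective
        · exact this rfl
      · exact contrib_zero hψ y B hB htop
  have h3 : ∑ B ∈ Finset.univ.filter (fun B : Submodule F (Q × A) =>
        B.comap (LinearMap.inr F Q A) = ⊥), contrib φ ψ g y B =
      ∑ B : Submodule F Q, gcard F A * Nat.card (Q →ₗ[F] A) * term φ (adj A ψ g) y B := by
    rw [← Finset.sum_fiberwise _ (fun D : Submodule F (Q × A) => D.map (LinearMap.fst F Q A))]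
    refine Finset.sum_congr rfl fun B _ => ?_
    rw [Finset.sum_congr rfl (g := fun _ => contrib φ ψ g y (B.map (LinearMap.inl F Q A)))
      (fun D hD => by
        simp only [Finset.mem_filter, Finset.mem_univ, true_and] at hD
        exact contrib_graph hφ hg y B D hD.1 hD.2)]
    rw [Finset.sum_const, contrib_bot hφ hg, nsmul_eq_mul, ← card_hom_mul B, ← card_graph B,
      Finset.filter_filter, ← Fintype.card_subtype, ← Nat.card_eq_fintype_card]
    push_cast
    ring
  rw [h1, h2, h3, contrib_top hφ hg, hp, one_mul, ← Finset.mul_sum, ← mul_add, ← mul_assoc,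
    inv_mul_cancel₀ (mul_ne_zero hA (hHom Q)), one_mul, mul_ob]

/-- The Leibniz rule for skewing by a cuspidal `ψ`. A subspace of `Q × A` contributes to
`adj A ψ (mul φ g)` only if it contains `0 × A`, and then it equals `0 × A` for reasons of
dimension, or if it is the graph of a map `B → A` with `B ≤ Q`. -/
theorem heisenberg [Finite F] [Nontrivial A] {φ ψ g : Obj F → ℂ} (hφ : IsInv φ) (hg : IsInv g)
    (hd : Deg φ (finrank F A)) (hψ : Cusp A ψ) (hp : pair A ψ φ = 1) :
    adj A ψ (mul φ g) = g + mul φ (adj A ψ g) :=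
  funext fun o => heisenberg_ob hφ hg hd hψ hp o.x

/-! ### Irreducible characters as functions on endomorphisms -/

/-- The function `x ↦ f (x⁻¹)`. -/
def inv (f : Obj F → ℂ) : Obj F → ℂ := fun o => f (ob (Ring.inverse o.x))

theorem inv_ob (f : Obj F → ℂ) (x : V →ₗ[F] V) : inv f (ob x) = f (ob (Ring.inverse x)) := rfl

theorem inv_ob_unit (f : Obj F → ℂ) (u : (V →ₗ[F] V)ˣ) :
    inv f (ob (u : V →ₗ[F] V)) = f (ob ((u⁻¹ : (V →ₗ[F] V)ˣ) : V →ₗ[F] V)) := by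
  rw [inv_ob, Ring.inverse_unit]

theorem isUnit_ringInverse {x : V →ₗ[F] V} (h : IsUnit (Ring.inverse x)) : IsUnit x := by
  by_contra hx
  rw [Ring.inverse_non_unit _ hx] at h
  rw [isUnit_iff_inj] at h hx
  apply hx
  intro a b _
  exact h (by simp)

theorem Deg.inv {f : Obj F → ℂ} {n : ℕ} (hf : Deg f n) : Deg (inv f) n := by
  intro o h
  obtain ⟨h1, h2⟩ := hf _ h
  exact ⟨h1, isUnit_ringInverse h2⟩

theorem IsInv.inv {f : Obj F → ℂ} (hf : IsInv f) : IsInv (inv f) := by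
  intro V W _ _ _ _ _ _ e x y hxy
  apply hf e
  by_cases hx : IsUnit x
  · have hy : IsUnit y := by
      rw [isUnit_iff_inj] at hx ⊢
      intro a b hab
      have h1 : e (x (e.symm a)) = e (x (e.symm b)) := by rw [hxy, hxy]; simpa using hab
      exact e.symm.injective (hx (e.injective h1))
    obtain ⟨u, rfl⟩ := hx
    obtain ⟨w, rfl⟩ := hy
    rw [Ring.inverse_unit, Ring.inverse_unit]
    intro v
    have h1 : (w : W →ₗ[F] W) (e (((u⁻¹ : (V →ₗ[F] V)ˣ) : V →ₗ[F] V) v)) = e v := by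
      rw [← hxy]
      congr 1
      exact LinearMap.congr_fun u.mul_inv v
    rw [← h1]
    exact (LinearMap.congr_fun w.inv_mul _).symm
  · have hy : ¬ IsUnit y := by
      intro hy
      apply hx
      rw [isUnit_iff_inj] at hy ⊢
      intro a b hab
      apply e.injective
      apply hy
      rw [← hxy, ← hxy, hab]
    rw [Ring.inverse_non_unit _ hx, Ring.inverse_non_unit _ hy]
    simp

/-- Restriction of a function on objects to `GL(V)`. -/
def res (V : Type) [AddCommGroup V] [Module F V] [Finite V] (f : Obj F → ℂ) :
    (V →ₗ[F] V)ˣ → ℂ := fun u => f (ob (u : V →ₗ[F] V))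

theorem sum_units (t : (V →ₗ[F] V) → ℂ) (ht : ∀ x, ¬ IsUnit x → t x = 0) :
    ∑ x, t x = ∑ u : (V →ₗ[F] V)ˣ, t u := by
  symm
  refine Fintype.sum_of_injective (fun u : (V →ₗ[F] V)ˣ => (u : V →ₗ[F] V)) Units.val_injective _ _
    ?_ (fun _ => rfl)
  intro x hx
  apply ht
  rintro ⟨u, rfl⟩
  exact hx ⟨u, rfl⟩

theorem pair_inv {f h : Obj F → ℂ} {n : ℕ} (hf : Deg f n) :
    pair V f (inv h) = ipG (res V f) (res V h) := by
  unfold pair ipG gcard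
  congr 1
  rw [sum_units]
  · refine Finset.sum_congr rfl fun u _ => ?_
    rw [inv_ob_unit]
    rfl
  · intro x hx
    by_contra h0
    exact hx (hf _ (left_ne_zero_of_mul h0)).2

theorem pair_congr {f h : Obj F → ℂ} (hf : IsInv f) (hh : IsInv h) (e : V ≃ₗ[F] W) :
    pair V f h = pair W f h := by
  unfold pair
  congr 1
  · unfold gcard
    rw [Nat.card_congr (Units.mapEquiv (e.conjRingEquiv : (V →ₗ[F] V) ≃* (W →ₗ[F] W))).toEquiv]
  · refine Fintype.sum_equiv e.conj.toEquiv _ _ fun x => ?_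
    have key : ∀ v, e (x v) = e.conj x (e v) := by intro v; simp
    rw [hf e x _ key, hh e x _ key]
    rfl

/-- The group `GL_n`. -/
abbrev GLn (F : Type) [Field F] (n : ℕ) : Type := ((Fin n → F) →ₗ[F] (Fin n → F))ˣ

/-- The inner product of class functions on `GL_n`. -/
def ip [Finite F] (n : ℕ) (f h : Obj F → ℂ) : ℂ :=
  ipG (res (Fin n → F) f) (res (Fin n → F) h)

theorem ip_eq_pair [Finite F] {n : ℕ} {f h : Obj F → ℂ} (hf : IsInv f) (hh : IsInv h)
    (hd : Deg f n) (hV : finrank F V = n) : ip n f h = pair V f (inv h) := by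
  rw [ip, ← pair_inv hd]
  exact pair_congr hf hh.inv (LinearEquiv.ofFinrankEq _ _ (by simp [hV]))

theorem ip_eq_ipG [Finite F] {n : ℕ} {f h : Obj F → ℂ} (hf : IsInv f) (hh : IsInv h)
    (hd : Deg f n) (hV : finrank F V = n) : ip n f h = ipG (res V f) (res V h) := by
  rw [ip_eq_pair hf hh hd hV, pair_inv hd]

theorem ip_comm [Finite F] {n : ℕ} (f h : Obj F → ℂ) : ip n f h = ip n h f := ipG_comm _ _

open Classical in
/-- Extension of a class function on `GL_n` to all objects, by zero. The conjugating isomorphism is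
chosen arbitrarily, which does not matter for class functions. -/
def cf [Finite F] {n : ℕ} (f : GLn F n → ℂ) : Obj F → ℂ := fun o =>
  if h : ∃ u : GLn F n, ∃ e : o.V ≃ₗ[F] (Fin n → F),
    ∀ v, e (o.x v) = (u : (Fin n → F) →ₗ[F] (Fin n → F)) (e v) then f h.choose else 0

theorem cf_ob [Finite F] {n : ℕ} {f : GLn F n → ℂ} (hf : IsClass f) (x : V →ₗ[F] V)
    (u : GLn F n) (e : V ≃ₗ[F] (Fin n → F))
    (h : ∀ v, e (x v) = (u : (Fin n → F) →ₗ[F] (Fin n → F)) (e v)) : cf f (ob x) = f u := by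
  have hex : ∃ u : GLn F n, ∃ e : (ob x).V ≃ₗ[F] (Fin n → F),
    ∀ v, e ((ob x).x v) = (u : (Fin n → F) →ₗ[F] (Fin n → F)) (e v) := ⟨u, e, h⟩
  rw [cf, dif_pos hex]
  obtain ⟨e', h'⟩ := hex.choose_spec
  let c : GLn F n := (LinearMap.GeneralLinearGroup.generalLinearEquiv F _).symm (e'.symm.trans e)
  have hc : ∀ v, (c : (Fin n → F) →ₗ[F] (Fin n → F)) v = e (e'.symm v) := fun v => rfl
  rw [← hf _ c]
  congr 1
  rw [mul_inv_eq_iff_eq_mul]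
  ext1
  refine LinearMap.ext fun v => ?_
  rw [Units.val_mul, Units.val_mul, Module.End.mul_apply, Module.End.mul_apply, hc, hc]
  rw [← h]
  congr 1
  rw [LinearEquiv.symm_apply_eq, h']
  simp

theorem cf_isInv [Finite F] {n : ℕ} {f : GLn F n → ℂ} (hf : IsClass f) : IsInv (cf f) := by
  intro V W _ _ _ _ _ _ e x y hxy
  by_cases h : ∃ u : GLn F n, ∃ e : V ≃ₗ[F] (Fin n → F),
    ∀ v, e (x v) = (u : (Fin n → F) →ₗ[F] (Fin n → F)) (e v)
  · obtain ⟨u, e', h'⟩ := h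
    rw [cf_ob hf x u e' h', cf_ob hf y u (e.symm.trans e')]
    intro w
    have : e.symm (y w) = x (e.symm w) := by
      rw [LinearEquiv.symm_apply_eq, hxy, e.apply_symm_apply]
    simp [this, h']
  · rw [cf, dif_neg h, cf, dif_neg]
    rintro ⟨u, e', h'⟩
    exact h ⟨u, e.trans e', fun v => by
      change e' (e (x v)) = _
      rw [hxy]; exact h' _⟩

theorem cf_deg [Finite F] {n : ℕ} (f : GLn F n → ℂ) : Deg (cf f) n := by
  intro o h
  rw [cf] at h
  split_ifs at h with hex
  · obtain ⟨u, e, h'⟩ := hex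
    refine ⟨by simpa using e.finrank_eq, ?_⟩
    rw [isUnit_iff_inj]
    intro a b hab
    apply e.injective
    apply (isUnit_iff_inj _).1 u.isUnit
    rw [← h', ← h', hab]
  · exact absurd rfl h

theorem res_cf [Finite F] {n : ℕ} {f : GLn F n → ℂ} (hf : IsClass f) :
    res (Fin n → F) (cf f) = f := by
  funext u
  exact cf_ob hf _ u (LinearEquiv.refl F _) fun _ => rfl

theorem ext_res [Finite F] {n : ℕ} {f h : Obj F → ℂ} (hf : IsInv f) (hh : IsInv h)
    (df : Deg f n) (dh : Deg h n) (hr : res (Fin n → F) f = res (Fin n → F) h) : f = h := by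
  funext o
  by_cases ho : finrank F o.V = n ∧ IsUnit o.x
  · obtain ⟨h1, u, h2⟩ := ho
    have e : o.V ≃ₗ[F] (Fin n → F) := LinearEquiv.ofFinrankEq _ _ (by simp [h1])
    let w : GLn F n := Units.mapEquiv
      (e.conjRingEquiv : (o.V →ₗ[F] o.V) ≃* ((Fin n → F) →ₗ[F] (Fin n → F))) u
    have key : ∀ v, e (o.x v) = (w : (Fin n → F) →ₗ[F] (Fin n → F)) (e v) := by
      intro v
      rw [← h2]
      have : ((w : (Fin n → F) →ₗ[F] (Fin n → F))) (e v) = e ((u : o.V →ₗ[F] o.V) (e.symm (e v))) :=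
        rfl
      rw [this, e.symm_apply_apply]
    have h3 := hf e o.x _ key
    have h4 := hh e o.x _ key
    change f (ob o.x) = h (ob o.x)
    rw [h3, h4]
    exact congrFun hr w
  · have h1 : f o = 0 := by
      by_contra h; exact ho (df o h)
    have h2 : h o = 0 := by
      by_contra h; exact ho (dh o h)
    rw [h1, h2]

theorem res_isClass {f : Obj F → ℂ} (hf : IsInv f) : IsClass (res V f) := by
  intro g h
  refine (hf (LinearMap.GeneralLinearGroup.generalLinearEquiv F V h) _ _ ?_).symm
  intro v
  change (h : V →ₗ[F] V) ((g : V →ₗ[F] V) v) = _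
  have : ((h * g * h⁻¹ : (V →ₗ[F] V)ˣ) : V →ₗ[F] V) ((h : V →ₗ[F] V) v) =
      ((h * g * h⁻¹ * h : (V →ₗ[F] V)ˣ) : V →ₗ[F] V) v := rfl
  change _ = ((h * g * h⁻¹ : (V →ₗ[F] V)ˣ) : V →ₗ[F] V) ((h : V →ₗ[F] V) v)
  rw [this, inv_mul_cancel_right]
  rfl

/-- The irreducible characters of `GL_n`, as functions on objects (extended by zero). -/
def Irr (F : Type) [Field F] [Finite F] (n : ℕ) : Finset (Obj F → ℂ) :=
  open Classical in (irrF (GLn F n)).image cf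

theorem mem_Irr [Finite F] {n : ℕ} {f : Obj F → ℂ} : f ∈ Irr F n ↔
    IsInv f ∧ Deg f n ∧ res (Fin n → F) f ∈ irrChars (GLn F n) := by
  classical
  unfold Irr
  rw [Finset.mem_image]
  constructor
  · rintro ⟨χ, h, rfl⟩
    rw [mem_irrF] at h
    have hc := isClass_of_mem h
    exact ⟨cf_isInv hc, cf_deg _, by rwa [res_cf hc]⟩
  · rintro ⟨h1, h2, h3⟩
    have hc := isClass_of_mem h3
    exact ⟨_, mem_irrF.2 h3, ext_res (cf_isInv hc) h1 (cf_deg _) h2 (res_cf hc)⟩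

theorem cf_injOn [Finite F] {n : ℕ} :
    Set.InjOn (cf (F := F) (n := n)) (irrF (GLn F n) : Set (GLn F n → ℂ)) := by
  intro a ha b hb h
  rw [Finset.mem_coe, mem_irrF] at ha hb
  rw [← res_cf (isClass_of_mem ha), ← res_cf (isClass_of_mem hb), h]

theorem sum_Irr [Finite F] {n : ℕ} {M : Type*} [AddCommMonoid M] (t : (Obj F → ℂ) → M) :
    ∑ χ ∈ Irr F n, t χ = ∑ χ ∈ irrF (GLn F n), t (cf χ) := by
  classical
  unfold Irr
  rw [Finset.sum_image cf_injOn]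

theorem ip_irr [Finite F] {n : ℕ} {f h : Obj F → ℂ} [Decidable (f = h)] (hf : f ∈ Irr F n)
    (hh : h ∈ Irr F n) :
    ip n f h = if f = h then 1 else 0 := by
  classical
  rw [mem_Irr] at hf hh
  rw [ip, ipG_irr hf.2.2 hh.2.2]
  by_cases e : f = h
  · rw [if_pos e, if_pos (by rw [e])]
  · rw [if_neg e, if_neg]
    intro h'
    exact e (ext_res hf.1 hh.1 hf.2.1 hh.2.1 h')

theorem sum_isInv {ι : Type*} (s : Finset ι) (c : ι → ℂ) (f : ι → Obj F → ℂ)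
    (hf : ∀ i ∈ s, IsInv (f i)) : IsInv (∑ i ∈ s, c i • f i) := by
  intro V W _ _ _ _ _ _ e x y hxy
  simp only [Finset.sum_apply, Pi.smul_apply]
  exact Finset.sum_congr rfl fun i hi => by rw [hf i hi e x y hxy]

theorem sum_deg {ι : Type*} (s : Finset ι) (c : ι → ℂ) (f : ι → Obj F → ℂ) {n : ℕ}
    (hf : ∀ i ∈ s, Deg (f i) n) : Deg (∑ i ∈ s, c i • f i) n := by
  intro o h
  rw [Finset.sum_apply] at h
  obtain ⟨i, hi, h⟩ := Finset.exists_ne_zero_of_sum_ne_zero h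
  exact hf i hi o (right_ne_zero_of_mul h)

theorem expand [Finite F] {n : ℕ} {f : Obj F → ℂ} (hf : IsInv f) (hd : Deg f n) :
    f = ∑ χ ∈ Irr F n, ip n f χ • χ := by
  have hI : ∀ χ ∈ Irr F n, IsInv χ := fun χ h => (mem_Irr.1 h).1
  have hD : ∀ χ ∈ Irr F n, Deg χ n := fun χ h => (mem_Irr.1 h).2.1
  refine ext_res hf (sum_isInv _ _ _ hI) hd (sum_deg _ _ _ hD) ?_
  rw [sum_Irr]
  conv_lhs => rw [class_expand (res_isClass (V := Fin n → F) hf)]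
  funext u
  simp only [res, Finset.sum_apply, Pi.smul_apply]
  refine Finset.sum_congr rfl fun χ hχ => ?_
  have hc := isClass_of_mem (mem_irrF.1 hχ)
  have h1 := res_cf hc
  rw [ip, h1]
  congr 1
  exact (congrFun h1 u).symm

theorem ip_sum_left [Finite F] {n : ℕ} {ι : Type*} (s : Finset ι) (c : ι → ℂ)
    (f : ι → Obj F → ℂ) (h : Obj F → ℂ) :
    ip n (∑ i ∈ s, c i • f i) h = ∑ i ∈ s, c i * ip n (f i) h := by
  unfold ip
  rw [← ipG_sum_left]
  congr 1
  funext u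
  simp [res]

theorem parseval [Finite F] {n : ℕ} {f h : Obj F → ℂ} (hf : IsInv f) (hd : Deg f n) :
    ip n f h = ∑ χ ∈ Irr F n, ip n f χ * ip n h χ := by
  conv_lhs => rw [expand hf hd]
  rw [ip_sum_left]
  exact Finset.sum_congr rfl fun χ _ => by rw [ip_comm h χ]

/-- A character of `GL_n`, possibly zero: all multiplicities are natural numbers. -/
structure IsChar [Finite F] (n : ℕ) (f : Obj F → ℂ) : Prop where
  isInv : IsInv f
  deg : Deg f n
  nat : ∀ χ ∈ Irr F n, ∃ k : ℕ, ip n f χ = k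

theorem IsChar.of_irr [Finite F] {n : ℕ} {f : Obj F → ℂ} (hf : f ∈ Irr F n) : IsChar n f := by
  classical
  refine ⟨(mem_Irr.1 hf).1, (mem_Irr.1 hf).2.1, fun χ hχ => ?_⟩
  rw [ip_irr hf hχ]
  by_cases h : f = χ
  · exact ⟨1, by simp [h]⟩
  · exact ⟨0, by simp [h]⟩

theorem IsChar.ip_nat [Finite F] {n : ℕ} {f h : Obj F → ℂ} (hf : IsChar n f) (hh : IsChar n h) :
    ∃ k : ℕ, ip n f h = k := by
  choose! a ha using hf.nat
  choose! b hb using hh.nat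
  refine ⟨∑ χ ∈ Irr F n, a χ * b χ, ?_⟩
  rw [parseval hf.isInv hf.deg]
  push_cast
  exact Finset.sum_congr rfl fun χ h => by rw [ha χ h, hb χ h]

theorem IsChar.exists_irr [Finite F] {n : ℕ} {f : Obj F → ℂ} (hf : IsChar n f) (h0 : f ≠ 0) :
    ∃ χ ∈ Irr F n, ip n f χ ≠ 0 := by
  by_contra h
  push Not at h
  apply h0
  rw [expand hf.isInv hf.deg]
  exact Finset.sum_eq_zero fun χ hχ => by rw [h χ hχ, zero_smul]

/-- Two characters with a common irreducible constituent are not orthogonal. -/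
theorem IsChar.ip_ne_zero [Finite F] {n : ℕ} {f h χ : Obj F → ℂ} (hf : IsChar n f)
    (hh : IsChar n h) (hχ : χ ∈ Irr F n) (h1 : ip n f χ ≠ 0) (h2 : ip n h χ ≠ 0) :
    ip n f h ≠ 0 := by
  choose! a ha using hf.nat
  choose! b hb using hh.nat
  have : ip n f h = ((∑ χ ∈ Irr F n, a χ * b χ : ℕ) : ℂ) := by
    rw [parseval hf.isInv hf.deg]
    push_cast
    exact Finset.sum_congr rfl fun χ h => by rw [ha χ h, hb χ h]
  rw [this, Nat.cast_ne_zero]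
  have hle := Finset.single_le_sum (f := fun χ => a χ * b χ) (fun _ _ => Nat.zero_le _) hχ
  rw [ha χ hχ, Nat.cast_ne_zero] at h1
  rw [hb χ hχ, Nat.cast_ne_zero] at h2
  have := Nat.mul_pos (Nat.pos_of_ne_zero h1) (Nat.pos_of_ne_zero h2)
  omega

theorem IsChar.irr_of_norm [Finite F] {n : ℕ} {f : Obj F → ℂ} (hf : IsChar n f)
    (h1 : ip n f f = 1) : f ∈ Irr F n := by
  choose! a ha using hf.nat
  have hs : ∑ χ ∈ Irr F n, a χ * a χ = 1 := by
    rw [parseval hf.isInv hf.deg] at h1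
    have : ((∑ χ ∈ Irr F n, a χ * a χ : ℕ) : ℂ) = 1 := by
      rw [← h1]
      push_cast
      exact Finset.sum_congr rfl fun χ h => by rw [ha χ h]
    exact_mod_cast this
  obtain ⟨χ, hχ, hne⟩ := Finset.exists_ne_zero_of_sum_ne_zero (hs.trans_ne one_ne_zero)
  have hle := Finset.single_le_sum (f := fun χ => a χ * a χ) (fun _ _ => Nat.zero_le _) hχ
  have h0 : ∀ χ' ∈ Irr F n, χ' ≠ χ → a χ' = 0 := by
    intro χ' h' hne'
    have := Finset.add_le_sum (f := fun χ => a χ * a χ) (fun _ _ => Nat.zero_le _) h' hχ hne'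
    rw [hs] at this
    have h3 := Nat.pos_of_ne_zero hne
    have : a χ' * a χ' = 0 := by omega
    simpa using this
  have ha1 : a χ = 1 := by
    rw [hs] at hle
    have h3 := Nat.pos_of_ne_zero hne
    have : a χ * a χ = 1 := by omega
    exact Nat.eq_one_of_mul_eq_one_right this
  have : f = χ := by
    rw [expand hf.isInv hf.deg, Finset.sum_eq_single_of_mem χ hχ, ha χ hχ, ha1]
    · simp
    · intro χ' h' hne'
      rw [ha χ' h', h0 χ' h' hne']
      simp
  rw [this]
  exact hχ

/-- A character of norm `N` has at most `N` irreducible constituents. -/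
theorem IsChar.card_constituents [Finite F] {n : ℕ} {f : Obj F → ℂ} (hf : IsChar n f) {N : ℕ}
    (hN : ip n f f = N) :
    (open Classical in ((Irr F n).filter fun χ => ip n f χ ≠ 0).card) ≤ N := by
  classical
  choose! a ha using hf.nat
  have hs : ∑ χ ∈ Irr F n, a χ * a χ = N := by
    rw [parseval hf.isInv hf.deg] at hN
    have : ((∑ χ ∈ Irr F n, a χ * a χ : ℕ) : ℂ) = N := by
      rw [← hN]
      push_cast
      exact Finset.sum_congr rfl fun χ h => by rw [ha χ h]
    exact_mod_cast this
  rw [← hs, Finset.card_filter]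
  refine Finset.sum_le_sum fun χ hχ => ?_
  split_ifs with h
  · rw [ha χ hχ, Nat.cast_ne_zero] at h
    exact Nat.mul_pos (Nat.pos_of_ne_zero h) (Nat.pos_of_ne_zero h)
  · exact Nat.zero_le _

/-! ### Block matrices and Frobenius reciprocity -/

section Parabolic

/-- The group of block matrices `(x, u; 0, τ y)` with `x ∈ GL(A)`, `u ∈ Hom(Q, A)` and `y ∈ H`,
where `τ : H → GL(Q)`. -/
@[ext] structure Par (A : Type) [AddCommGroup A] [Module F A] {H : Type} [Group H]
    (τ : H →* (Q →ₗ[F] Q)ˣ) where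
  /-- the block acting on `A` -/
  x : (A →ₗ[F] A)ˣ
  /-- the off-diagonal block -/
  u : Q →ₗ[F] A
  /-- the block acting on `Q` -/
  y : H

variable {H : Type} [Group H] {τ : H →* (Q →ₗ[F] Q)ˣ}

namespace Par

instance : Mul (Par A τ) :=
  ⟨fun p p' => ⟨p.x * p'.x, p.u ∘ₗ (τ p'.y : Q →ₗ[F] Q) + (p.x : A →ₗ[F] A) ∘ₗ p'.u, p.y * p'.y⟩⟩

instance : One (Par A τ) := ⟨⟨1, 0, 1⟩⟩

instance : Inv (Par A τ) :=
  ⟨fun p => ⟨p.x⁻¹, -(((p.x⁻¹ : (A →ₗ[F] A)ˣ) : A →ₗ[F] A) ∘ₗ p.u ∘ₗ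
    (((τ p.y)⁻¹ : (Q →ₗ[F] Q)ˣ) : Q →ₗ[F] Q)), p.y⁻¹⟩⟩

theorem mul_def (p p' : Par A τ) : p * p' = ⟨p.x * p'.x,
  p.u ∘ₗ (τ p'.y : Q →ₗ[F] Q) + (p.x : A →ₗ[F] A) ∘ₗ p'.u, p.y * p'.y⟩ := rfl

theorem one_def : (1 : Par A τ) = ⟨1, 0, 1⟩ := rfl

theorem inv_def (p : Par A τ) : p⁻¹ = ⟨p.x⁻¹, -(((p.x⁻¹ : (A →ₗ[F] A)ˣ) : A →ₗ[F] A) ∘ₗ p.u ∘ₗ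
    (((τ p.y)⁻¹ : (Q →ₗ[F] Q)ˣ) : Q →ₗ[F] Q)), p.y⁻¹⟩ := rfl

instance : Group (Par A τ) := Group.ofLeftAxioms
  (by
    intro a b c
    simp only [mul_def, mul_assoc, map_mul, Units.val_mul, Par.mk.injEq, true_and, and_true]
    ext q
    simp [add_assoc])
  (by
    intro a
    simp only [mul_def, one_def, one_mul, Units.val_one]
    ext <;> simp)
  (by
    intro a
    simp only [mul_def, one_def, inv_def, inv_mul_cancel, Par.mk.injEq, true_and, and_true]
    ext q
    have : (((τ a.y)⁻¹ : (Q →ₗ[F] Q)ˣ) : Q →ₗ[F] Q) ((τ a.y : Q →ₗ[F] Q) q) = q :=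
      LinearMap.congr_fun (τ a.y).inv_mul q
    simp [this])

/-- Projection to `GL(A)`. -/
def fstHom : Par A τ →* (A →ₗ[F] A)ˣ := ⟨⟨fun p => p.x, rfl⟩, fun _ _ => rfl⟩

/-- Projection to `H`. -/
def sndHom : Par A τ →* H := ⟨⟨fun p => p.y, rfl⟩, fun _ _ => rfl⟩

/-- The block matrix of an element. -/
def toEnd : Par A τ →* (Q × A →ₗ[F] Q × A) where
  toFun p := bm (p.x : A →ₗ[F] A) p.u (τ p.y : Q →ₗ[F] Q)
  map_one' := by
    refine LinearMap.ext ?_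
    rintro ⟨b, a⟩
    simp [one_def]
  map_mul' p p' := by
    refine LinearMap.ext ?_
    rintro ⟨b, a⟩
    simp [mul_def, add_assoc]

/-- The embedding in `GL(Q × A)`. -/
def toGL : Par A τ →* (Q × A →ₗ[F] Q × A)ˣ := toEnd.toHomUnits

theorem toGL_val (p : Par A τ) : ((toGL p : (Q × A →ₗ[F] Q × A)ˣ) : Q × A →ₗ[F] Q × A) =
  bm (p.x : A →ₗ[F] A) p.u (τ p.y : Q →ₗ[F] Q) := rfl

/-- An element of the group is a triple. -/
def equivProd : Par A τ ≃ (A →ₗ[F] A)ˣ × (Q →ₗ[F] A) × H :=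
  ⟨fun p => (p.x, p.u, p.y), fun t => ⟨t.1, t.2.1, t.2.2⟩, fun _ => rfl, fun _ => rfl⟩

instance [Finite H] : Finite (Par A τ) := Finite.of_equiv _ equivProd.symm

theorem card_eq [Finite H] : (Nat.card (Par A τ) : ℂ) =
    gcard F A * Nat.card (Q →ₗ[F] A) * Nat.card H := by
  rw [Nat.card_congr equivProd, Nat.card_prod, Nat.card_prod]
  unfold gcard
  push_cast
  ring

end Par

theorem inverse_bm (p : Par A τ) :
    Ring.inverse (bm (p.x : A →ₗ[F] A) p.u (τ p.y : Q →ₗ[F] Q)) =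
      bm ((p⁻¹).x : A →ₗ[F] A) (p⁻¹).u (τ (p⁻¹).y : Q →ₗ[F] Q) := by
  rw [← Par.toGL_val, ← Par.toGL_val, Ring.inverse_unit, map_inv]

theorem sum_units2 {h : Obj F → ℂ} (ψ : Obj F → ℂ) {n : ℕ} (hh : Deg h n) (y : Q →ₗ[F] Q) :
    ∑ x : A →ₗ[F] A, ∑ u : Q →ₗ[F] A, ψ (ob x) * h (ob (bm x u y)) =
    ∑ x : (A →ₗ[F] A)ˣ, ∑ u : Q →ₗ[F] A,
      ψ (ob (x : A →ₗ[F] A)) * h (ob (bm (x : A →ₗ[F] A) u y)) := by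
  rw [sum_units]
  intro x hx
  refine Finset.sum_eq_zero fun u _ => ?_
  by_contra h0
  have := (hh _ (right_ne_zero_of_mul h0)).2
  simp only at this
  rw [isUnit_iff_inj, bm_injective_iff, ← isUnit_iff_inj] at this
  exact hx this.1

theorem adj_inv_ob {φ χ : Obj F → ℂ} {n : ℕ} (hχ : Deg χ n) (y : (Q →ₗ[F] Q)ˣ) :
    adj A φ (inv χ) (ob (y : Q →ₗ[F] Q)) =
      adj A (inv φ) χ (ob ((y⁻¹ : (Q →ₗ[F] Q)ˣ) : Q →ₗ[F] Q)) := by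
  rw [adj_ob, adj_ob, sum_units2 _ hχ.inv, sum_units2 _ hχ]
  congr 1
  simp only [← Fintype.sum_prod_type']
  let T : (A →ₗ[F] A)ˣ × (Q →ₗ[F] A) ≃ (A →ₗ[F] A)ˣ × (Q →ₗ[F] A) :=
    { toFun := fun t => (t.1⁻¹, -(((t.1⁻¹ : (A →ₗ[F] A)ˣ) : A →ₗ[F] A) ∘ₗ t.2 ∘ₗ
        ((y⁻¹ : (Q →ₗ[F] Q)ˣ) : Q →ₗ[F] Q)))
      invFun := fun t => (t.1⁻¹, -(((t.1⁻¹ : (A →ₗ[F] A)ˣ) : A →ₗ[F] A) ∘ₗ t.2 ∘ₗ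
        (y : Q →ₗ[F] Q)))
      left_inv := by
        rintro ⟨x, u⟩
        have h1 : ∀ a, (x : A →ₗ[F] A) (((x⁻¹ : (A →ₗ[F] A)ˣ) : A →ₗ[F] A) a) = a :=
          fun a => LinearMap.congr_fun x.mul_inv a
        have h2 : ∀ a, ((y⁻¹ : (Q →ₗ[F] Q)ˣ) : Q →ₗ[F] Q) ((y : Q →ₗ[F] Q) a) = a :=
          fun a => LinearMap.congr_fun y.inv_mul a
        refine Prod.ext (inv_inv x) ?_
        ext q
        simp [h1, h2]
      right_inv := by
        rintro ⟨x, u⟩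
        have h1 : ∀ a, (x : A →ₗ[F] A) (((x⁻¹ : (A →ₗ[F] A)ˣ) : A →ₗ[F] A) a) = a :=
          fun a => LinearMap.congr_fun x.mul_inv a
        have h2 : ∀ a, (y : Q →ₗ[F] Q) (((y⁻¹ : (Q →ₗ[F] Q)ˣ) : Q →ₗ[F] Q) a) = a :=
          fun a => LinearMap.congr_fun y.mul_inv a
        refine Prod.ext (inv_inv x) ?_
        ext q
        simp [h1, h2] }
  refine Fintype.sum_equiv T _ _ ?_
  rintro ⟨x, u⟩
  have h3 := inverse_bm (τ := MonoidHom.id _) (⟨x, u, y⟩ : Par A (MonoidHom.id _))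
  simp only [MonoidHom.id_apply, Par.inv_def] at h3
  simp only [T, Equiv.coe_fn_mk]
  rw [inv_ob, inv_ob, h3, Ring.inverse_unit, inv_inv]

theorem adj_inv [Finite F] {φ χ : Obj F → ℂ} {n : ℕ} (hχ : Deg χ n) :
    adj A φ (inv χ) = inv (adj A (inv φ) χ) := by
  funext o
  by_cases ho : IsUnit o.x
  · obtain ⟨y, hy⟩ := ho
    have h1 := adj_inv_ob (A := A) (φ := φ) hχ y
    rw [← inv_ob_unit (adj A (inv φ) χ) y, hy] at h1
    exact h1
  · have h1 : adj A φ (inv χ) o = 0 := by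
      by_contra h
      exact ho ((hχ.inv.adj φ) o h).2
    have h2 : inv (adj A (inv φ) χ) o = 0 := by
      by_contra h
      exact ho ((hχ.adj (inv φ)).inv o h).2
    rw [h1, h2]

/-- Frobenius reciprocity: the adjoint of multiplication by `φ`. -/
theorem ip_mul [Finite F] {φ ρ χ : Obj F → ℂ} {k : ℕ} (hφ : IsInv φ) (hρ : IsInv ρ)
    (hχ : IsInv χ) (dφ : Deg φ (finrank F A)) (dρ : Deg ρ k) (dχ : Deg χ (finrank F A + k)) :
    ip (finrank F A + k) (mul φ ρ) χ = ip k ρ (adj A (inv φ) χ) := by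
  rw [ip_eq_pair (V := (Fin k → F) × A) (hφ.mul hρ) hχ (dφ.mul dρ) (by simp [add_comm]),
    pair_mul hφ hρ hχ.inv dφ, adj_inv dχ,
    ← ip_eq_pair hρ (hχ.adj _) dρ (by simp)]

/-- Pull-back of a representation along a homomorphism. -/
def pb {G K X : Type} [Group G] [Group K] [AddCommGroup X] [Module ℂ X] (f : G →* K)
    (R : Representation ℂ K X) : Representation ℂ G X := MonoidHom.comp R f

theorem pb_apply {G K X : Type} [Group G] [Group K] [AddCommGroup X] [Module ℂ X] (f : G →* K)
    (R : Representation ℂ K X) (g : G) : pb f R g = R (f g) := rfl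

/-- The pairing of `adj A (inv φ) χ` with a character of `H` is a multiplicity in the restriction of
`χ` to the group of block matrices; in particular it is a natural number. -/
theorem par_ip [Finite H] {X Y Z : Type} [AddCommGroup X] [Module ℂ X] [FiniteDimensional ℂ X]
    [AddCommGroup Y] [Module ℂ Y] [FiniteDimensional ℂ Y]
    [AddCommGroup Z] [Module ℂ Z] [FiniteDimensional ℂ Z]
    (R : Representation ℂ (Q × A →ₗ[F] Q × A)ˣ X) (S : Representation ℂ (A →ₗ[F] A)ˣ Y)
    (T : Representation ℂ H Z) {φ χ : Obj F → ℂ} {n : ℕ} (dχ : Deg χ n)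
    (hχ : res (Q × A) χ = R.character) (hφ : res A φ = S.character) :
    (Nat.card H : ℂ)⁻¹ * ∑ y : H, adj A (inv φ) χ (ob (τ y : Q →ₗ[F] Q)) * T.character y⁻¹ =
      finrank ℂ (Representation.IntertwiningMap
        ((pb (Par.fstHom (τ := τ)) S).tprod (pb Par.sndHom T)) (pb Par.toGL R)) := by
  rw [← ipG_char, ipG, Par.card_eq, mul_comm (gcard F A * _), mul_inv, mul_assoc]
  congr 1
  simp only [adj_ob, sum_units2 _ dχ, mul_assoc]
  rw [← Finset.mul_sum]
  congr 1
  rw [← Equiv.sum_comp Par.equivProd.symm, Fintype.sum_prod_type]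
  simp only [Fintype.sum_prod_type, Finset.sum_mul]
  rw [Finset.sum_comm]
  refine Finset.sum_congr rfl fun x _ => ?_
  rw [Finset.sum_comm]
  refine Finset.sum_congr rfl fun u _ => ?_
  refine Finset.sum_congr rfl fun y _ => ?_
  have h1 := congrFun hχ (Par.toGL (⟨x, u, y⟩ : Par A τ))
  have h2 := congrFun hφ x⁻¹
  rw [inv_ob_unit]
  simp only [res] at h1 h2
  rw [Par.toGL_val] at h1
  simp only at h1
  rw [h1, h2, Representation.char_tensor]
  change _ = R.character _ * (S.character _ * T.character _)
  change _ = R.character (Par.toGL (⟨x, u, y⟩ : Par A τ)) * (S.character x⁻¹ * T.character y⁻¹)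
  ring

end Parabolic

/-! ### Transport, positivity and degrees -/

theorem pb_isIrreducible {G K X : Type} [Group G] [Group K] [AddCommGroup X] [Module ℂ X]
    (e : G ≃* K) (R : Representation ℂ K X) (h : R.IsIrreducible) :
    (pb (e : G →* K) R).IsIrreducible := by
  let T : Subrepresentation R ≃o Subrepresentation (pb (e : G →* K) R) :=
    { toFun := fun σ => ⟨σ.toSubmodule, fun g v hv => σ.apply_mem_toSubmodule (e g) hv⟩
      invFun := fun σ => ⟨σ.toSubmodule, fun g v hv => by
        have := σ.apply_mem_toSubmodule (e.symm g) hv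
        rw [pb_apply] at this
        simpa using this⟩
      left_inv := fun _ => rfl
      right_inv := fun _ => rfl
      map_rel_iff' := Iff.rfl }
  have : IsSimpleOrder (Subrepresentation R) := h
  exact (T.isSimpleOrder_iff).1 this

theorem irrChars_transport {G K : Type} [Group G] [Group K] [Finite G] [Finite K] (e : G ≃* K)
    {f : K → ℂ} (hf : f ∈ irrChars K) : (fun g => f (e g)) ∈ irrChars G := by
  obtain ⟨X, _, _, _, R, h, rfl⟩ := exists_rep_of_mem hf
  have := pb_isIrreducible e R h
  exact mem_irrChars_of_irreducible (pb (e : G →* K) R)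

/-- `GL(V) ≃ GL(W)` induced by a linear equivalence. -/
def glCongr (e : V ≃ₗ[F] W) : (V →ₗ[F] V)ˣ ≃* (W →ₗ[F] W)ˣ :=
  Units.mapEquiv (e.conjRingEquiv : (V →ₗ[F] V) ≃* (W →ₗ[F] W))

theorem glCongr_apply (e : V ≃ₗ[F] W) (u : (V →ₗ[F] V)ˣ) (v : V) :
    ((glCongr e u : (W →ₗ[F] W)ˣ) : W →ₗ[F] W) (e v) = e ((u : V →ₗ[F] V) v) := by
  have : ((glCongr e u : (W →ₗ[F] W)ˣ) : W →ₗ[F] W) (e v) =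
    e ((u : V →ₗ[F] V) (e.symm (e v))) := rfl
  rw [this, e.symm_apply_apply]

theorem res_glCongr {f : Obj F → ℂ} (hf : IsInv f) (e : V ≃ₗ[F] W) (u : (V →ₗ[F] V)ˣ) :
    res W f (glCongr e u) = res V f u :=
  (hf e _ _ fun v => (glCongr_apply e u v).symm).symm

theorem Irr_res [Finite F] {n : ℕ} {χ : Obj F → ℂ} (hχ : χ ∈ Irr F n) (hV : finrank F V = n) :
    res V χ ∈ irrChars (V →ₗ[F] V)ˣ := by
  obtain ⟨h1, h2, h3⟩ := mem_Irr.1 hχ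
  have e : V ≃ₗ[F] (Fin n → F) := LinearEquiv.ofFinrankEq _ _ (by simp [hV])
  have := irrChars_transport (glCongr e) h3
  simpa only [res_glCongr h1 e] using this

theorem exists_Irr [Finite F] {n : ℕ} (hV : finrank F V = n) {f : (V →ₗ[F] V)ˣ → ℂ}
    (hf : f ∈ irrChars (V →ₗ[F] V)ˣ) : ∃ χ ∈ Irr F n, res V χ = f := by
  have e : V ≃ₗ[F] (Fin n → F) := LinearEquiv.ofFinrankEq _ _ (by simp [hV])
  have h1 := irrChars_transport (glCongr e).symm hf
  have hc := isClass_of_mem h1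
  refine ⟨cf _, mem_Irr.2 ⟨cf_isInv hc, cf_deg _, by rwa [res_cf hc]⟩, ?_⟩
  funext u
  rw [← res_glCongr (cf_isInv hc) e, res_cf hc]
  simp

theorem Irr_rep [Finite F] {n : ℕ} {χ : Obj F → ℂ} (hχ : χ ∈ Irr F n) (V : Type)
    [AddCommGroup V] [Module F V] [Finite V] (hV : finrank F V = n) :
    ∃ (X : Type) (_ : AddCommGroup X) (_ : Module ℂ X) (_ : FiniteDimensional ℂ X)
      (R : Representation ℂ (V →ₗ[F] V)ˣ X), R.IsIrreducible ∧ res V χ = R.character :=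
  exists_rep_of_mem (Irr_res hχ hV)

/-- The adjoint of parabolic induction maps irreducible characters to
characters, possibly zero. -/
theorem D_isChar [Finite F] {k : ℕ} {φ χ : Obj F → ℂ} (hφ : φ ∈ Irr F (finrank F A))
    (hχ : χ ∈ Irr F (finrank F A + k)) : IsChar k (adj A (inv φ) χ) := by
  have hd : Deg (adj A (inv φ) χ) k := by
    have := (mem_Irr.1 hχ).2.1.adj (A := A) (inv φ)
    rwa [Nat.add_sub_cancel_left] at this
  refine ⟨(mem_Irr.1 hχ).1.adj _, hd, fun ρ hρ => ?_⟩
  obtain ⟨Y, _, _, _, S, hS, hS'⟩ := Irr_rep hφ A rfl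
  obtain ⟨X, _, _, _, R, hR, hR'⟩ := Irr_rep hχ ((Fin k → F) × A) (by simp [add_comm])
  obtain ⟨Z, _, _, _, T, hT, hT'⟩ := Irr_rep hρ (Fin k → F) (by simp)
  refine ⟨_, Eq.trans ?_ (par_ip (τ := MonoidHom.id _) R S T (mem_Irr.1 hχ).2.1 hR' hS')⟩
  rw [ip, ipG, hT']
  rfl

theorem IsChar.mul_aux [Finite F] {k : ℕ} {φ ρ : Obj F → ℂ} (hφ : φ ∈ Irr F (finrank F A))
    (hρ : IsChar k ρ) : IsChar (finrank F A + k) (ZetaGL.mul φ ρ) := by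
  obtain ⟨h1, h2, -⟩ := mem_Irr.1 hφ
  refine ⟨h1.mul hρ.isInv, h2.mul hρ.deg, fun χ hχ => ?_⟩
  obtain ⟨h3, h4, -⟩ := mem_Irr.1 hχ
  rw [ip_mul h1 hρ.isInv h3 h2 hρ.deg h4]
  exact hρ.ip_nat (D_isChar hφ hχ)

theorem IsChar.mul [Finite F] {d k : ℕ} {φ ρ : Obj F → ℂ} (hφ : φ ∈ Irr F d)
    (hρ : IsChar k ρ) : IsChar (d + k) (ZetaGL.mul φ ρ) := by
  have hA : finrank F (Fin d → F) = d := by simp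
  have := IsChar.mul_aux (A := Fin d → F) (by rwa [hA]) hρ
  rwa [hA] at this

/-- The value of a function on `GL_n` at the identity, as a real number. -/
def dg [Finite F] (n : ℕ) (f : Obj F → ℂ) : ℝ :=
  (f (ob (LinearMap.id : (Fin n → F) →ₗ[F] (Fin n → F)))).re

theorem Irr_one [Finite F] {n : ℕ} {χ : Obj F → ℂ} (hχ : χ ∈ Irr F n) :
    ∃ d : ℕ, 0 < d ∧ χ (ob (LinearMap.id : (Fin n → F) →ₗ[F] (Fin n → F))) = d :=
  irr_deg (mem_Irr.1 hχ).2.2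

theorem id_val [Finite F] {n : ℕ} {f : Obj F → ℂ} (hf : IsInv f) (hV : finrank F V = n) :
    f (ob (LinearMap.id : V →ₗ[F] V)) =
      f (ob (LinearMap.id : (Fin n → F) →ₗ[F] (Fin n → F))) :=
  hf (LinearEquiv.ofFinrankEq V (Fin n → F) (by simp [hV])) _ _ fun _ => rfl

theorem dg_eq [Finite F] {n : ℕ} {χ : Obj F → ℂ} (hχ : χ ∈ Irr F n) (hV : finrank F V = n)
    {X : Type} [AddCommGroup X] [Module ℂ X] [FiniteDimensional ℂ X]
    (R : Representation ℂ (V →ₗ[F] V)ˣ X) (h : res V χ = R.character) :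
    dg n χ = finrank ℂ X := by
  have h1 := congrFun h 1
  rw [R.char_one] at h1
  have h2 : res V χ 1 = χ (ob (LinearMap.id : V →ₗ[F] V)) := rfl
  rw [dg, ← id_val (V := V) (mem_Irr.1 hχ).1 hV, ← h2, h1, Complex.natCast_re]

theorem dg_val [Finite F] {n : ℕ} {χ : Obj F → ℂ} (hχ : χ ∈ Irr F n) :
    χ (ob (LinearMap.id : (Fin n → F) →ₗ[F] (Fin n → F))) = dg n χ := by
  obtain ⟨d, -, h⟩ := Irr_one hχ
  rw [dg, h]
  simp

theorem dg_ge_one [Finite F] {n : ℕ} {χ : Obj F → ℂ} (hχ : χ ∈ Irr F n) : 1 ≤ dg n χ := by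
  obtain ⟨d, h0, h⟩ := Irr_one hχ
  rw [dg, h, Complex.natCast_re]
  exact_mod_cast h0

/-- A nonzero character does not vanish at the identity. -/
theorem IsChar.id_ne_zero [Finite F] {n : ℕ} {f : Obj F → ℂ} (hf : IsChar n f) (h0 : f ≠ 0)
    (hV : finrank F V = n) : f (ob (LinearMap.id : V →ₗ[F] V)) ≠ 0 := by
  rw [id_val hf.isInv hV, expand hf.isInv hf.deg]
  obtain ⟨χ, hχ, hne⟩ := hf.exists_irr h0
  choose! a ha using hf.nat
  choose! b hb0 hb using fun χ (h : χ ∈ Irr F n) => Irr_one h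
  rw [Finset.sum_apply, Finset.sum_congr rfl (g := fun χ => ((a χ * b χ : ℕ) : ℂ))]
  · rw [← Nat.cast_sum, Nat.cast_ne_zero]
    have hle := Finset.single_le_sum (f := fun χ => a χ * b χ) (fun _ _ => Nat.zero_le _) hχ
    rw [ha χ hχ, Nat.cast_ne_zero] at hne
    have := Nat.mul_pos (Nat.pos_of_ne_zero hne) (hb0 χ hχ)
    omega
  · intro χ h
    rw [Pi.smul_apply, ha χ h, hb χ h]
    simp

/-- `L` intertwines the action of `GL(A)` on `Y` with the action of the affine group on `X`, the
unipotent radical acting trivially on the image. -/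
def AffMap {X Y : Type} [AddCommGroup X] [Module ℂ X] [AddCommGroup Y] [Module ℂ Y]
    (R : Representation ℂ (Q × A →ₗ[F] Q × A)ˣ X) (S : Representation ℂ (A →ₗ[F] A)ˣ Y)
    (L : Y →ₗ[ℂ] X) : Prop :=
  ∀ (x : (A →ₗ[F] A)ˣ) (u : Q →ₗ[F] A) (g : (Q × A →ₗ[F] Q × A)ˣ),
    (g : Q × A →ₗ[F] Q × A) = bm (x : A →ₗ[F] A) u LinearMap.id → ∀ y, L (S x y) = R g (L y)

/-- Skewing `χ` by `φ` is nonzero at the identity exactly when `φ` occurs in the vectors of `χ` fixed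
by the unipotent radical of `0 × A`. -/
theorem adj_one {X Y : Type} [AddCommGroup X] [Module ℂ X] [FiniteDimensional ℂ X]
    [AddCommGroup Y] [Module ℂ Y] [FiniteDimensional ℂ Y]
    (R : Representation ℂ (Q × A →ₗ[F] Q × A)ˣ X) (S : Representation ℂ (A →ₗ[F] A)ˣ Y)
    {φ χ : Obj F → ℂ} {n : ℕ} (dχ : Deg χ n)
    (hχ : res (Q × A) χ = R.character) (hφ : res A φ = S.character) :
    adj A (inv φ) χ (ob (LinearMap.id : Q →ₗ[F] Q)) ≠ 0 ↔ ∃ L : Y →ₗ[ℂ] X, L ≠ 0 ∧ AffMap R S L := by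
  have h := par_ip (τ := (1 : Unit →* (Q →ₗ[F] Q)ˣ)) R S (Representation.trivial ℂ Unit ℂ) dχ hχ hφ
  have h1 : (Representation.trivial ℂ Unit ℂ).character (1 : Unit) = 1 := by
    rw [Representation.char_one]; simp
  simp only [Nat.card_unique, Nat.cast_one, inv_one, one_mul, Finset.univ_unique,
    Finset.sum_singleton, MonoidHom.one_apply, Units.val_one] at h
  have h2 : (default : Unit)⁻¹ = 1 := rfl
  rw [h2, h1, mul_one] at h
  change adj A (inv φ) χ (ob (LinearMap.id : Q →ₗ[F] Q)) = _ at h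
  rw [h, Nat.cast_ne_zero]
  constructor
  · intro hne
    have hfin := Module.nontrivial_of_finrank_pos (Nat.pos_of_ne_zero hne)
    obtain ⟨J, hJ⟩ := exists_ne (0 : Representation.IntertwiningMap
        ((pb (Par.fstHom (τ := (1 : Unit →* (Q →ₗ[F] Q)ˣ))) S).tprod
          (pb Par.sndHom (Representation.trivial ℂ Unit ℂ))) (pb Par.toGL R))
    refine ⟨J.toLinearMap ∘ₗ (TensorProduct.rid ℂ Y).symm.toLinearMap, ?_, ?_⟩
    · intro h0
      apply hJ
      apply Representation.IntertwiningMap.toLinearMap_injective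
      ext y
      have := LinearMap.congr_fun h0 y
      simpa using this
    · intro x u g hg y
      have h3 := LinearMap.congr_fun (J.isIntertwining' (⟨x, u, 1⟩ : Par A _)) (y ⊗ₜ[ℂ] (1 : ℂ))
      have h4 : Par.toGL (⟨x, u, 1⟩ : Par A (1 : Unit →* (Q →ₗ[F] Q)ˣ)) = g := by
        ext1
        rw [hg]
        rfl
      have h5 : pb Par.toGL R (⟨x, u, 1⟩ : Par A (1 : Unit →* (Q →ₗ[F] Q)ˣ)) = R g := by
        rw [pb_apply, h4]
      rw [h5] at h3
      have h6 : J.toLinearMap ((S x y) ⊗ₜ[ℂ] (1 : ℂ)) = R g (J.toLinearMap (y ⊗ₜ[ℂ] (1 : ℂ))) := h3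
      simpa using h6
  · rintro ⟨L, hL, hLa⟩
    let J : Representation.IntertwiningMap
        ((pb (Par.fstHom (τ := (1 : Unit →* (Q →ₗ[F] Q)ˣ))) S).tprod
          (pb Par.sndHom (Representation.trivial ℂ Unit ℂ))) (pb Par.toGL R) :=
      ⟨L ∘ₗ (TensorProduct.rid ℂ Y).toLinearMap, by
        intro p
        ext y
        have := hLa p.x p.u (Par.toGL p) rfl y
        simpa [pb_apply, Par.fstHom] using this⟩
    have hJ : J ≠ 0 := by
      intro h0
      apply hL
      ext y
      have := congrArg (fun T => T.toLinearMap (y ⊗ₜ[ℂ] (1 : ℂ))) h0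
      simpa [J] using this
    have : Nontrivial (Representation.IntertwiningMap
        ((pb (Par.fstHom (τ := (1 : Unit →* (Q →ₗ[F] Q)ˣ))) S).tprod
          (pb Par.sndHom (Representation.trivial ℂ Unit ℂ))) (pb Par.toGL R)) := ⟨J, 0, hJ⟩
    have hfin : FiniteDimensional ℂ (Representation.IntertwiningMap
        ((pb (Par.fstHom (τ := (1 : Unit →* (Q →ₗ[F] Q)ˣ))) S).tprod
          (pb Par.sndHom (Representation.trivial ℂ Unit ℂ))) (pb Par.toGL R)) :=
      FiniteDimensional.of_injective
        (Representation.IntertwiningMap.toLinearMapl _ _)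
        (Representation.IntertwiningMap.toLinearMap_injective _ _)
    exact finrank_pos.ne'

/-! ### Powers of a cuspidal character -/

theorem mul_sum_right {ι : Type*} (s : Finset ι) (c : ι → ℂ) (f : ι → Obj F → ℂ)
    (φ : Obj F → ℂ) : mul φ (∑ i ∈ s, c i • f i) = ∑ i ∈ s, c i • mul φ (f i) := by
  funext o
  simp only [mul, Finset.sum_apply, Pi.smul_apply, Finset.smul_sum]
  rw [Finset.sum_comm]
  refine Finset.sum_congr rfl fun B _ => ?_
  unfold term
  split_ifs with h
  · simp only [Finset.sum_apply, Pi.smul_apply, smul_eq_mul, Finset.mul_sum]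
    exact Finset.sum_congr rfl fun i _ => by ring
  · simp

theorem mul_sum_left {ι : Type*} (s : Finset ι) (c : ι → ℂ) (f : ι → Obj F → ℂ)
    (φ : Obj F → ℂ) : mul (∑ i ∈ s, c i • f i) φ = ∑ i ∈ s, c i • mul (f i) φ := by
  funext o
  simp only [mul, Finset.sum_apply, Pi.smul_apply, Finset.smul_sum]
  rw [Finset.sum_comm]
  refine Finset.sum_congr rfl fun B _ => ?_
  unfold term
  split_ifs with h
  · simp only [Finset.sum_apply, Pi.smul_apply, smul_eq_mul, Finset.sum_mul]
    exact Finset.sum_congr rfl fun i _ => by ring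
  · simp

theorem mul_smul_right (c : ℂ) (φ f : Obj F → ℂ) : mul φ (c • f) = c • mul φ f := by
  simpa using mul_sum_right {()} (fun _ => c) (fun _ => f) φ

theorem mul_zero_right (φ : Obj F → ℂ) : mul φ 0 = 0 := by
  simpa using mul_smul_right 0 φ 0

/-- Iterated product `φ * (φ * ⋯ (φ * ρ))`. -/
def seq (φ : Obj F → ℂ) : ℕ → (Obj F → ℂ) → (Obj F → ℂ)
  | 0, ρ => ρ
  | m + 1, ρ => mul φ (seq φ m ρ)

theorem seq_succ' (φ : Obj F → ℂ) (m : ℕ) (ρ : Obj F → ℂ) :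
    seq φ (m + 1) ρ = seq φ m (mul φ ρ) := by
  induction m with
  | zero => rfl
  | succ m ih =>
    change mul φ (seq φ (m + 1) ρ) = mul φ (seq φ m (mul φ ρ))
    rw [ih]

theorem seq_sum {ι : Type*} (s : Finset ι) (c : ι → ℂ) (f : ι → Obj F → ℂ) (φ : Obj F → ℂ) (m : ℕ) :
    seq φ m (∑ i ∈ s, c i • f i) = ∑ i ∈ s, c i • seq φ m (f i) := by
  induction m with
  | zero => rfl
  | succ m ih =>
    simp only [seq]
    rw [ih, mul_sum_right]

theorem seq_isChar [Finite F] {d k : ℕ} {φ ρ : Obj F → ℂ} (hφ : φ ∈ Irr F d) (hρ : IsChar k ρ)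
    (m : ℕ) : IsChar (m * d + k) (seq φ m ρ) := by
  induction m with
  | zero => rw [Nat.zero_mul, Nat.zero_add]; exact hρ
  | succ m ih =>
    have := IsChar.mul hφ ih
    rw [show (m + 1) * d + k = d + (m * d + k) by ring]
    exact this

theorem pair_comm (f h : Obj F → ℂ) : pair V f h = pair V h f := by
  unfold pair
  simp only [mul_comm]

/-- Leibniz rule for a cuspidal irreducible character. -/
theorem leibniz [Finite F] [Nontrivial A] {φ g : Obj F → ℂ} (hφ : φ ∈ Irr F (finrank F A))
    (hc : Cusp A (inv φ)) (hg : IsInv g) :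
    adj A (inv φ) (mul φ g) = g + mul φ (adj A (inv φ) g) := by
  classical
  obtain ⟨h1, h2, -⟩ := mem_Irr.1 hφ
  refine heisenberg h1 hg h2 hc ?_
  rw [pair_comm, ← ip_eq_pair h1 h1 h2 rfl, ip_irr hφ hφ, if_pos rfl]

/-- Iterating the Leibniz rule: the adjoint acts on `φ ^ m ρ` like a derivative on monomials. -/
theorem adj_seq [Finite F] [Nontrivial A] {k : ℕ} {φ ρ : Obj F → ℂ} (hφ : φ ∈ Irr F (finrank F A))
    (hc : Cusp A (inv φ)) (hρ : IsChar k ρ) (h0 : adj A (inv φ) ρ = 0) (m : ℕ) :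
    adj A (inv φ) (seq φ (m + 1) ρ) = ((m + 1 : ℕ) : ℂ) • seq φ m ρ := by
  induction m with
  | zero =>
    simp only [seq]
    rw [leibniz hφ hc hρ.isInv, h0, mul_zero_right]
    simp
  | succ m ih =>
    change adj A (inv φ) (mul φ (seq φ (m + 1) ρ)) = _
    rw [leibniz hφ hc (seq_isChar hφ hρ _).isInv, ih, mul_smul_right]
    change seq φ (m + 1) ρ + ((m + 1 : ℕ) : ℂ) • seq φ (m + 1) ρ = _
    push_cast
    module

theorem ip_smul_right [Finite F] {n : ℕ} (c : ℂ) (f h : Obj F → ℂ) :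
    ip n f (c • h) = c * ip n f h := by
  rw [ip_comm, ip_comm f h]
  simpa using ip_sum_left (n := n) {()} (fun _ => c) (fun _ => h) f

/-- If `φ` is cuspidal and its adjoint kills `ρ`, then `φ ^ m ρ` has norm `m !`. -/
theorem ip_seq [Finite F] [Nontrivial A] {k : ℕ} {φ ρ : Obj F → ℂ} (hφ : φ ∈ Irr F (finrank F A))
    (hc : Cusp A (inv φ)) (hρ : ρ ∈ Irr F k) (h0 : adj A (inv φ) ρ = 0) (m : ℕ) :
    ip (m * finrank F A + k) (seq φ m ρ) (seq φ m ρ) = (m.factorial : ℂ) := by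
  classical
  obtain ⟨h1, h2, -⟩ := mem_Irr.1 hφ
  have hρ' := IsChar.of_irr hρ
  induction m with
  | zero =>
    rw [Nat.zero_mul, Nat.zero_add]
    simp only [seq]
    rw [ip_irr hρ hρ, if_pos rfl]
    simp
  | succ m ih =>
    have hm := seq_isChar hφ hρ' m
    have hm1 := seq_isChar hφ hρ' (m + 1)
    have e : (m + 1) * finrank F A + k = finrank F A + (m * finrank F A + k) := by ring
    rw [e] at hm1 ⊢
    change ip _ (mul φ (seq φ m ρ)) _ = _
    rw [ip_mul h1 hm.isInv hm1.isInv h2 hm.deg hm1.deg, adj_seq hφ hc hρ' h0, ip_smul_right, ih,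
      Nat.factorial_succ]
    push_cast
    ring

open Classical in
/-- The unit of the Hall product. -/
def one0 : Obj F → ℂ := fun o => if finrank F o.V = 0 then 1 else 0

theorem one0_mem [Finite F] : (one0 : Obj F → ℂ) ∈ Irr F 0 := by
  classical
  rw [mem_Irr]
  refine ⟨?_, ?_, ?_⟩
  · intro V W _ _ _ _ _ _ e x y _
    simp only [one0]
    rw [e.finrank_eq]
  · intro o ho
    have h : finrank F o.V = 0 := by
      by_contra h
      exact ho (if_neg h)
    refine ⟨h, ?_⟩
    have : Subsingleton o.V := (finrank_zero_iff).1 h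
    rw [isUnit_iff_inj]
    exact Function.injective_of_subsingleton _
  · have hirr : (Representation.trivial ℂ (GLn F 0) ℂ).IsIrreducible := by
      have : Nontrivial (Subrepresentation (Representation.trivial ℂ (GLn F 0) ℂ)) :=
        ⟨⊥, ⊤, fun h => by
          have : (⊥ : Submodule ℂ ℂ) = ⊤ := congrArg (·.toSubmodule) h
          exact bot_ne_top this⟩
      refine ⟨fun σ => ?_⟩
      rcases eq_bot_or_eq_top σ.toSubmodule with h | h
      · left
        exact Subrepresentation.toSubmodule_injective h
      · right
        exact Subrepresentation.toSubmodule_injective h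
    have := mem_irrChars_of_irreducible (Representation.trivial ℂ (GLn F 0) ℂ)
    convert this
    funext u
    simp [res, one0, Representation.character]

theorem adj_one0 [Finite F] [Nontrivial A] (ψ : Obj F → ℂ) : adj A ψ one0 = 0 := by
  funext o
  have : ∀ (x : A →ₗ[F] A) (u : o.V →ₗ[F] A), (one0 (ob (bm x u o.x)) : ℂ) = 0 := by
    intro x u
    refine if_neg ?_
    simp only
    rw [finrank_prod]
    have : 0 < finrank F A := finrank_pos
    omega
  change adj A ψ one0 (ob o.x) = 0
  rw [adj_ob]
  simp only [this, mul_zero, Finset.sum_const_zero]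

theorem one0_mul [Finite F] {f : Obj F → ℂ} (hf : IsInv f) : mul one0 f = f := by
  funext o
  change mul one0 f (ob o.x) = f (ob o.x)
  rw [mul_ob, Finset.sum_eq_single (⊥ : Submodule F o.V)]
  · rw [term_exact (mem_Irr.1 one0_mem).1 hf (⊥ : Submodule F o.V).subtype LinearMap.id
      (Submodule.injective_subtype _) Function.surjective_id (by simp) o.x 0 o.x ?_ (fun _ => rfl) _
      (by simp)]
    · have : (one0 (ob (0 : (⊥ : Submodule F o.V) →ₗ[F] (⊥ : Submodule F o.V))) : ℂ) = 1 :=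
        if_pos (by simp)
      rw [this, one_mul]
    · rintro ⟨a, ha⟩
      rw [Submodule.mem_bot] at ha
      subst ha
      simp
  · intro B _ hB
    unfold term
    split_ifs with h
    · have : (one0 (ob (o.x.restrict h)) : ℂ) = 0 := if_neg fun h0 => hB (by
        simp only at h0
        exact Submodule.finrank_eq_zero.1 h0)
      rw [this, zero_mul]
    · rfl
  · intro h
    exact absurd (Finset.mem_univ _) h

theorem seq_eq_mul [Finite F] {d : ℕ} {φ ρ : Obj F → ℂ} (hφ : φ ∈ Irr F d)
    (hρ : IsInv ρ) (m : ℕ) : seq φ m ρ = mul (seq φ m one0) ρ := by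
  induction m with
  | zero => simp only [seq]; rw [one0_mul hρ]
  | succ m ih =>
    simp only [seq]
    rw [ih, mul_assoc' (mem_Irr.1 hφ).1 (seq_isChar hφ (IsChar.of_irr one0_mem) m).isInv hρ]

/-- The degree of a product: the number of `N`-dimensional subspaces times the two degrees. -/
theorem mul_id [Finite F] {N k : ℕ} {f g : Obj F → ℂ} (hf : IsInv f) (hg : IsInv g)
    (df : Deg f N) :
    mul f g (ob (LinearMap.id : (Fin (N + k) → F) →ₗ[F] (Fin (N + k) → F))) =
    Nat.card {B : Submodule F (Fin (N + k) → F) // finrank F B = N} *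
      (f (ob (LinearMap.id : (Fin N → F) →ₗ[F] (Fin N → F))) *
      g (ob (LinearMap.id : (Fin k → F) →ₗ[F] (Fin k → F)))) := by
  classical
  rw [mul_ob, Nat.card_eq_fintype_card, Fintype.card_subtype, ← nsmul_eq_mul, ← Finset.sum_const,
    Finset.sum_filter]
  refine Finset.sum_congr rfl fun B _ => ?_
  split_ifs with h
  · have hB : B ≤ B.comap LinearMap.id := fun _ h => h
    have hq : finrank F ((Fin (N + k) → F) ⧸ B) = k := by
      have := B.finrank_quotient_add_finrank
      simp at this
      omega
    rw [term, dif_pos hB, ← id_val (V := B) hf h, ← id_val hg hq]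
    congr 1
    · congr 2
      exact B.mapQ_id
  · unfold term
    split_ifs with h'
    · by_contra h0
      exact h (df _ (left_ne_zero_of_mul h0)).1
    · rfl

/-- The graphs of maps `F ^ N → F ^ k` are `q ^ (N k)` subspaces of dimension `N`. -/
theorem card_sub_ge [Finite F] (N k : ℕ) :
    Nat.card F ^ (N * k) ≤ Nat.card {B : Submodule F (Fin (N + k) → F) // finrank F B = N} := by
  have e : ((Fin N → F) × (Fin k → F)) ≃ₗ[F] (Fin (N + k) → F) :=
    LinearEquiv.ofFinrankEq _ _ (by simp)
  let T : ((Fin N → F) →ₗ[F] (Fin k → F)) →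
      {B : Submodule F (Fin (N + k) → F) // finrank F B = N} := fun u =>
    ⟨u.graph.map (e : ((Fin N → F) × (Fin k → F)) →ₗ[F] (Fin (N + k) → F)), by
      rw [LinearEquiv.finrank_map_eq, LinearMap.graph_eq_range_prod, LinearMap.finrank_range_of_inj]
      · simp
      · intro a b h
        exact congrArg Prod.fst h⟩
  have hT : Function.Injective T := by
    intro u v h
    have h1 : u.graph.map (e : ((Fin N → F) × (Fin k → F)) →ₗ[F] (Fin (N + k) → F)) =
      v.graph.map (e : ((Fin N → F) × (Fin k → F)) →ₗ[F] (Fin (N + k) → F)) := congrArg (·.1) h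
    have h2 := Submodule.map_injective_of_injective e.injective h1
    refine LinearMap.ext fun a => ?_
    have h3 : ((a, u a) : (Fin N → F) × (Fin k → F)) ∈ u.graph := by simp [LinearMap.mem_graph_iff]
    rw [h2, LinearMap.mem_graph_iff] at h3
    exact h3
  refine le_trans (le_of_eq ?_) (Nat.card_le_card_of_injective T hT)
  rw [Module.natCard_eq_pow_finrank (K := F) (V := (Fin N → F) →ₗ[F] (Fin k → F)),
    Module.finrank_linearMap]
  simp

/-- A parabolically induced character has degree at least `q ^ (N k)` times the product of degrees. -/
theorem dg_mul_ge [Finite F] {N k : ℕ} {τ ρ : Obj F → ℂ} (hτ : τ ∈ Irr F N) (hρ : ρ ∈ Irr F k) :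
    (Nat.card F : ℝ) ^ (N * k) * (dg N τ * dg k ρ) ≤ dg (N + k) (mul τ ρ) := by
  obtain ⟨h1, h2, -⟩ := mem_Irr.1 hτ
  obtain ⟨h3, h4, -⟩ := mem_Irr.1 hρ
  have h5 := mul_id (k := k) h1 h3 h2
  rw [dg_val hτ, dg_val hρ] at h5
  have h6 : dg (N + k) (mul τ ρ) =
      Nat.card {B : Submodule F (Fin (N + k) → F) // finrank F B = N} * (dg N τ * dg k ρ) := by
    rw [dg, h5, ← Complex.ofReal_natCast, ← Complex.ofReal_mul, ← Complex.ofReal_mul,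
      Complex.ofReal_re]
  rw [h6]
  have h7 := dg_ge_one hτ
  have h8 := dg_ge_one hρ
  have h9 := card_sub_ge (F := F) N k
  gcongr
  exact_mod_cast h9

theorem mul_ne_zero' [Finite F] {N k : ℕ} {τ ρ : Obj F → ℂ} (hτ : τ ∈ Irr F N)
    (hρ : ρ ∈ Irr F k) : mul τ ρ ≠ 0 := by
  intro h
  have h1 := dg_mul_ge hτ hρ
  rw [h] at h1
  have h2 : dg (F := F) (N + k) 0 = 0 := by simp [dg]
  have h7 := dg_ge_one hτ
  have h8 := dg_ge_one hρ
  have : (0 : ℝ) < (Nat.card F : ℝ) ^ (N * k) * (dg N τ * dg k ρ) := by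
    have : 0 < (Nat.card F : ℝ) := by exact_mod_cast Nat.card_pos
    positivity
  linarith

/-- If `ρ` is killed by the adjoint of a cuspidal `φ`, then every constituent of `φ * ⋯ * φ * ρ`
has the form `τ * ρ` with `τ` a constituent of `φ * ⋯ * φ`. -/
theorem constituent [Finite F] [Nontrivial A] {k m : ℕ} {φ ρ χ : Obj F → ℂ}
    (hφ : φ ∈ Irr F (finrank F A)) (hc : Cusp A (inv φ)) (hρ : ρ ∈ Irr F k)
    (h0 : adj A (inv φ) ρ = 0) (hχ : χ ∈ Irr F (m * finrank F A + k))
    (hne : ip (m * finrank F A + k) (seq φ m ρ) χ ≠ 0) :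
    ∃ τ ∈ Irr F (m * finrank F A), ip (m * finrank F A) (seq φ m one0) τ ≠ 0 ∧ χ = mul τ ρ := by
  classical
  set N := m * finrank F A with hN
  have hΦ : IsChar N (seq φ m one0) := seq_isChar hφ (IsChar.of_irr one0_mem) m
  have hρ' := IsChar.of_irr hρ
  have hmul : ∀ τ ∈ Irr F N, IsChar (N + k) (mul τ ρ) := fun τ h => IsChar.mul h hρ'
  choose! a ha using hΦ.nat
  have hseq : seq φ m ρ = ∑ τ ∈ Irr F N, (a τ : ℂ) • mul τ ρ := by
    rw [seq_eq_mul hφ hρ'.isInv, expand hΦ.isInv hΦ.deg, mul_sum_left]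
    exact Finset.sum_congr rfl fun τ h => by rw [ha τ h]
  have hn : ∀ τ ∈ Irr F N, ∀ σ ∈ Irr F N, ∃ b : ℕ, ip (N + k) (mul τ ρ) (mul σ ρ) = b :=
    fun τ h σ h' => (hmul τ h).ip_nat (hmul σ h')
  choose! b hb using hn
  have hpos : ∀ τ ∈ Irr F N, 1 ≤ b τ τ := by
    intro τ h
    obtain ⟨χ', h1, h2⟩ := (hmul τ h).exists_irr (mul_ne_zero' h hρ)
    have := (hmul τ h).ip_ne_zero (hmul τ h) h1 h2 h2
    rw [hb τ h τ h, Nat.cast_ne_zero] at this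
    omega
  have hs1 : ∑ τ ∈ Irr F N, a τ * a τ = m.factorial := by
    have := ip_seq hφ hc one0_mem (adj_one0 _) m
    rw [Nat.add_zero, ← hN, parseval hΦ.isInv hΦ.deg] at this
    have h2 : ((∑ χ ∈ Irr F N, a χ * a χ : ℕ) : ℂ) = m.factorial := by
      rw [← this]
      push_cast
      exact Finset.sum_congr rfl fun χ h => by rw [ha χ h]
    exact_mod_cast h2
  have hs2 : ∑ τ ∈ Irr F N, ∑ σ ∈ Irr F N, a τ * (a σ * b σ τ) = m.factorial := by
    have := ip_seq hφ hc hρ h0 m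
    rw [← hN, hseq, ip_sum_left] at this
    have h2 : ((∑ τ ∈ Irr F N, ∑ σ ∈ Irr F N, a τ * (a σ * b σ τ) : ℕ) : ℂ) = m.factorial := by
      rw [← this]
      push_cast
      refine Finset.sum_congr rfl fun τ h => ?_
      rw [← Finset.mul_sum, ip_comm, ip_sum_left]
      congr 1
      exact Finset.sum_congr rfl fun σ h' => by rw [hb σ h' τ h]
    exact_mod_cast h2
  have key : ∀ τ ∈ Irr F N, a τ * a τ = ∑ σ ∈ Irr F N, a τ * (a σ * b σ τ) := by
    rw [← Finset.sum_eq_sum_iff_of_le, hs1, hs2]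
    intro τ h
    refine le_trans ?_ (Finset.single_le_sum (f := fun σ => a τ * (a σ * b σ τ))
      (fun _ _ => Nat.zero_le _) h)
    have := hpos τ h
    gcongr
    exact Nat.le_mul_of_pos_right _ this
  have hirr : ∀ τ ∈ Irr F N, a τ ≠ 0 → mul τ ρ ∈ Irr F (N + k) := by
    intro τ h hne
    refine (hmul τ h).irr_of_norm ?_
    have h1 : a τ * (a τ * b τ τ) ≤ a τ * a τ := by
      rw [key τ h]
      exact Finset.single_le_sum (f := fun σ => a τ * (a σ * b σ τ)) (fun _ _ => Nat.zero_le _) h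
    have h2 := Nat.le_of_mul_le_mul_left h1 (Nat.pos_of_ne_zero hne)
    have h3 : a τ * b τ τ ≤ a τ * 1 := by omega
    have h4 := Nat.le_of_mul_le_mul_left h3 (Nat.pos_of_ne_zero hne)
    have h5 : b τ τ = 1 := le_antisymm h4 (hpos τ h)
    rw [hb τ h τ h, h5, Nat.cast_one]
  rw [hseq, ip_sum_left] at hne
  obtain ⟨τ, h, h'⟩ := Finset.exists_ne_zero_of_sum_ne_zero hne
  have h1 : a τ ≠ 0 := by
    have := left_ne_zero_of_mul h'
    rwa [Nat.cast_ne_zero] at this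
  refine ⟨τ, h, by rw [ha τ h]; exact left_ne_zero_of_mul h', ?_⟩
  have h2 := right_ne_zero_of_mul h'
  rw [ip_irr (hirr τ h h1) hχ] at h2
  by_contra h3
  exact h2 (if_neg fun h4 => h3 h4.symm)

theorem le_of_adj_ne_zero [Finite F] {k : ℕ} {ψ ρ : Obj F → ℂ} (hρ : Deg ρ k)
    (h : adj A ψ ρ ≠ 0) : finrank F A ≤ k := by
  obtain ⟨o, ho⟩ := Function.ne_iff.1 h
  obtain ⟨x, -, hx⟩ := Finset.exists_ne_zero_of_sum_ne_zero (right_ne_zero_of_mul ho)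
  obtain ⟨u, -, hu⟩ := Finset.exists_ne_zero_of_sum_ne_zero hx
  have h1 := (hρ _ (right_ne_zero_of_mul hu)).1
  simp only at h1
  rw [finrank_prod] at h1
  omega

theorem exists_of_adj_ne_zero [Finite F] {k : ℕ} {φ ρ : Obj F → ℂ} (hφ : φ ∈ Irr F (finrank F A))
    (hρ : ρ ∈ Irr F k) (h : adj A (inv φ) ρ ≠ 0) :
    ∃ k', finrank F A + k' = k ∧ ∃ σ ∈ Irr F k', ip k (mul φ σ) ρ ≠ 0 := by
  obtain ⟨k', rfl⟩ := Nat.exists_eq_add_of_le (le_of_adj_ne_zero (mem_Irr.1 hρ).2.1 h)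
  obtain ⟨σ, h1, h2⟩ := (D_isChar hφ hρ).exists_irr h
  refine ⟨k', rfl, σ, h1, ?_⟩
  obtain ⟨a1, a2, -⟩ := mem_Irr.1 hφ
  obtain ⟨b1, b2, -⟩ := mem_Irr.1 hρ
  obtain ⟨c1, c2, -⟩ := mem_Irr.1 h1
  rwa [ip_mul a1 c1 b1 a2 c2 b2, ip_comm]

theorem seq_mono [Finite F] {d k m n : ℕ} {φ f ρ χ : Obj F → ℂ} (hφ : φ ∈ Irr F d)
    (hf : IsChar k f) (hρ : ρ ∈ Irr F k) (hn : m * d + k = n) (hχ : χ ∈ Irr F n)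
    (h1 : ip k f ρ ≠ 0) (h2 : ip n (seq φ m ρ) χ ≠ 0) : ip n (seq φ m f) χ ≠ 0 := by
  subst hn
  choose! a ha using hf.nat
  have hn : ∀ σ ∈ Irr F k, ∃ b : ℕ, ip (m * d + k) (seq φ m σ) χ = b := fun σ h =>
    (seq_isChar hφ (IsChar.of_irr h) m).nat χ hχ
  choose! b hb using hn
  rw [expand hf.isInv hf.deg, seq_sum, ip_sum_left,
    Finset.sum_congr rfl (g := fun σ => ((a σ * b σ : ℕ) : ℂ))
    (fun σ h => by rw [ha σ h, hb σ h]; push_cast; rfl), ← Nat.cast_sum, Nat.cast_ne_zero]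
  have hle := Finset.single_le_sum (f := fun σ => a σ * b σ) (fun _ _ => Nat.zero_le _) hρ
  rw [ha ρ hρ, Nat.cast_ne_zero] at h1
  rw [hb ρ hρ, Nat.cast_ne_zero] at h2
  have := Nat.mul_pos (Nat.pos_of_ne_zero h1) (Nat.pos_of_ne_zero h2)
  omega

/-- Every irreducible character not killed by the adjoint of the cuspidal `φ` is a constituent of
some `φ * ⋯ * φ * ρ` with `ρ` killed by the adjoint. -/
theorem ladder [Finite F] [Nontrivial A] {n : ℕ} {φ χ : Obj F → ℂ}
    (hφ : φ ∈ Irr F (finrank F A)) (hχ : χ ∈ Irr F n) (h : adj A (inv φ) χ ≠ 0) :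
    ∃ m k, 1 ≤ m ∧ m * finrank F A + k = n ∧ ∃ ρ ∈ Irr F k, adj A (inv φ) ρ = 0 ∧
      ip n (seq φ m ρ) χ ≠ 0 := by
  classical
  let P : ℕ → Prop := fun m => ∃ k, m * finrank F A + k = n ∧ ∃ ρ ∈ Irr F k,
    ip n (seq φ m ρ) χ ≠ 0
  have hd : 0 < finrank F A := finrank_pos
  have hb : ∀ m, P m → m ≤ n := by
    rintro m ⟨k, hk, -⟩
    nlinarith
  have hP1 : P 1 := by
    obtain ⟨k, hk, σ, h1, h2⟩ := exists_of_adj_ne_zero hφ hχ h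
    exact ⟨k, by omega, σ, h1, h2⟩
  have hn1 := hb 1 hP1
  have hs := Nat.findGreatest_spec (P := P) hn1 hP1
  have hg := Nat.le_findGreatest (P := P) hn1 hP1
  set m := Nat.findGreatest P n with hm
  obtain ⟨k, hk, ρ, hρ, hne⟩ := hs
  refine ⟨m, k, hg, hk, ρ, hρ, ?_, hne⟩
  by_contra h0
  obtain ⟨k', hk', σ, h1, h2⟩ := exists_of_adj_ne_zero hφ hρ h0
  have hP : P (m + 1) := by
    refine ⟨k', by rw [← hk, ← hk']; ring, σ, h1, ?_⟩
    rw [seq_succ']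
    refine seq_mono hφ ?_ hρ hk hχ h2 hne
    rw [← hk']
    exact IsChar.mul hφ (IsChar.of_irr h1)
  have := Nat.le_findGreatest (P := P) (hb _ hP) hP
  omega

/-! ### Unipotent radicals and cuspidal support -/

theorem unit_apply_inv (g : (V →ₗ[F] V)ˣ) (w : V) :
    (g : V →ₗ[F] V) (((g⁻¹ : (V →ₗ[F] V)ˣ) : V →ₗ[F] V) w) = w := by
  rw [← Module.End.mul_apply, Units.mul_inv, Module.End.one_apply]

theorem unit_inv_apply (g : (V →ₗ[F] V)ˣ) (w : V) :
    ((g⁻¹ : (V →ₗ[F] V)ˣ) : V →ₗ[F] V) ((g : V →ₗ[F] V) w) = w := by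
  rw [← Module.End.mul_apply, Units.inv_mul, Module.End.one_apply]

/-- The unipotent radical attached to a subspace `C`: all `g` acting trivially on `C` and on
`V / C`. -/
def unip (C : Submodule F V) : Subgroup (V →ₗ[F] V)ˣ where
  carrier := {g | (∀ w, (g : V →ₗ[F] V) w - w ∈ C) ∧ ∀ w ∈ C, (g : V →ₗ[F] V) w = w}
  one_mem' := by constructor <;> simp
  mul_mem' := by
    rintro g h ⟨h1, h2⟩ ⟨h3, h4⟩
    refine ⟨fun w => ?_, fun w hw => ?_⟩
    · have := C.add_mem (h1 ((h : V →ₗ[F] V) w)) (h3 w)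
      simpa using this
    · rw [Units.val_mul, Module.End.mul_apply, h4 w hw, h2 w hw]
  inv_mem' := by
    rintro g ⟨h1, h2⟩
    refine ⟨fun w => ?_, fun w hw => ?_⟩
    · have := C.neg_mem (h1 (((g⁻¹ : (V →ₗ[F] V)ˣ) : V →ₗ[F] V) w))
      rw [unit_apply_inv] at this
      simpa using this
    · have := unit_inv_apply g w
      rwa [h2 w hw] at this

theorem mem_unip {C : Submodule F V} {g : (V →ₗ[F] V)ˣ} : g ∈ unip C ↔
    (∀ w, (g : V →ₗ[F] V) w - w ∈ C) ∧ ∀ w ∈ C, (g : V →ₗ[F] V) w = w := Iff.rfl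

/-- Vectors fixed by the unipotent radical of `C`. -/
def InvS {X : Type} [AddCommGroup X] [Module ℂ X] (R : Representation ℂ (V →ₗ[F] V)ˣ X)
    (C : Submodule F V) : Submodule ℂ X where
  carrier := {v | ∀ g ∈ unip C, R g v = v}
  add_mem' := by
    intro a b ha hb g hg
    rw [map_add, ha g hg, hb g hg]
  zero_mem' := by intro g _; simp
  smul_mem' := by
    intro c a ha g hg
    rw [map_smul, ha g hg]

theorem mem_InvS {X : Type} [AddCommGroup X] [Module ℂ X] {R : Representation ℂ (V →ₗ[F] V)ˣ X}
    {C : Submodule F V} {v : X} : v ∈ InvS R C ↔ ∀ g ∈ unip C, R g v = v := Iff.rfl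

/-- A representation of `GL(V)` without nonzero vectors fixed by the unipotent radical of a proper
parabolic subgroup. -/
def NoInv {X : Type} [AddCommGroup X] [Module ℂ X] (R : Representation ℂ (V →ₗ[F] V)ˣ X) : Prop :=
  ∀ C : Submodule F V, C ≠ ⊥ → C ≠ ⊤ → InvS R C = ⊥

/-- The character of a representation without vectors fixed by unipotent radicals has vanishing
averages over the cosets of these radicals. -/
theorem cusp_of_noInv [Finite F] {Y : Type} [AddCommGroup Y] [Module ℂ Y] [FiniteDimensional ℂ Y]
    {S : Representation ℂ (A →ₗ[F] A)ˣ Y} (hS : NoInv S) {φ : Obj F → ℂ}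
    (dφ : Deg φ (finrank F A)) (hφ : res A φ = S.character) : Cusp A (inv φ) := by
  classical
  intro C hC hC' z
  have dφ' := dφ.inv
  let f : (A →ₗ[F] A) → ℂ := fun x =>
    if LinearMap.range (x - LinearMap.id) ≤ C ∧ C ≤ LinearMap.ker (x - LinearMap.id) then
      inv φ (ob (z ∘ₗ x)) else 0
  have h1 : ∑ h : A →ₗ[F] A, (if LinearMap.range h ≤ C ∧ C ≤ LinearMap.ker h then
      inv φ (ob (z ∘ₗ (LinearMap.id + h))) else 0) = ∑ x, f x := by
    refine Fintype.sum_equiv (Equiv.addLeft LinearMap.id) _ _ fun h => ?_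
    simp only [f, Equiv.coe_addLeft, add_sub_cancel_left]
  rw [h1]
  have hz : ∀ x : A →ₗ[F] A, ¬ (IsUnit x ∧ IsUnit z) → inv φ (ob (z ∘ₗ x)) = 0 := by
    intro x hx
    by_contra hne
    have h2 : IsUnit (z ∘ₗ x) := (dφ' _ hne).2
    have h3 : IsUnit x := (isUnit_iff_inj x).2 fun a b hab =>
      (isUnit_iff_inj _).1 h2 (by simp [hab])
    refine hx ⟨h3, ?_⟩
    obtain ⟨u, rfl⟩ := h3
    have h4 := h2.mul (u⁻¹).isUnit
    change IsUnit (z * (u : A →ₗ[F] A) * _) at h4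
    rwa [mul_assoc, Units.mul_inv, mul_one] at h4
  rw [sum_units f (fun x hx => by
    simp only [f]
    rw [hz x (fun h => hx h.1), ite_self])]
  by_cases hzu : IsUnit z
  swap
  · refine Finset.sum_eq_zero fun u _ => ?_
    simp only [f]
    rw [hz _ (fun h => hzu h.2), ite_self]
  obtain ⟨w, rfl⟩ := hzu
  let T : Y →ₗ[ℂ] Y := ∑ u : (A →ₗ[F] A)ˣ, if u ∈ unip C then S u⁻¹ else 0
  have hT : T = 0 := by
    refine LinearMap.ext fun v => ?_
    have : T v ∈ InvS S C := by
      intro g hg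
      simp only [T, LinearMap.sum_apply, map_sum]
      refine Fintype.sum_equiv (Equiv.mulRight g⁻¹) _ _ fun u => ?_
      change _ = (if u * g⁻¹ ∈ unip C then S (u * g⁻¹)⁻¹ else 0) v
      have h5 : u * g⁻¹ ∈ unip C ↔ u ∈ unip C :=
        (unip C).mul_mem_cancel_right ((unip C).inv_mem hg)
      by_cases hu : u ∈ unip C
      · rw [if_pos hu, if_pos (h5.2 hu), mul_inv_rev, inv_inv, map_mul, Module.End.mul_apply]
      · rw [if_neg hu, if_neg (fun h => hu (h5.1 h))]
        simp
    rw [hS C hC hC', Submodule.mem_bot] at this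
    rw [this, LinearMap.zero_apply]
  have h6 : ∑ u : (A →ₗ[F] A)ˣ, f u = LinearMap.trace ℂ Y (T * S w⁻¹) := by
    simp only [T, Finset.sum_mul, map_sum]
    refine Finset.sum_congr rfl fun u _ => ?_
    have h7 : u ∈ unip C ↔ LinearMap.range ((u : A →ₗ[F] A) - LinearMap.id) ≤ C ∧
        C ≤ LinearMap.ker ((u : A →ₗ[F] A) - LinearMap.id) := by
      rw [mem_unip]
      refine and_congr ?_ ?_
      · constructor
        · rintro h _ ⟨v, rfl⟩
          exact h v
        · intro h v
          exact h ⟨v, rfl⟩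
      · refine forall_congr' fun v => imp_congr_right fun _ => ?_
        rw [LinearMap.mem_ker, LinearMap.sub_apply, sub_eq_zero, LinearMap.id_apply]
    simp only [f]
    by_cases hu : u ∈ unip C
    · rw [if_pos hu, if_pos (h7.1 hu)]
      have h8 : ((w : A →ₗ[F] A) ∘ₗ (u : A →ₗ[F] A)) = ((w * u : (A →ₗ[F] A)ˣ) : A →ₗ[F] A) := rfl
      rw [h8, inv_ob_unit]
      change res A φ (w * u)⁻¹ = _
      rw [hφ, mul_inv_rev, Representation.character, map_mul]
    · rw [if_neg hu, if_neg (fun h => hu (h7.2 h))]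
      simp
  rw [h6, hT, zero_mul, map_zero]

theorem AffMap.exists_unit {X Y : Type} [AddCommGroup X] [Module ℂ X] [AddCommGroup Y] [Module ℂ Y]
    {R : Representation ℂ (Q × A →ₗ[F] Q × A)ˣ X} {S : Representation ℂ (A →ₗ[F] A)ˣ Y}
    {L : Y →ₗ[ℂ] X} (hL : AffMap R S L) (g : (Q × A →ₗ[F] Q × A)ˣ)
    (hg : ∀ w, ((g : Q × A →ₗ[F] Q × A) w).1 = w.1) :
    ∃ x : (A →ₗ[F] A)ˣ, (∀ a, (x : A →ₗ[F] A) a = ((g : Q × A →ₗ[F] Q × A) (0, a)).2) ∧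
      ∀ y, L (S x y) = R g (L y) := by
  let x : A →ₗ[F] A := LinearMap.snd F Q A ∘ₗ (g : Q × A →ₗ[F] Q × A) ∘ₗ LinearMap.inr F Q A
  let u : Q →ₗ[F] A := LinearMap.snd F Q A ∘ₗ (g : Q × A →ₗ[F] Q × A) ∘ₗ LinearMap.inl F Q A
  have hgx : (g : Q × A →ₗ[F] Q × A) = bm x u LinearMap.id := by
    refine LinearMap.ext fun ⟨b, a⟩ => ?_
    refine Prod.ext (hg (b, a)) ?_
    have : ((b, a) : Q × A) = (b, 0) + (0, a) := by simp
    conv_lhs => rw [this, map_add]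
    rfl
  have hx : IsUnit x := by
    rw [isUnit_iff_inj]
    have := (isUnit_iff_inj _).1 g.isUnit
    rw [hgx, bm_injective_iff] at this
    exact this.1
  refine ⟨hx.unit, fun a => rfl, fun y => hL hx.unit u g hgx y⟩

/-- The block-diagonal embedding of `GL(A)` into `GL(Q × A)`. -/
def blk (Q A : Type) [AddCommGroup Q] [Module F Q] [AddCommGroup A] [Module F A] [Finite Q]
    [Finite A] : (A →ₗ[F] A)ˣ →* (Q × A →ₗ[F] Q × A)ˣ :=
  Units.map
    { toFun := fun x => bm x 0 LinearMap.id
      map_one' := by refine LinearMap.ext fun ⟨b, a⟩ => ?_; simp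
      map_mul' := fun x y => by refine LinearMap.ext fun ⟨b, a⟩ => ?_; simp }

theorem blk_val (x : (A →ₗ[F] A)ˣ) : ((blk Q A x : (Q × A →ₗ[F] Q × A)ˣ) : Q × A →ₗ[F] Q × A) =
    bm (x : A →ₗ[F] A) 0 LinearMap.id := rfl

/-- An irreducible character of `GL_d(F)` afforded by a representation without vectors fixed by
unipotent radicals, i.e. a cuspidal irreducible character. -/
def CuspIrr (F : Type) [Field F] [Finite F] (d : ℕ) (φ : Obj F → ℂ) : Prop :=
  φ ∈ Irr F d ∧ ∃ (Y : Type) (_ : AddCommGroup Y) (_ : Module ℂ Y) (_ : FiniteDimensional ℂ Y)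
    (S : Representation ℂ ((Fin d → F) →ₗ[F] (Fin d → F))ˣ Y), S.IsIrreducible ∧
    res (Fin d → F) φ = S.character ∧ NoInv S

theorem map_ne_bot {f : V →ₗ[F] W} (hf : Function.Injective f) {C : Submodule F V} (hC : C ≠ ⊥) :
    C.map f ≠ ⊥ := fun h =>
  hC (Submodule.map_injective_of_injective hf (h.trans (Submodule.map_bot f).symm))

/-- If `0 × A` is a nonzero subspace of minimal dimension whose unipotent radical has nonzero fixed
vectors, then an irreducible subrepresentation of these, for `GL(A)`, is cuspidal. -/
theorem cusp_support_aux [Finite F] {n : ℕ} {χ : Obj F → ℂ} (dχ : Deg χ n) {X : Type}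
    [AddCommGroup X]
    [Module ℂ X] [FiniteDimensional ℂ X] (R : Representation ℂ (Q × A →ₗ[F] Q × A)ˣ X)
    (hχ : res (Q × A) χ = R.character) (h1 : InvS R (sA F Q A) ≠ ⊥)
    (h2 : ∀ C : Submodule F (Q × A), C ≠ ⊥ → finrank F C < finrank F A → InvS R C = ⊥) :
    ∃ φ ∈ Irr F (finrank F A), (∃ (Y : Type) (_ : AddCommGroup Y) (_ : Module ℂ Y)
      (_ : FiniteDimensional ℂ Y) (S : Representation ℂ (A →ₗ[F] A)ˣ Y), S.IsIrreducible ∧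
      res A φ = S.character ∧ NoInv S) ∧ adj A (inv φ) χ ≠ 0 := by
  let Z : Subrepresentation (pb (blk (F := F) Q A) R) := ⟨InvS R (sA F Q A), fun x v hv g hg => by
    rw [pb_apply]
    have : (blk Q A x)⁻¹ * g * blk Q A x ∈ unip (sA F Q A) := by
      have hb : ((blk Q A x)⁻¹ : (Q × A →ₗ[F] Q × A)ˣ) = blk Q A x⁻¹ := (map_inv _ _).symm
      rw [hb]
      rw [mem_unip] at hg ⊢
      obtain ⟨hg1, hg2⟩ := hg
      refine ⟨fun w => ?_, fun w hw => ?_⟩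
      · rw [mem_sA]
        have := hg1 ((blk Q A x : (Q × A →ₗ[F] Q × A)ˣ).val w)
        rw [mem_sA] at this
        simp only [Units.val_mul, Module.End.mul_apply, blk_val] at this ⊢
        exact this
      · rw [mem_sA] at hw
        have := hg2 ((blk Q A x : (Q × A →ₗ[F] Q × A)ˣ).val w) (by rw [mem_sA, blk_val]; exact hw)
        rw [Units.val_mul, Units.val_mul, Module.End.mul_apply, Module.End.mul_apply, this, ← hb]
        exact unit_inv_apply _ _
    have h3 := hv _ this
    have h4 : g * blk Q A x = blk Q A x * ((blk Q A x)⁻¹ * g * blk Q A x) := by group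
    rw [← Module.End.mul_apply, ← map_mul, h4, map_mul, Module.End.mul_apply, h3]⟩
  have hnt : Nontrivial Z.toSubmodule := Submodule.nontrivial_iff_ne_bot.2 h1
  obtain ⟨τ, hτ⟩ := exists_irr_sub Z.toRepresentation
  let S := τ.toRepresentation
  let L : τ.toSubmodule →ₗ[ℂ] X := Z.toSubmodule.subtype ∘ₗ τ.toSubmodule.subtype
  have hLi : Function.Injective L := fun a b h => Subtype.ext (Subtype.ext h)
  have hLx : ∀ x y, L (S x y) = R (blk Q A x) (L y) := fun x y => rfl
  have hL : AffMap R S L := by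
    intro x u g hg y
    rw [hLx]
    have h3 : g * (blk Q A x)⁻¹ ∈ unip (sA F Q A) := by
      rw [← map_inv, mem_unip]
      refine ⟨fun ⟨b, a⟩ => ?_, fun ⟨b, a⟩ hw => ?_⟩
      · rw [mem_sA, Units.val_mul, hg, blk_val]
        simp
      · rw [mem_sA] at hw
        change b = 0 at hw
        subst hw
        rw [Units.val_mul, hg, blk_val]
        simp only [Module.End.mul_apply, bm_apply, map_zero, zero_add]
        rw [unit_apply_inv]
    have h4 : R (blk Q A x) (L y) ∈ InvS R (sA F Q A) := by
      rw [← hLx]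
      exact (τ.toSubmodule.subtype (S x y)).2
    rw [← h4 _ h3, ← Module.End.mul_apply, ← map_mul]
    simp
  have hnt' := irreducible_nontrivial S
  obtain ⟨φ, hφ, hφ'⟩ := exists_Irr (V := A) rfl (mem_irrChars_of_irreducible S)
  refine ⟨φ, hφ, ⟨_, _, _, inferInstance, S, hτ, hφ', ?_⟩, ?_⟩
  · intro C hC hC'
    rw [Submodule.eq_bot_iff]
    intro v hv
    have h5 : L v ∈ InvS R (C.map (LinearMap.inr F Q A)) := by
      intro g hg
      rw [mem_unip] at hg
      obtain ⟨hg1, hg2⟩ := hg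
      obtain ⟨x, hx, hx'⟩ := hL.exists_unit g (fun w => by
        obtain ⟨c, -, hc⟩ := hg1 w
        have := congrArg Prod.fst hc
        rw [LinearMap.inr_apply, Prod.fst_sub] at this
        exact (sub_eq_zero.1 this.symm))
      rw [← hx', hv]
      rw [mem_unip]
      refine ⟨fun a => ?_, fun a ha => ?_⟩
      · obtain ⟨c, h6, hc⟩ := hg1 (0, a)
        have := congrArg Prod.snd hc
        rw [LinearMap.inr_apply, Prod.snd_sub] at this
        rw [hx, ← this]
        exact h6
      · rw [hx, hg2 (0, a) ⟨a, ha, rfl⟩]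
    rw [h2, Submodule.mem_bot] at h5
    · exact hLi (h5.trans (map_zero L).symm)
    · exact map_ne_bot LinearMap.inr_injective hC
    · rw [LinearEquiv.finrank_eq (Submodule.equivMapOfInjective _ LinearMap.inr_injective C).symm]
      exact Submodule.finrank_lt hC'
  · have := (adj_one R S dχ hχ hφ').2 ⟨L, fun h0 => ?_, hL⟩
    · intro h0
      exact this (by rw [h0]; rfl)
    · obtain ⟨v, hv⟩ := exists_ne (0 : τ.toSubmodule)
      exact hv (hLi (by rw [h0]; rfl))

theorem InvS_pb {X : Type} [AddCommGroup X] [Module ℂ X] (R : Representation ℂ (W →ₗ[F] W)ˣ X)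
    (e : V ≃ₗ[F] W) (C : Submodule F V) :
    InvS (pb (glCongr e : (V →ₗ[F] V)ˣ →* (W →ₗ[F] W)ˣ) R) C =
      InvS R (C.map (e : V →ₗ[F] W)) := by
  have key : ∀ g, g ∈ unip C ↔ glCongr e g ∈ unip (C.map (e : V →ₗ[F] W)) := by
    intro g
    rw [mem_unip, mem_unip, e.surjective.forall]
    refine and_congr (forall_congr' fun w => ?_) ?_
    · rw [glCongr_apply, ← map_sub]
      exact (Submodule.mem_map_equiv (e := e) C).trans (by simp) |>.symm
    · rw [e.surjective.forall]
      refine forall_congr' fun w => ?_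
      rw [glCongr_apply, e.injective.eq_iff]
      refine imp_congr_left ?_
      exact (Submodule.mem_map_equiv (e := e) C).trans (by simp) |>.symm
  ext v
  rw [mem_InvS, mem_InvS, (glCongr e).surjective.forall]
  refine forall_congr' fun g => ?_
  rw [← key]
  rfl

/-- Every irreducible character of `GL_n`, `n ≥ 1`, has a cuspidal character in its support. -/
theorem cusp_support [Finite F] {n : ℕ} (hn : 1 ≤ n) {χ : Obj F → ℂ} (hχ : χ ∈ Irr F n) :
    ∃ d, 1 ≤ d ∧ d ≤ n ∧ ∃ φ, CuspIrr F d φ ∧ adj (Fin d → F) (inv φ) χ ≠ 0 := by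
  classical
  obtain ⟨X, _, _, _, R, hR, hR'⟩ := Irr_rep hχ (Fin n → F) (by simp)
  have hnt := irreducible_nontrivial R
  let P : ℕ → Prop := fun d => ∃ C : Submodule F (Fin n → F), C ≠ ⊥ ∧ finrank F C = d ∧ InvS R C ≠ ⊥
  have hP : ∃ d, P d := by
    refine ⟨n, ⊤, ?_, by simp, ?_⟩
    · intro h
      have := congrArg (fun C : Submodule F (Fin n → F) => finrank F C) h
      simp at this
      omega
    · obtain ⟨v, hv⟩ := exists_ne (0 : X)
      refine (Submodule.ne_bot_iff _).2 ⟨v, fun g hg => ?_, hv⟩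
      have : g = 1 := by
        refine Units.ext (LinearMap.ext fun w => hg.2 w trivial)
      rw [this, map_one, Module.End.one_apply]
  obtain ⟨C, hC, hCd, hCi⟩ := Nat.find_spec hP
  have hmin : ∀ C : Submodule F (Fin n → F), C ≠ ⊥ → finrank F C < Nat.find hP → InvS R C = ⊥ := by
    intro C h1 h2
    by_contra h3
    exact Nat.find_min hP h2 ⟨C, h1, rfl, h3⟩
  set d := Nat.find hP with hd
  have hdn : d ≤ n := by
    rw [← hCd]
    have := Submodule.finrank_le C
    simpa using this
  have hd1 : 1 ≤ d := by
    rw [← hCd]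
    exact Submodule.one_le_finrank_iff.2 hC
  obtain ⟨e, he⟩ := exists_split (F := F) (V := Fin n → F) (Q := Fin (n - d) → F) (A := Fin d → F) C
    (by simp [hCd]) (by simp; omega)
  obtain ⟨φ, h1, h2, h3⟩ := cusp_support_aux (Q := Fin (n - d) → F) (A := Fin d → F)
    (mem_Irr.1 hχ).2.1 (pb (glCongr e : _ →* _) R) (by
      funext u
      rw [← res_glCongr (mem_Irr.1 hχ).1 e, hR']
      rfl) (by rw [InvS_pb, he]; exact hCi) (by
      intro B hB hlt
      rw [InvS_pb]
      refine hmin _ ?_ ?_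
      · exact map_ne_bot e.injective hB
      · rw [LinearEquiv.finrank_map_eq]
        simpa using hlt)
  refine ⟨d, hd1, hdn, φ, ⟨?_, h2⟩, h3⟩
  simpa using h1

/-! ### Transvections and Whittaker-type eigenspaces -/

section Whittaker

/-- The transvection `w ↦ w + ℓ(w) a`, where `ℓ(a) = 0`. -/
def tv (ℓ : V →ₗ[F] F) (a : V) (h : ℓ a = 0) : (V →ₗ[F] V)ˣ where
  val := LinearMap.id + ℓ.smulRight a
  inv := LinearMap.id - ℓ.smulRight a
  val_inv := by
    refine LinearMap.ext fun w => ?_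
    simp [h]
  inv_val := by
    refine LinearMap.ext fun w => ?_
    simp [h]

theorem tv_apply (ℓ : V →ₗ[F] F) (a : V) (h : ℓ a = 0) (w : V) :
    ((tv ℓ a h : (V →ₗ[F] V)ˣ) : V →ₗ[F] V) w = w + ℓ w • a := rfl

theorem unit_ext {g h : (V →ₗ[F] V)ˣ} (H : ∀ w, (g : V →ₗ[F] V) w = (h : V →ₗ[F] V) w) : g = h :=
  Units.ext (LinearMap.ext H)

variable {X : Type} [AddCommGroup X] [Module ℂ X]

/-- The `j`-th Whittaker-type space attached to the vectors `e 0, …, e j`: the common eigenspace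
on which, for `i < j`, the transvections `1 + ℓ ⊗ e i` with `ℓ` killing `e 0, …, e i` act by
`ψ (ℓ (e (i + 1)))`. -/
def Mlev (R : Representation ℂ (V →ₗ[F] V)ˣ X) (ψ : AddChar F ℂ) (e : ℕ → V) (j : ℕ) :
    Submodule ℂ X where
  carrier := {v | ∀ i < j, ∀ (ℓ : V →ₗ[F] F) (g : (V →ₗ[F] V)ˣ), (∀ k ≤ i, ℓ (e k) = 0) →
    (∀ w, (g : V →ₗ[F] V) w = w + ℓ w • e i) → R g v = ψ (ℓ (e (i + 1))) • v}
  add_mem' := by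
    intro a b ha hb i hi ℓ g h1 h2
    rw [map_add, ha i hi ℓ g h1 h2, hb i hi ℓ g h1 h2, smul_add]
  zero_mem' := by intro i hi ℓ g h1 h2; simp
  smul_mem' := by
    intro c a ha i hi ℓ g h1 h2
    rw [map_smul, ha i hi ℓ g h1 h2, smul_comm]

variable {R : Representation ℂ (V →ₗ[F] V)ˣ X} {ψ : AddChar F ℂ} {e e' : ℕ → V} {i j : ℕ}

theorem Mlev_congr (h : ∀ k ≤ j, e k = e' k) : Mlev R ψ e j ≤ Mlev R ψ e' j := by
  intro v hv i hi ℓ g h1 h2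
  rw [← h (i + 1) hi]
  refine hv i hi ℓ g (fun k hk => ?_) (fun w => ?_)
  · rw [h k (by omega)]; exact h1 k hk
  · rw [h i (by omega)]; exact h2 w

theorem Mlev_succ_le : Mlev R ψ e (j + 1) ≤ Mlev R ψ e j :=
  fun _ hv i hi => hv i (by omega)

theorem Mlev_conj (h : (V →ₗ[F] V)ˣ) {v : X} (hv : v ∈ Mlev R ψ e j) :
    R h v ∈ Mlev R ψ (fun k => (h : V →ₗ[F] V) (e k)) j := by
  intro i hi ℓ g h1 h2
  have h3 := hv i hi (ℓ ∘ₗ (h : V →ₗ[F] V)) (h⁻¹ * g * h) h1 (fun w => by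
    rw [Units.val_mul, Units.val_mul, Module.End.mul_apply, Module.End.mul_apply, h2, map_add,
      map_smul, unit_inv_apply, unit_inv_apply]
    rfl)
  have h4 : g * h = h * (h⁻¹ * g * h) := by group
  rw [← Module.End.mul_apply, ← map_mul, h4, map_mul, Module.End.mul_apply, h3, map_smul]
  rfl

/-- Functionals killing `e 0, …, e i`. -/
def An (e : ℕ → V) (i : ℕ) : Submodule F (V →ₗ[F] F) where
  carrier := {ℓ | ∀ k ≤ i, ℓ (e k) = 0}
  add_mem' := by
    intro a b ha hb k hk
    rw [LinearMap.add_apply, ha k hk, hb k hk, add_zero]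
  zero_mem' := by intro k _; rfl
  smul_mem' := by
    intro c a ha k hk
    rw [LinearMap.smul_apply, ha k hk, smul_zero]

/-- The span of `e 0, …, e i`. -/
def En (e : ℕ → V) (i : ℕ) : Submodule F V := Submodule.span F (Set.range fun k : Fin (i + 1) => e k)

theorem mem_En (e : ℕ → V) {i k : ℕ} (h : k ≤ i) : e k ∈ En (F := F) e i :=
  Submodule.subset_span ⟨⟨k, by omega⟩, rfl⟩

theorem mem_An {ℓ : V →ₗ[F] F} : ℓ ∈ An e i ↔ ∀ k ≤ i, ℓ (e k) = 0 := Iff.rfl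

theorem mem_An_iff {ℓ : V →ₗ[F] F} : ℓ ∈ An e i ↔ En e i ≤ LinearMap.ker ℓ := by
  constructor
  · intro h
    refine Submodule.span_le.2 ?_
    rintro _ ⟨k, rfl⟩
    exact h k (by omega)
  · intro h k hk
    exact h (mem_En e hk)

/-- The element of the abelian group of transvections in direction `e i` given by `ℓ`. -/
def tvA (e : ℕ → V) (i : ℕ) (ℓ : An (F := F) e i) : (V →ₗ[F] V)ˣ := tv ℓ.1 (e i) (ℓ.2 i le_rfl)

theorem tvA_apply (ℓ : An (F := F) e i) (w : V) :
    ((tvA e i ℓ : (V →ₗ[F] V)ˣ) : V →ₗ[F] V) w = w + ℓ.1 w • e i := rfl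

theorem tvA_mul (ℓ m : An (F := F) e i) : tvA e i ℓ * tvA e i m = tvA e i (ℓ + m) := by
  refine unit_ext fun w => ?_
  rw [Units.val_mul, Module.End.mul_apply, tvA_apply, tvA_apply, tvA_apply, map_add, map_smul,
    ℓ.2 i le_rfl]
  simp only [Submodule.coe_add, LinearMap.add_apply, smul_zero, add_zero, add_smul]
  abel

theorem tvA_zero : tvA e i (0 : An (F := F) e i) = 1 := by
  refine unit_ext fun w => ?_
  rw [tvA_apply]
  simp

section Sums

variable [Finite F]

instance : Finite (An (F := F) e i) := inferInstance

/-- Projection (up to a scalar) to the `ψ (ℓ w)`-eigenspace of the transvections in direction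
`e i`. -/
def Pr (R : Representation ℂ (V →ₗ[F] V)ˣ X) (ψ : AddChar F ℂ) (e : ℕ → V) (i : ℕ) (w : V) :
    X →ₗ[ℂ] X := ∑ ℓ : An (F := F) e i, ψ (-(ℓ.1 w)) • R (tvA e i ℓ)

theorem sum_An (hψ : ψ ≠ 1) {w : V} (hw : w ∉ En (F := F) e i) :
    ∑ ℓ : An (F := F) e i, ψ (ℓ.1 w) = 0 := by
  obtain ⟨x, hx⟩ := AddChar.ne_one_iff.1 hψ
  obtain ⟨f, hf, hf'⟩ := Submodule.exists_le_ker_of_notMem hw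
  let ev : An (F := F) e i →+ F :=
    { toFun := fun ℓ => ℓ.1 w
      map_zero' := rfl
      map_add' := fun _ _ => rfl }
  refine AddChar.sum_eq_zero_of_ne_one (ψ := ψ.compAddMonoidHom ev) ?_
  rw [AddChar.ne_one_iff]
  refine ⟨(x / f w) • ⟨f, mem_An_iff.2 hf'⟩, ?_⟩
  have : ev ((x / f w) • ⟨f, mem_An_iff.2 hf'⟩) = x := by
    change (x / f w) * f w = x
    exact div_mul_cancel₀ _ hf
  rw [AddChar.compAddMonoidHom_apply, this]
  exact hx

/-- Orthogonality of characters on a subspace `K` complementing the span of `e 0, …, e i`. -/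
theorem sum_compl (hψ : ψ ≠ 1) {K : Submodule F V} (hK : En e i ⊔ K = ⊤) {ℓ : An (F := F) e i}
    (hℓ : ℓ ≠ 0) : ∑ w : K, ψ (-(ℓ.1 w)) = 0 := by
  obtain ⟨x, hx⟩ := AddChar.ne_one_iff.1 hψ
  have h1 : ∃ w : K, ℓ.1 w ≠ 0 := by
    by_contra! h
    apply hℓ
    have h2 : (⊤ : Submodule F V) ≤ LinearMap.ker ℓ.1 := by
      rw [← hK]
      exact sup_le (mem_An_iff.1 ℓ.2) fun w hw => h ⟨w, hw⟩
    exact Subtype.ext (LinearMap.ext fun w => h2 (Submodule.mem_top (x := w)))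
  obtain ⟨w, hw⟩ := h1
  let ev : K →+ F :=
    { toFun := fun w => -(ℓ.1 w)
      map_zero' := by simp
      map_add' := fun a b => by simp [add_comm] }
  refine AddChar.sum_eq_zero_of_ne_one (ψ := ψ.compAddMonoidHom ev) ?_
  rw [AddChar.ne_one_iff]
  refine ⟨(-(x / ℓ.1 w)) • w, ?_⟩
  have : ev ((-(x / ℓ.1 w)) • w) = x := by
    change -(ℓ.1 ((-(x / ℓ.1 w)) • (w : V))) = x
    rw [map_smul, smul_eq_mul, neg_mul, neg_neg]
    exact div_mul_cancel₀ _ hw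
  rw [AddChar.compAddMonoidHom_apply, this]
  exact hx

theorem Pr_apply (w : V) (v : X) :
    Pr R ψ e i w v = ∑ ℓ : An (F := F) e i, ψ (-(ℓ.1 w)) • R (tvA e i ℓ) v := by
  simp [Pr]

/-- The projection acts by a scalar on each eigenspace. -/
theorem Pr_eigen (h : ∀ k ≤ i, e' k = e k) {v : X} (hv : v ∈ Mlev R ψ e' (i + 1)) (w : V) :
    Pr R ψ e i w v = (∑ ℓ : An (F := F) e i, ψ (ℓ.1 (e' (i + 1) - w))) • v := by
  rw [Pr_apply, Finset.sum_smul]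
  refine Finset.sum_congr rfl fun ℓ _ => ?_
  rw [hv i (by omega) ℓ.1 (tvA e i ℓ) (fun k hk => by rw [h k hk]; exact ℓ.2 k hk)
    (fun w => by rw [h i le_rfl]; rfl), smul_smul, ← AddChar.map_add_eq_mul, map_sub]
  congr 2
  ring

/-- The projections to the eigenspaces add up to a scalar. -/
theorem sum_Pr (hψ : ψ ≠ 1) {K : Submodule F V} (hK : En e i ⊔ K = ⊤) (v : X) :
    ∑ w : K, Pr R ψ e i (w : V) v = (Nat.card K : ℂ) • v := by
  simp only [Pr_apply]
  rw [Finset.sum_comm]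
  simp only [← Finset.sum_smul]
  rw [Finset.sum_eq_single (0 : An (F := F) e i)]
  · rw [tvA_zero, map_one, Module.End.one_apply]
    simp
  · intro ℓ _ hℓ
    rw [sum_compl hψ hK hℓ, zero_smul]
  · simp

theorem Pr_mem {v : X} (hv : v ∈ Mlev R ψ e i) (w : V) :
    Pr R ψ e i w v ∈ Mlev R ψ (Function.update e (i + 1) w) (i + 1) := by
  have hu : ∀ k ≤ i, Function.update e (i + 1) w k = e k := fun k hk =>
    Function.update_of_ne (by omega) _ _
  intro i' hi' ℓ g h1 h2
  rcases Nat.lt_succ_iff_lt_or_eq.1 hi' with hlt | rfl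
  · have h3 : Pr R ψ e i w v ∈ Mlev R ψ e i := by
      rw [Pr_apply]
      refine Submodule.sum_mem _ fun m _ => Submodule.smul_mem _ _ ?_
      refine Mlev_congr (fun k hk => ?_) (Mlev_conj (tvA e i m) hv)
      rw [tvA_apply, m.2 k hk, zero_smul, add_zero]
    rw [hu _ (by omega)]
    refine h3 i' hlt ℓ g (fun k hk => ?_) (fun w' => ?_)
    · rw [← hu k (by omega)]; exact h1 k hk
    · rw [← hu i' (by omega)]; exact h2 w'
  · have hℓ : ℓ ∈ An e i' := fun k hk => by rw [← hu k hk]; exact h1 k hk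
    have hg : g = tvA e i' ⟨ℓ, hℓ⟩ := unit_ext fun w' => by
      rw [h2, hu i' le_rfl]; rfl
    rw [Function.update_self, Pr_apply, map_sum, Finset.smul_sum]
    refine Fintype.sum_equiv (Equiv.addLeft ⟨ℓ, hℓ⟩) _ _ fun m => ?_
    rw [Equiv.coe_addLeft, map_smul, hg, ← Module.End.mul_apply, ← map_mul, tvA_mul, smul_smul,
      ← AddChar.map_add_eq_mul]
    congr 2
    simp only [Submodule.coe_add, LinearMap.add_apply]
    ring

end Sums

/-! ### Dimension bounds -/

/-- Linear independence of `e 0, …, e i`. -/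
def Ind (F : Type) [Field F] {V : Type} [AddCommGroup V] [Module F V] (e : ℕ → V) (i : ℕ) : Prop :=
  LinearIndependent F (fun k : Fin (i + 1) => e k)

theorem Ind_succ : Ind F e (i + 1) ↔ Ind F e i ∧ e (i + 1) ∉ En (F := F) e i := by
  unfold Ind
  rw [linearIndependent_finSucc']
  rfl

theorem Ind_congr (h : ∀ k ≤ i, e k = e' k) (hi : Ind F e i) : Ind F e' i := by
  unfold Ind at *
  have : (fun k : Fin (i + 1) => e' k) = fun k : Fin (i + 1) => e k := by
    funext k
    rw [h k (by omega)]
  rwa [this]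

theorem En_congr (h : ∀ k ≤ i, e k = e' k) : En (F := F) e i = En e' i := by
  unfold En
  have : (fun k : Fin (i + 1) => e' k) = fun k : Fin (i + 1) => e k := by
    funext k
    rw [h k (by omega)]
  rw [this]

theorem finrank_En (hi : Ind F e i) : finrank F (En (F := F) e i) = i + 1 := by
  unfold En
  rw [finrank_span_eq_card hi, Fintype.card_fin]

theorem Ind_update (hi : Ind F e i) {w : V} (hw : w ∉ En (F := F) e i) :
    Ind F (Function.update e (i + 1) w) (i + 1) := by
  have hu : ∀ k ≤ i, e k = Function.update e (i + 1) w k := fun k hk =>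
    (Function.update_of_ne (by omega) _ _).symm
  rw [Ind_succ]
  refine ⟨Ind_congr hu hi, ?_⟩
  rwa [← En_congr hu, Function.update_self]

/-- A vector of level `i` fixed by the transvections in direction `e i` is fixed by the whole
unipotent radical of the span of `e 0, …, e i`. -/
theorem fixed_of_update (hi : Ind F e i) {v : X}
    (hv : v ∈ Mlev R ψ (Function.update e (i + 1) 0) (i + 1)) : v ∈ InvS R (En e i) := by
  classical
  have hu : ∀ k ≤ i, Function.update e (i + 1) 0 k = e k := fun k hk =>
    Function.update_of_ne (by omega) _ _
  have h1 : ∀ k ≤ i, ∀ ℓ ∈ An (F := F) e i, ∀ g : (V →ₗ[F] V)ˣ,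
      (∀ w, (g : V →ₗ[F] V) w = w + ℓ w • e k) → R g v = v := by
    intro k hk ℓ hℓ g hg
    rw [hv k (by omega) ℓ g (fun k' hk' => by rw [hu k' (by omega)]; exact hℓ k' (by omega))
      (fun w => by rw [hu k hk]; exact hg w)]
    have : ℓ (Function.update e (i + 1) 0 (k + 1)) = 0 := by
      rcases Nat.lt_or_ge k i with h | h
      · rw [hu _ (by omega)]; exact hℓ _ (by omega)
      · have : k = i := by omega
        rw [this, Function.update_self, map_zero]
    rw [this, AddChar.map_zero_eq_one, one_smul]
  have h2 : ∀ ℓ : Fin (i + 1) → (V →ₗ[F] F), (∀ k, ℓ k ∈ An e i) → ∀ s : Finset (Fin (i + 1)),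
      ∀ g : (V →ₗ[F] V)ˣ, (∀ w, (g : V →ₗ[F] V) w = w + ∑ k ∈ s, ℓ k w • e k) → R g v = v := by
    intro ℓ hℓ s
    induction s using Finset.induction_on with
    | empty =>
      intro g hg
      have : g = 1 := unit_ext fun w => by rw [hg]; simp
      rw [this, map_one, Module.End.one_apply]
    | insert m s hm ih =>
      intro g hg
      have h0 : ∀ k, ℓ k (e m) = 0 := fun k => hℓ k m (by omega)
      let t := tv (ℓ m) (e m) (h0 m)
      have ht : R t v = v := h1 m (by omega) (ℓ m) (hℓ m) t fun w => rfl
      have h3 : g = (g * t⁻¹) * t := by group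
      rw [h3, map_mul, Module.End.mul_apply, ht]
      refine ih _ fun w => ?_
      have h4 : ((t⁻¹ : (V →ₗ[F] V)ˣ) : V →ₗ[F] V) w = w - ℓ m w • e m := rfl
      rw [Units.val_mul, Module.End.mul_apply, h4, hg, Finset.sum_insert hm]
      simp only [map_sub, map_smul, h0, smul_zero, sub_zero]
      abel
  intro g hg
  rw [mem_unip] at hg
  obtain ⟨hg1, hg2⟩ := hg
  let b : Basis (Fin (i + 1)) F (En (F := F) e i) := Basis.span hi
  let D : V →ₗ[F] En (F := F) e i := LinearMap.codRestrict (En e i) ((g : V →ₗ[F] V) - LinearMap.id) hg1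
  have hD : ∀ w ∈ En (F := F) e i, D w = 0 := fun w hw => Subtype.ext (by
    change (g : V →ₗ[F] V) w - w = 0
    rw [hg2 w hw, sub_self])
  refine h2 (fun k => b.coord k ∘ₗ D) (fun k k' hk' => ?_) Finset.univ g fun w => ?_
  · rw [LinearMap.comp_apply, hD _ (mem_En e hk'), map_zero]
  · have h5 := congrArg (Subtype.val) (b.sum_repr (D w))
    have h6 : ((D w : En (F := F) e i) : V) = (g : V →ₗ[F] V) w - w := rfl
    rw [h6] at h5
    rw [← sub_eq_iff_eq_add', ← h5, AddSubmonoidClass.coe_finsetSum]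
    refine Finset.sum_congr rfl fun k _ => ?_
    rw [Submodule.coe_smul]
    congr 1
    exact congrArg Subtype.val (Basis.span_apply hi k)

section Dim

variable [Finite F]

/-- A group element fixing `e 0, …, e i` and sending `a` to `b`, for `a`, `b` outside the span. -/
theorem exists_move {a b : V} (ha : a ∉ En (F := F) e i) (hb : b ∉ En (F := F) e i) :
    ∃ g : (V →ₗ[F] V)ˣ, (∀ k ≤ i, (g : V →ₗ[F] V) (e k) = e k) ∧ (g : V →ₗ[F] V) a = b := by
  obtain ⟨f1, h1, h1'⟩ := Submodule.exists_le_ker_of_notMem ha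
  obtain ⟨f2, h2, h2'⟩ := Submodule.exists_le_ker_of_notMem hb
  have : ∃ f ∈ An (F := F) e i, f a ≠ 0 ∧ f b ≠ 0 := by
    by_cases h3 : f1 b = 0
    · by_cases h4 : f2 a = 0
      · refine ⟨f1 + f2, (An e i).add_mem (mem_An_iff.2 h1') (mem_An_iff.2 h2'), ?_, ?_⟩
        · rwa [LinearMap.add_apply, h4, add_zero]
        · rwa [LinearMap.add_apply, h3, zero_add]
      · exact ⟨f2, mem_An_iff.2 h2', h4, h2⟩
    · exact ⟨f1, mem_An_iff.2 h1', h1, h3⟩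
  obtain ⟨f, hf, hfa, hfb⟩ := this
  let g : V →ₗ[F] V := LinearMap.id + ((f a)⁻¹ • f).smulRight (b - a)
  have hg : ∀ w, g w = w + ((f a)⁻¹ * f w) • (b - a) := fun w => rfl
  have hgu : IsUnit g := by
    rw [isUnit_iff_inj]
    refine (injective_iff_map_eq_zero g).2 fun w hw => ?_
    rw [hg] at hw
    have h3 := congrArg f hw
    rw [map_add, map_smul, map_sub, map_zero, smul_eq_mul] at h3
    have h4 : f w * f b = 0 := by
      have : f w + (f a)⁻¹ * f w * (f b - f a) = (f a)⁻¹ * (f w * f b) := by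
        field_simp
        ring
      rw [this] at h3
      exact (mul_eq_zero.1 h3).resolve_left (inv_ne_zero hfa)
    have h5 := (mul_eq_zero.1 h4).resolve_right hfb
    rw [h5] at hw
    simpa using hw
  refine ⟨hgu.unit, fun k hk => ?_, ?_⟩
  · change g (e k) = e k
    rw [hg, hf k hk, mul_zero, zero_smul, add_zero]
  · change g a = b
    rw [hg, inv_mul_cancel₀ hfa, one_smul]
    abel

theorem sum_An_self (w : V) : ∑ ℓ : An (F := F) e i, ψ (ℓ.1 (w - w)) ≠ 0 := by
  simp only [sub_self, map_zero, AddChar.map_zero_eq_one, Finset.sum_const, nsmul_eq_mul, mul_one]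
  refine Nat.cast_ne_zero.2 ?_
  exact (Finset.card_pos.2 ⟨0, Finset.mem_univ _⟩).ne'

/-- The `q ^ (n - i - 1) - 1` nonzero vectors of a complement of the span of `e 0, …, e i` give
independent eigenspaces in level `i`, all conjugate to level `i + 1`. -/
theorem dim_step [FiniteDimensional ℂ X] (hψ : ψ ≠ 1) (hi : Ind F e (i + 1)) :
    (Nat.card F ^ (finrank F V - (i + 1)) - 1) * finrank ℂ (Mlev R ψ e (i + 1)) ≤
      finrank ℂ (Mlev R ψ e i) := by
  classical
  obtain ⟨hi1, hi2⟩ := Ind_succ.1 hi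
  obtain ⟨K, hK⟩ := Submodule.exists_isCompl (En (F := F) e i)
  have hnot : ∀ w : K, w ≠ 0 → (w : V) ∉ En (F := F) e i := fun w hw h =>
    hw (Subtype.ext ((Submodule.disjoint_def.1 hK.disjoint) _ h w.2))
  let ι := {w : K // w ≠ 0}
  have hex : ∀ w : ι, ∃ g : (V →ₗ[F] V)ˣ, (∀ k ≤ i, (g : V →ₗ[F] V) (e k) = e k) ∧
    (g : V →ₗ[F] V) (e (i + 1)) = (w.1 : V) := fun w => exists_move hi2 (hnot w.1 w.2)
  choose g hg1 hg2 using hex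
  have hmem : ∀ w : ι, ∀ v ∈ Mlev R ψ e (i + 1),
      R (g w) v ∈ Mlev R ψ (fun k => (g w : V →ₗ[F] V) (e k)) (i + 1) :=
    fun w v hv => Mlev_conj (g w) hv
  have hmem' : ∀ w : ι, ∀ v ∈ Mlev R ψ e (i + 1), R (g w) v ∈ Mlev R ψ e i := fun w v hv =>
    Mlev_congr (fun k hk => hg1 w k hk) (Mlev_succ_le (hmem w v hv))
  let T : (ι → Mlev R ψ e (i + 1)) →ₗ[ℂ] Mlev R ψ e i :=
    ∑ w : ι, (LinearMap.restrict (R (g w)) (hmem' w)) ∘ₗ LinearMap.proj w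
  have hT : ∀ f, ((T f : Mlev R ψ e i) : X) = ∑ w : ι, R (g w) (f w) := by
    intro f
    simp only [T, LinearMap.sum_apply, AddSubmonoidClass.coe_finsetSum]
    rfl
  have hinj : Function.Injective T := by
    refine (injective_iff_map_eq_zero T).2 fun f hf => ?_
    funext w
    have h1 : ∑ w : ι, R (g w) (f w) = 0 := by rw [← hT, hf]; rfl
    have h2 := congrArg (Pr R ψ e i (w.1 : V)) h1
    rw [map_zero, map_sum, Finset.sum_eq_single w] at h2
    · rw [Pr_eigen (fun k hk => hg1 w k hk) (hmem w _ (f w).2), hg2] at h2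
      have h3 := (smul_eq_zero.1 h2).resolve_left (sum_An_self _)
      have h4 := congrArg (R (g w)⁻¹) h3
      rw [← Module.End.mul_apply, ← map_mul, inv_mul_cancel, map_one, map_zero] at h4
      exact Subtype.ext h4
    · intro w' _ hne
      rw [Pr_eigen (fun k hk => hg1 w' k hk) (hmem w' _ (f w').2), hg2, sum_An hψ, zero_smul]
      have := hnot (w'.1 - w.1) (fun h => hne (Subtype.ext (sub_eq_zero.1 h)))
      simpa using this
    · simp
  have h5 := LinearMap.finrank_le_finrank_of_injective hinj
  rw [Module.finrank_pi_fintype, Finset.sum_const, smul_eq_mul, Finset.card_univ] at h5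
  have h6 : Fintype.card ι = Nat.card F ^ (finrank F V - (i + 1)) - 1 := by
    have h7 := Submodule.finrank_add_eq_of_isCompl hK
    rw [finrank_En hi1] at h7
    have h8 : finrank F V - (i + 1) = finrank F K := by omega
    rw [h8, ← Module.natCard_eq_pow_finrank (K := F), Nat.card_eq_fintype_card]
    simp only [ι]
    rw [Fintype.card_subtype_compl, Fintype.card_subtype_eq]
  rwa [h6] at h5

/-- If level `j` is nonzero, then the representation has dimension at least
`∏ (q ^ (n - i - 1) - 1)` over `i < j`. -/
theorem dim_bound [FiniteDimensional ℂ X] (hψ : ψ ≠ 1) (hi : Ind F e j) (h : Mlev R ψ e j ≠ ⊥) :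
    ∏ i ∈ Finset.range j, (Nat.card F ^ (finrank F V - (i + 1)) - 1) ≤ finrank ℂ X := by
  have key : ∀ k, Ind F e k → (∏ i ∈ Finset.range k, (Nat.card F ^ (finrank F V - (i + 1)) - 1)) *
      finrank ℂ (Mlev R ψ e k) ≤ finrank ℂ X := by
    intro k
    induction k with
    | zero => intro _; simpa using Submodule.finrank_le _
    | succ k ih =>
      intro hk
      refine le_trans ?_ (ih (Ind_succ.1 hk).1)
      rw [Finset.prod_range_succ, mul_assoc]
      exact Nat.mul_le_mul_left _ (dim_step hψ hk)
  refine le_trans (Nat.le_mul_of_pos_right _ ?_) (key j hi)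
  exact Submodule.one_le_finrank_iff.2 h

/-- A vector of level `i` is fixed by the unipotent radical of the span of `e 0, …, e i`, unless
level `i + 1` occurs. -/
theorem level_step (hψ : ψ ≠ 1) (hi : Ind F e i) {v : X} (hv : v ∈ Mlev R ψ e i) :
    (∃ e', Ind F e' (i + 1) ∧ (∀ k ≤ i, e' k = e k) ∧ Mlev R ψ e' (i + 1) ≠ ⊥) ∨
      v ∈ InvS R (En e i) := by
  classical
  obtain ⟨K, hK⟩ := Submodule.exists_isCompl (En (F := F) e i)
  by_cases h : ∃ w : K, w ≠ 0 ∧ Pr R ψ e i (w : V) v ≠ 0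
  · obtain ⟨w, hw, hne⟩ := h
    left
    refine ⟨Function.update e (i + 1) (w : V), Ind_update hi fun h =>
      hw (Subtype.ext ((Submodule.disjoint_def.1 hK.disjoint) _ h w.2)), fun k hk =>
      Function.update_of_ne (by omega) _ _, ?_⟩
    exact (Submodule.ne_bot_iff _).2 ⟨_, Pr_mem hv _, hne⟩
  · right
    push Not at h
    have h1 := sum_Pr (R := R) hψ hK.sup_eq_top v
    rw [Finset.sum_eq_single (0 : K) (fun w _ hw => h w hw) (by simp)] at h1
    have h2 := fixed_of_update hi (Pr_mem hv (0 : V))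
    have h3 : Pr R ψ e i (0 : V) v = (Nat.card K : ℂ) • v := h1
    rw [h3] at h2
    exact (Submodule.smul_mem_iff _ (Nat.cast_ne_zero.2 Nat.card_pos.ne')).1 h2

/-- A cuspidal representation has nonzero Whittaker-type spaces up to the top level. -/
theorem NoInv.exists_level (hψ : ψ ≠ 1) (hR : NoInv R) [Nontrivial X] [Nontrivial V] :
    ∀ j, j < finrank F V → ∃ e : ℕ → V, Ind F e j ∧ Mlev R ψ e j ≠ ⊥ := by
  intro j
  induction j with
  | zero =>
    intro _
    obtain ⟨a, ha⟩ := exists_ne (0 : V)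
    obtain ⟨v, hv⟩ := exists_ne (0 : X)
    refine ⟨fun _ => a, ?_, ?_⟩
    · unfold Ind
      have : Subsingleton (Fin (0 + 1)) := inferInstanceAs (Subsingleton (Fin 1))
      exact LinearIndependent.of_subsingleton (0 : Fin (0 + 1)) ha
    · refine (Submodule.ne_bot_iff _).2 ⟨v, ?_, hv⟩
      intro i hi
      omega
  | succ j ih =>
    intro hj
    obtain ⟨e, h1, h2⟩ := ih (by omega)
    obtain ⟨v, hv, hv0⟩ := (Submodule.ne_bot_iff _).1 h2
    have h3 : InvS R (En (F := F) e j) = ⊥ := by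
      refine hR _ (fun h => ?_) (fun h => ?_)
      · have := finrank_En h1
        rw [h, finrank_bot] at this
        omega
      · have := finrank_En h1
        rw [h, finrank_top] at this
        omega
    rcases level_step hψ h1 hv with ⟨e', h4, -, h5⟩ | h4
    · exact ⟨e', h4, h5⟩
    · rw [h3, Submodule.mem_bot] at h4
      exact absurd h4 hv0

end Dim

end Whittaker

/-! ### Degree bounds -/

theorem exists_addChar (F : Type) [Field F] [Finite F] : ∃ ψ : AddChar F ℂ, ψ ≠ 1 := by
  obtain ⟨ψ, h⟩ := (AddChar.exists_apply_ne_zero (α := F) (a := 1)).2 one_ne_zero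
  exact ⟨ψ, AddChar.ne_one_iff.2 ⟨1, h⟩⟩

theorem AffMap.injective {X Y : Type} [AddCommGroup X] [Module ℂ X] [AddCommGroup Y] [Module ℂ Y]
    {R : Representation ℂ (Q × A →ₗ[F] Q × A)ˣ X} {S : Representation ℂ (A →ₗ[F] A)ˣ Y}
    {L : Y →ₗ[ℂ] X} (hL : AffMap R S L) (hS : S.IsIrreducible) (h0 : L ≠ 0) :
    Function.Injective L := by
  let f : Representation.IntertwiningMap S (pb (blk (F := F) Q A) R) :=
    ⟨L, fun x => LinearMap.ext fun y => hL x 0 (blk Q A x) rfl y⟩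
  rcases Representation.IsIrreducible.injective_or_eq_zero f with h | h
  · exact h
  · exact absurd (congrArg Representation.IntertwiningMap.toLinearMap h) h0

/-- An `AffMap` carries Whittaker-type vectors for `GL(A)` to such vectors for `GL(Q × A)`. -/
theorem AffMap.level {X Y : Type} [AddCommGroup X] [Module ℂ X] [AddCommGroup Y] [Module ℂ Y]
    {R : Representation ℂ (Q × A →ₗ[F] Q × A)ˣ X} {S : Representation ℂ (A →ₗ[F] A)ˣ Y}
    {L : Y →ₗ[ℂ] X} (hL : AffMap R S L) {ψ : AddChar F ℂ} {e : ℕ → A} {j : ℕ} {v : Y}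
    (hv : v ∈ Mlev S ψ e j) : L v ∈ Mlev R ψ (fun k => ((0, e k) : Q × A)) j := by
  intro i hi ℓ g h1 h2
  obtain ⟨x, hx, hx'⟩ := hL.exists_unit g (fun w => by rw [h2]; simp)
  rw [← hx', hv i hi (ℓ ∘ₗ LinearMap.inr F Q A) x h1 (fun a => by rw [hx, h2]; simp), map_smul]
  rfl

/-- Degree bound for irreducible characters with a cuspidal character of `GL_d` in the support:
the top level `d - 1` of the cuspidal representation survives in `τ`. -/
theorem dg_ge_of_adj [Finite F] {d N : ℕ} (hd : 1 ≤ d) {φ τ : Obj F → ℂ} (hφ : CuspIrr F d φ)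
    (hτ : τ ∈ Irr F N) (h : adj (Fin d → F) (inv φ) τ ≠ 0) :
    ((∏ i ∈ Finset.range (d - 1), (Nat.card F ^ (N - (i + 1)) - 1) : ℕ) : ℝ) ≤ dg N τ := by
  obtain ⟨hφ1, Y, _, _, _, S, hS, hS', hn⟩ := hφ
  have hA : finrank F (Fin d → F) = d := by simp
  have hle := le_of_adj_ne_zero (mem_Irr.1 hτ).2.1 h
  obtain ⟨k, rfl⟩ := Nat.exists_eq_add_of_le hle
  have hφ2 : φ ∈ Irr F (finrank F (Fin d → F)) := by rwa [hA]
  have h1 := (D_isChar hφ2 hτ).id_ne_zero h (V := Fin k → F) (by simp)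
  have hV : finrank F ((Fin k → F) × (Fin d → F)) = finrank F (Fin d → F) + k := by
    simp [add_comm]
  obtain ⟨X, _, _, _, R, hR, hR'⟩ := Irr_rep hτ ((Fin k → F) × (Fin d → F)) hV
  obtain ⟨L, hL0, hL⟩ := (adj_one R S (mem_Irr.1 hτ).2.1 hR' hS').1 h1
  have hLi := hL.injective hS hL0
  obtain ⟨ψ, hψ⟩ := exists_addChar F
  have : Nontrivial (Fin d → F) := by
    have : Nonempty (Fin d) := ⟨⟨0, hd⟩⟩
    infer_instance
  have hnt := irreducible_nontrivial S
  obtain ⟨e, he, hM⟩ := hn.exists_level hψ (d - 1) (by rw [hA]; omega)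
  obtain ⟨v, hv, hv0⟩ := (Submodule.ne_bot_iff _).1 hM
  have h2 := hL.level hv
  rw [dg_eq hτ hV R hR', Nat.cast_le, ← hV]
  refine dim_bound (R := R) hψ (e := fun k' => ((0, e k') : (Fin k → F) × (Fin d → F))) ?_
    ((Submodule.ne_bot_iff _).2 ⟨_, h2, fun h3 => hv0 (hLi (h3.trans (map_zero L).symm))⟩)
  unfold Ind at he ⊢
  exact he.map' (LinearMap.inr F (Fin k → F) (Fin d → F)) (LinearMap.ker_eq_bot.2 LinearMap.inr_injective)

theorem CuspIrr.dg_ge [Finite F] {d : ℕ} (hd : 1 ≤ d) {φ : Obj F → ℂ} (hφ : CuspIrr F d φ) :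
    ((∏ i ∈ Finset.range (d - 1), (Nat.card F ^ (d - (i + 1)) - 1) : ℕ) : ℝ) ≤ dg d φ := by
  obtain ⟨hφ1, Y, _, _, _, S, hS, hS', hn⟩ := hφ
  have hA : finrank F (Fin d → F) = d := by simp
  obtain ⟨ψ, hψ⟩ := exists_addChar F
  have : Nontrivial (Fin d → F) := by
    have : Nonempty (Fin d) := ⟨⟨0, hd⟩⟩
    infer_instance
  have hnt := irreducible_nontrivial S
  obtain ⟨e, he, hM⟩ := hn.exists_level hψ (d - 1) (by rw [hA]; omega)
  have := dim_bound (R := S) hψ he hM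
  rw [hA] at this
  rwa [dg_eq hφ1 hA S hS', Nat.cast_le]

/-- The constituents of `φ * ⋯ * φ` have `φ` in their support. -/
theorem adj_of_seq [Finite F] {d m : ℕ} (hm : 1 ≤ m) {φ τ : Obj F → ℂ} (hφ : φ ∈ Irr F d)
    (hτ : τ ∈ Irr F (m * d)) (h : ip (m * d) (seq φ m one0) τ ≠ 0) :
    adj (Fin d → F) (inv φ) τ ≠ 0 := by
  intro h0
  obtain ⟨m, rfl⟩ := Nat.exists_eq_add_of_le' hm
  have hA : finrank F (Fin d → F) = d := by simp
  have hs := seq_isChar hφ (IsChar.of_irr (one0_mem (F := F))) m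
  rw [Nat.add_zero] at hs
  obtain ⟨h1, h2, -⟩ := mem_Irr.1 hφ
  obtain ⟨h3, h4, -⟩ := mem_Irr.1 hτ
  have hdim : (m + 1) * d = finrank F (Fin d → F) + m * d := by rw [hA]; ring
  have h5 := ip_mul (A := Fin d → F) h1 hs.isInv h3 (by rwa [hA]) hs.deg (by rwa [← hdim])
  rw [← hdim, h0] at h5
  refine h (h5.trans ?_)
  rw [ip_comm]
  simp [ip, ipG, res]

theorem finrank_one_of_comm {G X : Type} [Group G] [AddCommGroup X] [Module ℂ X]
    [FiniteDimensional ℂ X] (R : Representation ℂ G X) (hR : R.IsIrreducible)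
    (hc : ∀ g h, R g * R h = R h * R g) : finrank ℂ X = 1 := by
  have hnt := irreducible_nontrivial R
  have hsc : ∀ g, ∃ c : ℂ, ∀ v, R g v = c • v := by
    intro g
    let f : Representation.IntertwiningMap R R := ⟨R g, fun h => hc g h⟩
    obtain ⟨c, hc⟩ :=
      (Representation.IsIrreducible.algebraMap_intertwiningMap_bijective_of_isAlgClosed
        (ρ := R)).2 f
    refine ⟨c, fun v => ?_⟩
    have := congrArg (fun t : Representation.IntertwiningMap R R => t.toLinearMap v) hc
    exact this.symm
  obtain ⟨v, hv⟩ := exists_ne (0 : X)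
  let τ : Subrepresentation R := ⟨Submodule.span ℂ {v}, fun g w hw => by
    obtain ⟨c, hc⟩ := hsc g
    rw [hc]
    exact Submodule.smul_mem _ _ hw⟩
  have hs : IsSimpleOrder (Subrepresentation R) := hR
  have hv' : v ∈ τ.toSubmodule := Submodule.mem_span_singleton_self v
  rcases hs.eq_bot_or_eq_top τ with h | h
  · rw [h] at hv'
    exact absurd hv' hv
  · refine finrank_eq_one v hv fun w => ?_
    have hw : w ∈ τ.toSubmodule := by rw [h]; trivial
    exact Submodule.mem_span_singleton.1 hw

/-- Gaussian elimination: a subgroup containing all transvections reduces every element of `GL_n`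
to diagonal form. -/
theorem unit_mul_diag [Finite F] {n : ℕ} (H : Subgroup (GLn F n))
    (hH : ∀ (ℓ : (Fin n → F) →ₗ[F] F) (a : Fin n → F) (h : ℓ a = 0), tv ℓ a h ∈ H)
    (g : GLn F n) : ∃ h ∈ H, ∃ h' ∈ H, ∃ D : Fin n → F,
      ((h * g * h' : GLn F n) : (Fin n → F) →ₗ[F] (Fin n → F)) =
        Matrix.toLin' (Matrix.diagonal D) := by
  have key : ∀ L : List (Matrix.TransvectionStruct (Fin n) F), ∃ h ∈ H,
      (h : (Fin n → F) →ₗ[F] (Fin n → F)) =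
        Matrix.toLin' (L.map Matrix.TransvectionStruct.toMatrix).prod := by
    intro L
    induction L with
    | nil => exact ⟨1, H.one_mem, by simp; rfl⟩
    | cons t L ih =>
      obtain ⟨h, hh, hL⟩ := ih
      obtain ⟨i, j, hij, c⟩ := t
      let T : GLn F n := tv (c • LinearMap.proj j) (Pi.single i (1 : F)) (by
        simp [hij.symm])
      refine ⟨T * h, H.mul_mem (hH _ _ _) hh, ?_⟩
      rw [List.map_cons, List.prod_cons, Matrix.toLin'_mul, ← hL]
      refine LinearMap.ext fun w => ?_
      change _ = Matrix.toLin' _ ((h : (Fin n → F) →ₗ[F] (Fin n → F)) w)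
      rw [Units.val_mul, Module.End.mul_apply]
      generalize (h : (Fin n → F) →ₗ[F] (Fin n → F)) w = z
      rw [tv_apply, Matrix.TransvectionStruct.toMatrix_mk, Matrix.transvection, Matrix.toLin'_apply,
        Matrix.add_mulVec, Matrix.one_mulVec]
      congr 1
      funext k
      by_cases hk : k = i
      · subst hk
        simp [Matrix.single_mulVec]
      · simp [hk, Matrix.single_mulVec]
  obtain ⟨L, L', D, hD⟩ := Matrix.Pivot.exists_list_transvec_mul_diagonal_mul_list_transvec
    (LinearMap.toMatrix' (g : (Fin n → F) →ₗ[F] (Fin n → F)))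
  obtain ⟨h, hh, hL⟩ := key L
  obtain ⟨h', hh', hL'⟩ := key L'
  refine ⟨h⁻¹, H.inv_mem hh, h'⁻¹, H.inv_mem hh', D, ?_⟩
  have h1 := congrArg Matrix.toLin' hD
  rw [Matrix.toLin'_toMatrix', Matrix.toLin'_mul, Matrix.toLin'_mul, ← hL, ← hL'] at h1
  change (g : (Fin n → F) →ₗ[F] (Fin n → F)) = h * Matrix.toLin' (Matrix.diagonal D) * h' at h1
  rw [Units.val_mul, Units.val_mul, h1, mul_assoc (h : (Fin n → F) →ₗ[F] (Fin n → F)),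
    Units.inv_mul_cancel_left, Units.mul_inv_cancel_right]

/-- A nonlinear irreducible character of `GL_n(q)` has degree at least `q ^ (n - 1) - 1`: if level `1`
does not occur, then all transvections act trivially, the group acts through commuting diagonal
matrices, and the representation is one-dimensional. -/
theorem nonlinear_ge [Finite F] {n : ℕ} {χ : Obj F → ℂ} (hχ : χ ∈ Irr F n) (h1 : 1 < dg n χ) :
    ((Nat.card F ^ (n - 1) - 1 : ℕ) : ℝ) ≤ dg n χ := by
  have hV : finrank F (Fin n → F) = n := by simp
  obtain ⟨X, _, _, _, R, hR, hR'⟩ := Irr_rep hχ (Fin n → F) hV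
  rw [dg_eq hχ hV R hR'] at h1 ⊢
  obtain ⟨ψ, hψ⟩ := exists_addChar F
  rw [Nat.cast_le]
  by_contra hlt
  have htv : ∀ (ℓ : (Fin n → F) →ₗ[F] F) (a : Fin n → F) (h : ℓ a = 0), tv ℓ a h ∈ R.ker := by
    intro ℓ a h
    rw [MonoidHom.mem_ker]
    by_cases ha : a = 0
    · have : tv ℓ a h = 1 := unit_ext fun w => by rw [tv_apply, ha]; simp
      rw [this, map_one]
    · refine LinearMap.ext fun v => ?_
      have hi : Ind F (fun _ : ℕ => a) 0 := by
        unfold Ind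
        have : Subsingleton (Fin (0 + 1)) := inferInstanceAs (Subsingleton (Fin 1))
        exact LinearIndependent.of_subsingleton (0 : Fin (0 + 1)) ha
      rcases level_step (R := R) hψ hi (v := v) (fun i hi => by omega) with ⟨e', h2, -, h3⟩ | h2
      · exfalso
        have := dim_bound hψ h2 h3
        rw [hV] at this
        rw [Finset.prod_range_one] at this
        exact hlt this
      · refine h2 _ ?_
        rw [mem_unip]
        refine ⟨fun w => ?_, fun w hw => ?_⟩
        · rw [tv_apply, add_sub_cancel_left]
          exact Submodule.smul_mem _ _ (mem_En (fun _ : ℕ => a) le_rfl)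
        · have : ℓ ∈ An (fun _ : ℕ => a) 0 := fun k _ => h
          rw [tv_apply, (mem_An_iff.1 this) hw, zero_smul, add_zero]
  have hdiag : ∀ g : GLn F n, ∃ u : GLn F n, R g = R u ∧ ∃ D : Fin n → F,
      (u : (Fin n → F) →ₗ[F] (Fin n → F)) = Matrix.toLin' (Matrix.diagonal D) := by
    intro g
    obtain ⟨h, hh, h', hh', D, hD⟩ := unit_mul_diag R.ker htv g
    refine ⟨h * g * h', ?_, D, hD⟩
    rw [map_mul, map_mul, MonoidHom.mem_ker.1 hh, MonoidHom.mem_ker.1 hh', one_mul, mul_one]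
  have h2 := finrank_one_of_comm R hR fun g h => by
    obtain ⟨u, hu, D, hD⟩ := hdiag g
    obtain ⟨u', hu', D', hD'⟩ := hdiag h
    rw [hu, hu', ← map_mul, ← map_mul]
    congr 1
    refine Units.ext ?_
    rw [Units.val_mul, Units.val_mul, hD, hD']
    change Matrix.toLin' _ ∘ₗ Matrix.toLin' _ = Matrix.toLin' _ ∘ₗ Matrix.toLin' _
    rw [← Matrix.toLin'_mul, ← Matrix.toLin'_mul, Matrix.diagonal_mul_diagonal,
      Matrix.diagonal_mul_diagonal]
    congr 2
    funext k
    exact mul_comm _ _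
  rw [h2] at h1
  simp at h1

end Hall

section Count

attribute [local instance] Fintype.ofFinite

/-! ### Counting -/

theorem sum_exponents (N e : ℕ) (h : e + 1 ≤ N) :
    2 * ∑ i ∈ Finset.range e, (N - (i + 1)) = e * (2 * N - e - 1) := by
  induction e with
  | zero => simp
  | succ e ih =>
    rw [Finset.sum_range_succ, mul_add, ih (by omega)]
    obtain ⟨t, rfl⟩ : ∃ t, N = e + 2 + t := ⟨N - (e + 2), by omega⟩
    have h1 : 2 * (e + 2 + t) - e - 1 = e + 3 + 2 * t := by omega
    have h2 : e + 2 + t - (e + 1) = t + 1 := by omega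
    have h3 : 2 * (e + 2 + t) - (e + 1) - 1 = e + 2 + 2 * t := by omega
    rw [h1, h2, h3]
    ring

/-- A uniform form of the product in `dg_ge_of_adj`. For `d = 1 < N` it fails for large `q`, the product
being empty. -/
theorem prod_bound {q d N : ℕ} (hq : 2 ≤ q) (hd : 1 ≤ d) (hN : d ≤ N) (h : 2 ≤ d ∨ d = N) :
    q ^ (d * (N - 1)) ≤ 4 ^ d * (∏ i ∈ Finset.range (d - 1), (q ^ (N - (i + 1)) - 1)) ^ 2 := by
  have h1 : ∏ i ∈ Finset.range (d - 1), q ^ (N - (i + 1)) ≤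
      ∏ i ∈ Finset.range (d - 1), 2 * (q ^ (N - (i + 1)) - 1) := by
    refine Finset.prod_le_prod' fun i hi => ?_
    have hi := Finset.mem_range.1 hi
    have : 2 ^ 1 ≤ q ^ (N - (i + 1)) :=
      (Nat.pow_le_pow_left hq 1).trans (Nat.pow_le_pow_right (by omega) (by omega))
    omega
  rw [Finset.prod_pow_eq_pow_sum, Finset.prod_mul_distrib, Finset.prod_const,
    Finset.card_range] at h1
  have h2 := Nat.pow_le_pow_left h1 2
  rw [← pow_mul, mul_pow, ← pow_mul, mul_comm _ 2, sum_exponents _ _ (by omega)] at h2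
  have h3 : d * (N - 1) ≤ (d - 1) * (2 * N - (d - 1) - 1) := by
    obtain ⟨t, rfl⟩ : ∃ t, N = d + t := ⟨N - d, by omega⟩
    obtain ⟨d, rfl⟩ : ∃ d', d = d' + 1 := ⟨d - 1, by omega⟩
    have e1 : d + 1 + t - 1 = d + t := by omega
    have e2 : 2 * (d + 1 + t) - (d + 1 - 1) - 1 = d + 1 + 2 * t := by omega
    rw [e1, e2, Nat.add_sub_cancel]
    rcases h with h | h
    · nlinarith
    · have : t = 0 := by omega
      subst this
      nlinarith
  calc q ^ (d * (N - 1)) ≤ _ := Nat.pow_le_pow_right (by omega) h3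
    _ ≤ _ := h2
    _ ≤ _ := by
      refine Nat.mul_le_mul_right _ ?_
      rw [mul_comm (d - 1), pow_mul]
      exact Nat.pow_le_pow_right (by norm_num) (by omega)

variable {F : Type} [Field F] [Finite F]

theorem two_le_card (F : Type) [Field F] [Finite F] : 2 ≤ Nat.card F :=
  Finite.one_lt_card

theorem sum_dg_sq (F : Type) [Field F] [Finite F] (n : ℕ) :
    ∑ χ ∈ Irr F n, dg n χ ^ 2 = (Nat.card (GLn F n) : ℝ) := by
  have h : ∑ χ ∈ Irr F n, ((dg n χ ^ 2 : ℝ) : ℂ) = (Nat.card (GLn F n) : ℂ) := by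
    rw [sum_Irr, ← sum_sq_deg]
    refine Finset.sum_congr rfl fun χ hχ => ?_
    have hc := isClass_of_mem (mem_irrF.1 hχ)
    have h1 := congrFun (res_cf hc) 1
    obtain ⟨m, -, hm⟩ := irr_deg (mem_irrF.1 hχ)
    have h2 : dg n (cf χ) = (χ 1).re := by rw [← h1]; rfl
    rw [h2, hm]
    simp [sq]
  exact_mod_cast h

theorem card_GLn_le (F : Type) [Field F] [Finite F] (n : ℕ) :
    Nat.card (GLn F n) ≤ Nat.card F ^ (n * n) := by
  refine (Nat.card_le_card_of_injective _ Units.val_injective).trans ?_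
  rw [Module.natCard_eq_pow_finrank (K := F), Module.finrank_linearMap]
  simp

theorem CuspIrr.nontriv {d : ℕ} (hd : 1 ≤ d) : Nontrivial (Fin d → F) := by
  have : Nonempty (Fin d) := ⟨⟨0, hd⟩⟩
  infer_instance

/-- The finite set of cuspidal irreducible characters of `GL_d(F)`. -/
def cuspF (F : Type) [Field F] [Finite F] (d : ℕ) : Finset (Obj F → ℂ) :=
  open Classical in (Irr F d).filter (CuspIrr F d)

theorem mem_cuspF {d : ℕ} {φ : Obj F → ℂ} : φ ∈ cuspF F d ↔ CuspIrr F d φ := by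
  classical
  rw [cuspF, Finset.mem_filter]
  exact ⟨fun h => h.2, fun h => ⟨h.1, h⟩⟩

/-- The number of cuspidal characters of `GL_d(q)`: their degrees are at least
`q ^ (d (d - 1) / 2) / 2 ^ d`, and the sum of the squares of all degrees is at most `q ^ (d²)`. -/
theorem card_cuspF {d : ℕ} (hd : 1 ≤ d) : (cuspF F d).card ≤ 4 ^ d * Nat.card F ^ d := by
  have hq := two_le_card F
  have h1 : ((cuspF F d).card : ℝ) * (Nat.card F : ℝ) ^ (d * (d - 1)) ≤
      4 ^ d * (Nat.card F : ℝ) ^ (d * d) := by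
    rw [← nsmul_eq_mul, ← Finset.sum_const]
    calc ∑ φ ∈ cuspF F d, (Nat.card F : ℝ) ^ (d * (d - 1))
        ≤ ∑ φ ∈ cuspF F d, 4 ^ d * dg d φ ^ 2 := by
          refine Finset.sum_le_sum fun φ hφ => ?_
          have h2 := CuspIrr.dg_ge hd (mem_cuspF.1 hφ)
          have h3 := prod_bound hq hd le_rfl (Or.inr rfl)
          calc (Nat.card F : ℝ) ^ (d * (d - 1)) ≤ 4 ^ d *
              ((∏ i ∈ Finset.range (d - 1), (Nat.card F ^ (d - (i + 1)) - 1) : ℕ) : ℝ) ^ 2 := by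
                exact_mod_cast h3
            _ ≤ _ := by gcongr
      _ ≤ ∑ φ ∈ Irr F d, 4 ^ d * dg d φ ^ 2 :=
          Finset.sum_le_sum_of_subset_of_nonneg (fun φ hφ => (mem_cuspF.1 hφ).1)
            fun _ _ _ => by positivity
      _ = 4 ^ d * Nat.card (GLn F d) := by rw [← Finset.mul_sum, sum_dg_sq]
      _ ≤ _ := by
          gcongr
          exact_mod_cast card_GLn_le F d
  have h2 : (cuspF F d).card * Nat.card F ^ (d * (d - 1)) ≤
      (4 ^ d * Nat.card F ^ d) * Nat.card F ^ (d * (d - 1)) := by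
    have e : d * d = d + d * (d - 1) := by
      obtain ⟨d, rfl⟩ : ∃ d', d = d' + 1 := ⟨d - 1, by omega⟩
      rw [Nat.add_sub_cancel]
      ring
    rw [mul_assoc, ← pow_add, ← e]
    exact_mod_cast h1
  exact Nat.le_of_mul_le_mul_right h2 (by positivity)

theorem CuspIrr.cusp {d : ℕ} {φ : Obj F → ℂ} (hφ : CuspIrr F d φ) :
    Cusp (Fin d → F) (inv φ) := by
  obtain ⟨h1, Y, _, _, _, S, -, h2, h3⟩ := hφ
  have hA : finrank F (Fin d → F) = d := by simp
  refine cusp_of_noInv h3 ?_ h2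
  rw [hA]
  exact (mem_Irr.1 h1).2.1

/-- `χ` is a constituent of `φ^m ρ` with `φ` cuspidal for `GL_d` and not in the support of `ρ`. -/
def IsLad (F : Type) [Field F] [Finite F] (n d m k : ℕ) (φ ρ χ : Obj F → ℂ) : Prop :=
  m * d + k = n ∧ 1 ≤ m ∧ 1 ≤ d ∧ CuspIrr F d φ ∧ ρ ∈ Irr F k ∧ adj (Fin d → F) (inv φ) ρ = 0 ∧
    χ ∈ Irr F n ∧ ip n (seq φ m ρ) χ ≠ 0

theorem exists_isLad {n : ℕ} (hn : 1 ≤ n) {χ : Obj F → ℂ} (hχ : χ ∈ Irr F n) :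
    ∃ d m k φ ρ, IsLad F n d m k φ ρ χ := by
  obtain ⟨d, hd, -, φ, hφ, h⟩ := cusp_support hn hχ
  have := CuspIrr.nontriv (F := F) hd
  have hA : finrank F (Fin d → F) = d := by simp
  obtain ⟨m, k, hm, hk, ρ, hρ, h0, hne⟩ :=
    ladder (A := Fin d → F) (by rw [hA]; exact hφ.1) hχ h
  rw [hA] at hk
  exact ⟨d, m, k, φ, ρ, hk, hm, hd, hφ, hρ, h0, hχ, hne⟩

/-- There are at most `m ! ≤ n !` constituents of `φ ^ m ρ`. -/
theorem card_isLad {n d m k : ℕ} {φ ρ : Obj F → ℂ} :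
    (open Classical in ((Irr F n).filter fun χ => IsLad F n d m k φ ρ χ).card) ≤ n.factorial := by
  classical
  by_cases hex : ∃ χ, IsLad F n d m k φ ρ χ
  · obtain ⟨χ, h1, h2, h3, h4, h5, h6, -, -⟩ := hex
    have := CuspIrr.nontriv (F := F) h3
    have hA : finrank F (Fin d → F) = d := by simp
    have h7 := ip_seq (A := Fin d → F) (by rw [hA]; exact h4.1) h4.cusp h5 h6 m
    have h8 : IsChar (m * d + k) (seq φ m ρ) := seq_isChar h4.1 (IsChar.of_irr h5) m
    rw [hA, h1] at h7
    rw [h1] at h8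
    have hm : m ≤ n := by nlinarith
    refine le_trans ?_ ((h8.card_constituents h7).trans (Nat.factorial_le hm))
    refine Finset.card_le_card fun χ hχ => ?_
    rw [Finset.mem_filter] at hχ ⊢
    exact ⟨hχ.1, hχ.2.2.2.2.2.2.2.2⟩
  · have : ((Irr F n).filter fun χ => IsLad F n d m k φ ρ χ) = ∅ :=
      Finset.filter_eq_empty_iff.2 fun χ _ h => hex ⟨χ, h⟩
    rw [this]
    simp

/-- The exponent inequality behind the induction on `n`: `2 N k` comes from the degree of the induced
character, the other two terms from the degrees of its factors, which contribute only when the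
corresponding sums of cuspidal sizes are at least `2`. -/
theorem exponent_ineq {d N D k : ℕ} (hd : 1 ≤ d) (hN : d ≤ N) (hD : D ≤ k) (hk : 1 ≤ k → 1 ≤ D)
    (h2 : 2 ≤ d + D) :
    (d + D) * (N + k - 1) ≤ 2 * (N * k) + (if 2 ≤ d then d * (N - 1) else 0) +
      (if 2 ≤ D then D * (k - 1) else 0) := by
  obtain ⟨N, rfl⟩ : ∃ N', N = N' + 1 := ⟨N - 1, by omega⟩
  rcases Nat.eq_zero_or_pos k with rfl | hk0
  · have : D = 0 := by omega
    subst this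
    rw [if_pos (by omega)]
    simp
  · have hD1 := hk hk0
    obtain ⟨k, rfl⟩ : ∃ k', k = k' + 1 := ⟨k - 1, by omega⟩
    have e : N + 1 + (k + 1) - 1 = N + k + 1 := by omega
    rw [e, Nat.add_sub_cancel, Nat.add_sub_cancel]
    obtain ⟨a, ha⟩ : ∃ a, N + 1 = d + a := ⟨N + 1 - d, by omega⟩
    obtain ⟨b, hb⟩ : ∃ b, k + 1 = D + b := ⟨k + 1 - D, by omega⟩
    split_ifs with h3 h4 h4
    · have e1 := Nat.mul_le_mul_right (k + 1) hN
      have e2 := Nat.mul_le_mul_left (N + 1) hD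
      nlinarith
    · have : D = 1 := by omega
      subst this
      have e1 := Nat.mul_le_mul_right (k + 1) hN
      nlinarith [Nat.zero_le (N * k)]
    · have : d = 1 := by omega
      subst this
      have e2 := Nat.mul_le_mul_left (N + 1) hD
      nlinarith [Nat.zero_le (N * k)]
    · have : D = 1 := by omega
      subst this
      have : d = 1 := by omega
      subst this
      nlinarith [Nat.zero_le (N * k)]

/-- Degree bound for the constituents of `φ ^ m`; trivial for `d = 1`. -/
theorem dg_tau {d m : ℕ} (hm : 1 ≤ m) (hd : 1 ≤ d) {φ τ : Obj F → ℂ} (hφ : CuspIrr F d φ)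
    (hτ : τ ∈ Irr F (m * d)) (h : ip (m * d) (seq φ m one0) τ ≠ 0) :
    (Nat.card F : ℝ) ^ (if 2 ≤ d then d * (m * d - 1) else 0) ≤ 4 ^ d * dg (m * d) τ ^ 2 := by
  split_ifs with h2
  · have h1 := dg_ge_of_adj hd hφ hτ (adj_of_seq hm hφ.1 hτ h)
    have h3 := prod_bound (two_le_card F) hd (Nat.le_mul_of_pos_left d hm) (Or.inl h2)
    calc (Nat.card F : ℝ) ^ (d * (m * d - 1)) ≤ 4 ^ d * ((∏ i ∈ Finset.range (d - 1),
        (Nat.card F ^ (m * d - (i + 1)) - 1) : ℕ) : ℝ) ^ 2 := by exact_mod_cast h3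
      _ ≤ _ := by gcongr
  · have h1 := dg_ge_one hτ
    have h3 : (1 : ℝ) ≤ 4 ^ d := one_le_pow₀ (by norm_num)
    rw [pow_zero]
    nlinarith

/-- Degree bound for the constituents `χ = τ ρ` of `φ ^ m ρ`, given the bound for `ρ`. -/
theorem dg_isLad {n d m k D : ℕ} {φ ρ χ : Obj F → ℂ} (h : IsLad F n d m k φ ρ χ) {C : ℝ}
    (hC : 1 ≤ C) (hρ : 2 ≤ D → (Nat.card F : ℝ) ^ (D * (k - 1)) ≤ C * dg k ρ ^ 2) (hD : D ≤ k)
    (hk : 1 ≤ k → 1 ≤ D) (h2 : 2 ≤ d + D) :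
    (Nat.card F : ℝ) ^ ((d + D) * (n - 1)) ≤ 4 ^ n * C * dg n χ ^ 2 := by
  obtain ⟨rfl, hm, hd, hφ, hρ', h0, hχ, hne⟩ := h
  have hq : (1 : ℝ) ≤ Nat.card F := by exact_mod_cast Nat.le_of_succ_le (two_le_card F)
  have := CuspIrr.nontriv (F := F) hd
  have hA : finrank F (Fin d → F) = d := by simp
  obtain ⟨τ, hτ, h3, rfl⟩ := constituent (A := Fin d → F) (k := k) (m := m) (φ := φ) (ρ := ρ)
    (χ := χ) (by rw [hA]; exact hφ.1) hφ.cusp hρ' h0 (by rw [hA]; exact hχ) (by rw [hA]; exact hne)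
  rw [hA] at hτ h3
  have h4 := dg_tau hm hd hφ hτ h3
  have h5 : (Nat.card F : ℝ) ^ (if 2 ≤ D then D * (k - 1) else 0) ≤ C * dg k ρ ^ 2 := by
    split_ifs with h
    · exact hρ h
    · have := dg_ge_one hρ'
      rw [pow_zero]
      nlinarith
  have h6 := dg_mul_ge hτ hρ'
  have hdn : d ≤ m * d := Nat.le_mul_of_pos_left d hm
  have h7 : (4 : ℝ) ^ d ≤ 4 ^ (m * d + k) := pow_le_pow_right₀ (by norm_num) (by omega)
  have t1 := dg_ge_one hτ
  have t2 := dg_ge_one hρ'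
  calc (Nat.card F : ℝ) ^ ((d + D) * (m * d + k - 1))
      ≤ (Nat.card F : ℝ) ^ (2 * (m * d * k) + (if 2 ≤ d then d * (m * d - 1) else 0) +
          (if 2 ≤ D then D * (k - 1) else 0)) :=
        pow_le_pow_right₀ hq (exponent_ineq hd hdn hD hk h2)
    _ = (Nat.card F : ℝ) ^ (2 * (m * d * k)) *
          (Nat.card F : ℝ) ^ (if 2 ≤ d then d * (m * d - 1) else 0) *
          (Nat.card F : ℝ) ^ (if 2 ≤ D then D * (k - 1) else 0) := by rw [pow_add, pow_add]
    _ ≤ (Nat.card F : ℝ) ^ (2 * (m * d * k)) * (4 ^ d * dg (m * d) τ ^ 2) *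
          (C * dg k ρ ^ 2) := by gcongr
    _ = 4 ^ d * C * ((Nat.card F : ℝ) ^ (m * d * k) * (dg (m * d) τ * dg k ρ)) ^ 2 := by
        rw [mul_comm 2, pow_mul]
        ring
    _ ≤ _ := by gcongr

/-! ### Stratification and the zeta sum -/

/-- Over every finite field with `q` elements, the irreducible characters of `GL_n` are covered by
strata `S j` with `j ≤ n`, and `1 ≤ j` if `1 ≤ n`; the stratum `S j` has at most `C q ^ j` elements,
and for `j ≥ 2` the square of their degrees is at least `q ^ (j (n - 1)) / C`. The index `j` stands
for the sum of the sizes of the distinct cuspidal characters in the support. -/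
def Good (n C : ℕ) : Prop :=
  ∀ (F : Type) [Field F] [Finite F], ∃ S : ℕ → Finset (Obj F → ℂ),
    (∀ j, S j ⊆ Irr F n) ∧ (∀ χ ∈ Irr F n, ∃ j ≤ n, (1 ≤ n → 1 ≤ j) ∧ χ ∈ S j) ∧
    (∀ j, (S j).card ≤ C * Nat.card F ^ j) ∧
    ∀ j, 2 ≤ j → ∀ χ ∈ S j, (Nat.card F : ℝ) ^ (j * (n - 1)) ≤ C * dg n χ ^ 2

theorem Good.mono {n C C' : ℕ} (h : Good n C) (hC : C ≤ C') : Good n C' := by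
  intro F _ _
  obtain ⟨S, h1, h2, h3, h4⟩ := h F
  refine ⟨S, h1, h2, fun j => (h3 j).trans (Nat.mul_le_mul_right _ hC), fun j hj χ hχ =>
    (h4 j hj χ hχ).trans ?_⟩
  gcongr

theorem good_zero : Good 0 1 := by
  intro F _ _
  refine ⟨fun j => if j = 0 then Irr F 0 else ∅, fun j => ?_, fun χ hχ => ⟨0, le_rfl, by simp, ?_⟩,
    fun j => ?_, fun j hj χ hχ => ?_⟩
  · dsimp only
    split_ifs
    · exact subset_rfl
    · exact Finset.empty_subset _
  · simpa using hχ
  · dsimp only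
    split_ifs with hj
    · subst hj
      have h1 : ((Irr F 0).card : ℝ) ≤ ∑ χ ∈ Irr F 0, dg 0 χ ^ 2 := by
        rw [Finset.card_eq_sum_ones, Nat.cast_sum]
        refine Finset.sum_le_sum fun χ hχ => ?_
        have := dg_ge_one hχ
        rw [Nat.cast_one]
        nlinarith
      rw [sum_dg_sq] at h1
      have h2 : (Irr F 0).card ≤ Nat.card (GLn F 0) := by exact_mod_cast h1
      simpa using h2.trans (card_GLn_le F 0)
    · simp
  · have : j ≠ 0 := by omega
    simp [this] at hχ

/-- The strata for `n` are built from those for smaller `k`: a constituent of `φ ^ m ρ`, with `φ`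
cuspidal for `GL_d` and `ρ` in the stratum `D`, is put in the stratum `d + D`. -/
theorem good_step {n C : ℕ} (hn : 1 ≤ n) (hC : 1 ≤ C) (h : ∀ k < n, Good k C) :
    Good n ((n + 1) * (n + 1) * (4 ^ n * C * n.factorial)) := by
  intro F _ _
  classical
  have h' : ∀ k, ∃ S : ℕ → Finset (Obj F → ℂ), k < n →
      (∀ j, S j ⊆ Irr F k) ∧ (∀ χ ∈ Irr F k, ∃ j ≤ k, (1 ≤ k → 1 ≤ j) ∧ χ ∈ S j) ∧
      (∀ j, (S j).card ≤ C * Nat.card F ^ j) ∧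
      ∀ j, 2 ≤ j → ∀ χ ∈ S j, (Nat.card F : ℝ) ^ (j * (k - 1)) ≤ C * dg k χ ^ 2 := by
    intro k
    by_cases hk : k < n
    · obtain ⟨S, hS⟩ := h k hk F
      exact ⟨S, fun _ => hS⟩
    · exact ⟨fun _ => ∅, fun h => absurd h hk⟩
  choose S hS using h'
  let P : ℕ → ℕ × ℕ → (Obj F → ℂ) → (Obj F → ℂ) → (Obj F → ℂ) → Prop := fun j p φ ρ χ =>
    IsLad F n p.1 p.2 (n - p.2 * p.1) φ ρ χ ∧ j - p.1 ≤ n - p.2 * p.1 ∧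
      (1 ≤ n - p.2 * p.1 → 1 ≤ j - p.1)
  let I : ℕ → Finset (ℕ × ℕ) := fun j =>
    (Finset.range (n + 1) ×ˢ Finset.range (n + 1)).filter fun p =>
      1 ≤ p.1 ∧ p.1 ≤ j ∧ n - p.2 * p.1 < n
  refine ⟨fun j => (Irr F n).filter fun χ => ∃ p ∈ I j, ∃ φ ∈ cuspF F p.1,
    ∃ ρ ∈ S (n - p.2 * p.1) (j - p.1), P j p φ ρ χ, fun j => Finset.filter_subset _ _,
    fun χ hχ => ?_, fun j => ?_, fun j hj χ hχ => ?_⟩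
  · obtain ⟨d, m, k, φ, ρ, hL⟩ := exists_isLad hn hχ
    obtain ⟨h1, hm, hd, hφ, hρ, -⟩ := id hL
    have hdm : 1 ≤ m * d := Nat.mul_pos hm hd
    have hdm1 : d ≤ m * d := Nat.le_mul_of_pos_left d hm
    have hdm2 : m ≤ m * d := Nat.le_mul_of_pos_right m hd
    have hk : k < n := by omega
    have hk' : n - m * d = k := by omega
    obtain ⟨D, hD, hD1, hD2⟩ := (hS k hk).2.1 ρ hρ
    refine ⟨d + D, by omega, fun _ => by omega, ?_⟩
    rw [Finset.mem_filter]
    refine ⟨hχ, (d, m), ?_, φ, mem_cuspF.2 hφ, ρ, ?_, ?_⟩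
    · rw [Finset.mem_filter, Finset.mem_product, Finset.mem_range, Finset.mem_range]
      dsimp only
      omega
    · rw [hk', Nat.add_sub_cancel_left]
      exact hD2
    · dsimp only [P]
      rw [hk', Nat.add_sub_cancel_left]
      exact ⟨hL, hD, hD1⟩
  · have hsub : ((Irr F n).filter fun χ => ∃ p ∈ I j, ∃ φ ∈ cuspF F p.1,
        ∃ ρ ∈ S (n - p.2 * p.1) (j - p.1), P j p φ ρ χ) ⊆
        (I j).biUnion fun p => (cuspF F p.1).biUnion fun φ =>
          (S (n - p.2 * p.1) (j - p.1)).biUnion fun ρ =>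
            (Irr F n).filter fun χ => IsLad F n p.1 p.2 (n - p.2 * p.1) φ ρ χ := by
      intro χ hχ
      obtain ⟨h1, p, hp, φ, hφ, ρ, hρ, hP⟩ := Finset.mem_filter.1 hχ
      refine Finset.mem_biUnion.2 ⟨p, hp, Finset.mem_biUnion.2 ⟨φ, hφ, Finset.mem_biUnion.2
        ⟨ρ, hρ, Finset.mem_filter.2 ⟨h1, hP.1⟩⟩⟩⟩
    refine (Finset.card_le_card hsub).trans ?_
    refine (Finset.card_biUnion_le_card_mul _ _
      (4 ^ n * C * n.factorial * Nat.card F ^ j) fun p hp => ?_).trans ?_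
    · obtain ⟨hp0, hp1, hp2, hp3⟩ := Finset.mem_filter.1 hp
      rw [Finset.mem_product, Finset.mem_range, Finset.mem_range] at hp0
      refine (Finset.card_biUnion_le_card_mul _ _ (C * Nat.card F ^ (j - p.1) * n.factorial)
        fun φ hφ => ?_).trans ?_
      · refine (Finset.card_biUnion_le_card_mul _ _ n.factorial fun ρ hρ => ?_).trans ?_
        · exact card_isLad
        · exact Nat.mul_le_mul_right _ ((hS _ hp3).2.2.1 _)
      · calc (cuspF F p.1).card * (C * Nat.card F ^ (j - p.1) * n.factorial)
            ≤ (4 ^ n * Nat.card F ^ p.1) * (C * Nat.card F ^ (j - p.1) * n.factorial) := by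
              refine Nat.mul_le_mul_right _ ((card_cuspF hp1).trans (Nat.mul_le_mul_right _ ?_))
              exact Nat.pow_le_pow_right (by norm_num) (by omega)
          _ = 4 ^ n * C * n.factorial * (Nat.card F ^ p.1 * Nat.card F ^ (j - p.1)) := by ring
          _ = _ := by rw [← pow_add, Nat.add_sub_cancel' hp2]
    · rw [← mul_assoc]
      refine Nat.mul_le_mul_right _ (Nat.mul_le_mul_right _ ((Finset.card_filter_le _ _).trans ?_))
      rw [Finset.card_product, Finset.card_range]
  · obtain ⟨h1, p, hp, φ, hφ, ρ, hρ, hP, hP1, hP2⟩ := Finset.mem_filter.1 hχ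
    obtain ⟨hp0, hp1, hp2, hp3⟩ := Finset.mem_filter.1 hp
    have e : p.1 + (j - p.1) = j := Nat.add_sub_cancel' hp2
    have h3 := dg_isLad hP (C := C) (by exact_mod_cast hC)
      (fun h => (hS _ hp3).2.2.2 _ h ρ hρ) hP1 hP2 (by omega)
    rw [e] at h3
    refine h3.trans (mul_le_mul_of_nonneg_right ?_ (sq_nonneg _))
    have h4 : 4 ^ n * C ≤ (n + 1) * (n + 1) * (4 ^ n * C * n.factorial) := by
      have := Nat.factorial_pos n
      calc 4 ^ n * C ≤ 4 ^ n * C * n.factorial := Nat.le_mul_of_pos_right _ this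
        _ ≤ _ := Nat.le_mul_of_pos_left _ (by positivity)
    exact_mod_cast h4

theorem exists_good (n : ℕ) : ∃ C, 1 ≤ C ∧ Good n C := by
  suffices H : ∀ n, ∃ C, 1 ≤ C ∧ ∀ k < n, Good k C by
    obtain ⟨C, h1, h2⟩ := H (n + 1)
    exact ⟨C, h1, h2 n (Nat.lt_succ_self n)⟩
  intro n
  induction n with
  | zero => exact ⟨1, le_rfl, fun k hk => absurd hk (Nat.not_lt_zero k)⟩
  | succ n ih =>
    obtain ⟨C, h1, h2⟩ := ih
    obtain ⟨C', h3⟩ : ∃ C', Good n C' := by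
      rcases Nat.eq_zero_or_pos n with rfl | hn
      · exact ⟨1, good_zero⟩
      · exact ⟨_, good_step hn h1 h2⟩
    refine ⟨max C C', h1.trans (le_max_left _ _), fun k hk => ?_⟩
    rcases Nat.lt_succ_iff_lt_or_eq.1 hk with hk | rfl
    · exact (h2 k hk).mono (le_max_left _ _)
    · exact h3.mono (le_max_right _ _)

theorem sum_biUnion_le {ι α : Type*} [DecidableEq α] (s : Finset ι) (t : ι → Finset α)
    (f : α → ℝ) (hf : ∀ i, ∀ a ∈ t i, 0 ≤ f a) :
    ∑ a ∈ s.biUnion t, f a ≤ ∑ i ∈ s, ∑ a ∈ t i, f a := by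
  classical
  induction s using Finset.induction_on with
  | empty => simp
  | insert i s hi ih =>
    rw [Finset.biUnion_insert, Finset.sum_insert hi]
    have h := Finset.sum_union_inter (s₁ := t i) (s₂ := s.biUnion t) (f := f)
    have h' : 0 ≤ ∑ a ∈ t i ∩ s.biUnion t, f a :=
      Finset.sum_nonneg fun a ha => hf i a (Finset.mem_inter.1 ha).1
    linarith

/-- The `j`-th stratum contributes `O(q ^ (-j δ))` with `δ = s (n - 1) / 2 - 1 ≥ 0`. -/
theorem zeta_bound {n C : ℕ} (hn : 2 ≤ n) (hC : 1 ≤ C) (hG : Good n C) {s : ℝ} (hs0 : 0 < s)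
    (hs : 1 ≤ s * ((n : ℝ) - 1) / 2)
    (F : Type) [Field F] [Finite F] :
    (open Classical in ∑ χ ∈ (Irr F n).filter (fun χ => 1 < dg n χ), (dg n χ) ^ (-s)) ≤
      (n * (C * (4 * C : ℝ) ^ (s / 2))) * (Nat.card F : ℝ) ^ (-(s * ((n : ℝ) - 1) / 2 - 1)) := by
  classical
  obtain ⟨S, hS, hcov, hcard, hdeg⟩ := hG F
  have hq2 : (2 : ℝ) ≤ Nat.card F := by exact_mod_cast two_le_card F
  set q : ℝ := (Nat.card F : ℝ) with hq
  have hC' : (1 : ℝ) ≤ C := by exact_mod_cast hC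
  have hn' : ((n - 1 : ℕ) : ℝ) = (n : ℝ) - 1 := by rw [Nat.cast_sub (by omega), Nat.cast_one]
  -- every nonlinear character of the `j`-th stratum has degree at least `q ^ (j (n - 1) / 2) / 2√C`
  have hd : ∀ j, 1 ≤ j → ∀ χ ∈ S j, 1 < dg n χ → q ^ (j * (n - 1)) ≤ 4 * C * dg n χ ^ 2 := by
    intro j hj χ hχ h1
    rcases Nat.lt_or_ge j 2 with hj2 | hj2
    · have hj1 : j = 1 := by omega
      subst hj1
      have h2 := nonlinear_ge (hS _ hχ) h1
      have h3 : 2 ≤ Nat.card F ^ (n - 1) :=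
        (two_le_card F).trans (Nat.le_self_pow (by omega) _)
      rw [Nat.cast_sub (by omega), Nat.cast_one, Nat.cast_pow, ← hq] at h2
      have h4 : (2 : ℝ) ≤ q ^ (n - 1) := by rw [hq]; exact_mod_cast h3
      rw [one_mul]
      have h5 : q ^ (n - 1) ≤ 2 * dg n χ := by linarith
      have h6 : q ^ (n - 1) ≤ 4 * dg n χ ^ 2 := by nlinarith
      nlinarith [sq_nonneg (dg n χ)]
    · have h2 := hdeg j hj2 χ hχ
      nlinarith [mul_nonneg (zero_le_one.trans hC') (sq_nonneg (dg n χ))]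
  have hterm : ∀ j, 1 ≤ j → ∀ χ ∈ S j, 1 < dg n χ →
      dg n χ ^ (-s) ≤ (4 * C : ℝ) ^ (s / 2) * q ^ (-(j * (s * ((n : ℝ) - 1) / 2))) := by
    intro j hj χ hχ h1
    have h2 := hd j hj χ hχ h1
    have hpos : 0 < dg n χ := by linarith
    have e1 : dg n χ ^ (-s) = (dg n χ ^ 2) ^ (-(s / 2)) := by
      rw [← Real.rpow_natCast, ← Real.rpow_mul hpos.le]
      congr 1
      push_cast
      ring
    have e2 : q ^ (-(j * (s * ((n : ℝ) - 1) / 2))) = (q ^ (j * (n - 1))) ^ (-(s / 2)) := by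
      rw [← Real.rpow_natCast, ← Real.rpow_mul (by linarith)]
      congr 1
      rw [Nat.cast_mul, hn']
      ring
    have e3 : (4 * C : ℝ) ^ (s / 2) = ((4 * C : ℝ)⁻¹) ^ (-(s / 2)) := by
      rw [Real.rpow_neg (by positivity), Real.inv_rpow (by positivity), inv_inv]
    rw [e1, e2, e3, ← Real.mul_rpow (by positivity) (by positivity)]
    refine Real.rpow_le_rpow_of_nonpos (by positivity) ?_ (by linarith)
    rw [inv_mul_le_iff₀ (by positivity)]
    exact h2
  have hsub : (Irr F n).filter (fun χ => 1 < dg n χ) ⊆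
      (Finset.Icc 1 n).biUnion fun j => (S j).filter fun χ => 1 < dg n χ := by
    intro χ hχ
    obtain ⟨h1, h2⟩ := Finset.mem_filter.1 hχ
    obtain ⟨j, hj, hj1, hj2⟩ := hcov χ h1
    exact Finset.mem_biUnion.2 ⟨j, Finset.mem_Icc.2 ⟨hj1 (by omega), hj⟩,
      Finset.mem_filter.2 ⟨hj2, h2⟩⟩
  have hnn : ∀ j, ∀ χ ∈ (S j).filter (fun χ => 1 < dg n χ), 0 ≤ dg n χ ^ (-s) := fun j χ hχ =>
    Real.rpow_nonneg (by linarith [(Finset.mem_filter.1 hχ).2]) _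
  have hmain : ∀ j ∈ Finset.Icc 1 n, ∑ χ ∈ (S j).filter (fun χ => 1 < dg n χ), dg n χ ^ (-s) ≤
      (C * (4 * C : ℝ) ^ (s / 2)) * q ^ (-(s * ((n : ℝ) - 1) / 2 - 1)) := by
    intro j hj
    have hj1 := (Finset.mem_Icc.1 hj).1
    have h1 : ∑ χ ∈ (S j).filter (fun χ => 1 < dg n χ), dg n χ ^ (-s) ≤
        ((S j).filter (fun χ => 1 < dg n χ)).card •
          ((4 * C : ℝ) ^ (s / 2) * q ^ (-(j * (s * ((n : ℝ) - 1) / 2)))) :=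
      Finset.sum_le_card_nsmul _ _ _ fun χ hχ =>
        hterm j hj1 χ (Finset.mem_filter.1 hχ).1 (Finset.mem_filter.1 hχ).2
    have h2 : (((S j).filter (fun χ => 1 < dg n χ)).card : ℝ) ≤ C * q ^ j := by
      have := (Finset.card_filter_le (S j) (fun χ => 1 < dg n χ)).trans (hcard j)
      rw [hq]
      exact_mod_cast this
    rw [nsmul_eq_mul] at h1
    refine h1.trans ?_
    have hq0 : 0 < q := by linarith
    calc _ ≤ (C * q ^ j) * ((4 * C : ℝ) ^ (s / 2) * q ^ (-(j * (s * ((n : ℝ) - 1) / 2)))) := by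
          gcongr
      _ = (C * (4 * C : ℝ) ^ (s / 2)) * (q ^ (j : ℝ) * q ^ (-(j * (s * ((n : ℝ) - 1) / 2)))) := by
          rw [Real.rpow_natCast]
          ring
      _ = (C * (4 * C : ℝ) ^ (s / 2)) * q ^ (-(j * (s * ((n : ℝ) - 1) / 2 - 1))) := by
          rw [← Real.rpow_add hq0]
          congr 2
          ring
      _ ≤ _ := by
          have hj2 : (1 : ℝ) ≤ j := by exact_mod_cast hj1
          gcongr
          · linarith
          · nlinarith
  calc _ ≤ ∑ χ ∈ (Finset.Icc 1 n).biUnion fun j => (S j).filter fun χ => 1 < dg n χ,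
        dg n χ ^ (-s) := by
        refine Finset.sum_le_sum_of_subset_of_nonneg hsub fun χ hχ _ => ?_
        obtain ⟨j, -, hj⟩ := Finset.mem_biUnion.1 hχ
        exact hnn j χ hj
    _ ≤ ∑ j ∈ Finset.Icc 1 n, ∑ χ ∈ (S j).filter (fun χ => 1 < dg n χ), dg n χ ^ (-s) := by
        exact sum_biUnion_le _ _ _ hnn
    _ ≤ ∑ j ∈ Finset.Icc 1 n, (C * (4 * C : ℝ) ^ (s / 2)) * q ^ (-(s * ((n : ℝ) - 1) / 2 - 1)) :=
        Finset.sum_le_sum hmain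
    _ = _ := by
        rw [Finset.sum_const, Nat.card_Icc, nsmul_eq_mul, Nat.add_sub_cancel]
        ring

/-- The sum over the irreducible characters of the matrix group `GL (Fin n) F`, rewritten in terms of
`Irr F n`. -/
theorem finsum_eq {n : ℕ} {s : ℝ} (F : Type) [Field F] [Finite F] :
    (∑ᶠ f ∈ {f ∈ irrChars (GL (Fin n) F) | 1 < (f 1).re}, ((f 1).re) ^ (-s)) =
      (open Classical in ∑ χ ∈ (Irr F n).filter (fun χ => 1 < dg n χ), (dg n χ) ^ (-s)) := by
  classical
  let e : GL (Fin n) F ≃* GLn F n := Matrix.GeneralLinearGroup.toLin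
  let T : Finset (GLn F n → ℂ) := (irrF (GLn F n)).filter fun χ => 1 < (χ 1).re
  have h1 : (∑ᶠ f ∈ {f ∈ irrChars (GL (Fin n) F) | 1 < (f 1).re}, ((f 1).re) ^ (-s)) =
      ∑ᶠ f ∈ (T : Set (GLn F n → ℂ)), ((f 1).re) ^ (-s) := by
    refine finsum_mem_eq_of_bijOn (fun f g => f (e.symm g)) ⟨fun f hf => ?_, ?_, fun f hf => ?_⟩
      fun f hf => ?_
    · rw [Finset.mem_coe, Finset.mem_filter, mem_irrF]
      refine ⟨irrChars_transport e.symm hf.1, ?_⟩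
      dsimp only
      rw [map_one]
      exact hf.2
    · intro f _ f' _ h
      funext g
      have := congrFun h (e g)
      simpa using this
    · rw [Finset.mem_coe, Finset.mem_filter, mem_irrF] at hf
      refine ⟨fun g => f (e g), ⟨irrChars_transport e hf.1, ?_⟩, ?_⟩
      · dsimp only
        rw [map_one]
        exact hf.2
      · funext g
        simp
    · dsimp only
      rw [map_one]
  rw [h1, finsum_mem_coe_finset, Finset.sum_filter, Finset.sum_filter, sum_Irr]
  refine Finset.sum_congr rfl fun χ hχ => ?_
  have hc := isClass_of_mem (mem_irrF.1 hχ)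
  have h1 := congrFun (res_cf hc) 1
  have h2 : dg n (cf χ) = (χ 1).re := by rw [← h1]; rfl
  rw [h2]

end Count

end

end ZetaGL

/-- Lemma 3.6: for fixed `n ≥ 2` and `s > 2/(n-1)`, the sum `ζ₀^{GL_n(q)}(s)` of `χ(1)^{-s}`
over the nonlinear irreducible characters of `GL_n(q)` tends to `0` as `q → ∞`. -/
theorem zeta_zero_GL_tendsto_zero (n : ℕ) (hn : 2 ≤ n) (s : ℝ)
    (hs : 2 / ((n : ℝ) - 1) < s) :
    ∀ ε : ℝ, 0 < ε → ∃ B : ℕ,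
      ∀ q : ℕ, IsPrimePow q → B < q →
      ∀ (F : Type) [Field F] [Fintype F], Fintype.card F = q →
        (∑ᶠ f ∈ {f ∈ irrChars (GL (Fin n) F) | 1 < (f 1).re}, ((f 1).re) ^ (-s)) < ε := by
  intro ε hε
  obtain ⟨C, hC, hG⟩ := ZetaGL.exists_good n
  have hn1 : (0 : ℝ) < (n : ℝ) - 1 := by
    have : (2 : ℝ) ≤ n := by exact_mod_cast hn
    linarith
  have hs0 : 0 < s := (by positivity : 0 < 2 / ((n : ℝ) - 1)).trans hs
  have hδ : 0 < s * ((n : ℝ) - 1) / 2 - 1 := by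
    have := (div_lt_iff₀ hn1).1 hs
    linarith
  have hlim : Filter.Tendsto (fun q : ℕ => (n * (C * (4 * C : ℝ) ^ (s / 2))) *
      (q : ℝ) ^ (-(s * ((n : ℝ) - 1) / 2 - 1))) Filter.atTop (nhds 0) := by
    have := ((tendsto_rpow_neg_atTop hδ).comp tendsto_natCast_atTop_atTop).const_mul
      (n * (C * (4 * C : ℝ) ^ (s / 2)))
    rwa [mul_zero] at this
  obtain ⟨B, hB⟩ := Filter.eventually_atTop.1 (hlim.eventually (gt_mem_nhds hε))
  refine ⟨B, fun q _ hq F _ _ hF => ?_⟩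
  rw [ZetaGL.finsum_eq F]
  refine (ZetaGL.zeta_bound hn hC hG hs0 (by linarith) F).trans_lt ?_
  rw [Nat.card_eq_fintype_card, hF]
  exact hB q hq.le
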